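/- arXiv:2001.03033 — 5 statements merged into one kernel-verified Lean document; each statement's English description precedes it below -/
import Mathlib

section
/- Let N ≥ 4 and 3 ≤ m < N be integers, let 0 < a < b with a < |q|·b, and let R₀, M > 0. Let Δ̃₁ and Δ₂ be holomorphic on Ω := {(z,ξ) ∈ ℂ² : |q|·a/2 ≤ |z| ≤ 2b, |ξ| ≥ R₀} with |Δ̃₁(z,ξ)| ≤ M/|ξ|^N and |Δ₂(z,ξ)| ≤ M/|ξ|^N on Ω. For δ > 0 set S_δ := {(z,ξ) : a ≤ |z| ≤ b, |z·exp(2πiτξ)| ≤ δ} and S'_δ := {(z,ξ) : |q|·a ≤ |z| ≤ b, |z·exp(2πiτξ)| ≤ δ}. Then there exists δ₀ > 0 such that for every 0 < δ ≤ δ₀: there is a unique pair (h, g̃) of holomorphic functions on S'_δ with N'(h) + N'(g̃) ≤ 1/2, where N'(u) := sup_{S'_δ}|u| + sup_{(z,ξ)∈S'_δ, Im ξ ≥ 1} |u(z,ξ)|·√(Im ξ), solving for all (z,ξ) ∈ S_δ the system: g̃(q·z, ξ−1) − g̃(z,ξ) = (1 + g̃(z,ξ))·Δ̃₁(z·(1+g̃(z,ξ)),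 ξ + h(z,ξ)) and h(q·z, ξ−1) − h(z,ξ) = Δ₂(z·(1+g̃(z,ξ)), ξ + h(z,ξ)) (all displayed arguments lying in the respective domains). Moreover N'(h) + N'(g̃) → 0 as δ → 0, and for every θ ∈ (0, π/2] there exists D > 0 depending only on θ (for fixed τ, m, a, b, N, M, R₀) such that |h(z,ξ)| ≤ D/|ξ|^{m−2} and |g̃(z,ξ)| ≤ D/|ξ|^{m−2} for all (z,ξ) ∈ S'_δ with θ − ϖ ≤ arg ξ ≤ π − θ − ϖ. -/
open Complex

/-- The domain `S_δ = {(z,ξ) : a ≤ |z| ≤ b, |z·exp(2πiτξ)| ≤ δ}`. -/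
noncomputable def sectDom (τ : ℂ) (a b δ : ℝ) : Set (ℂ × ℂ) :=
  {p : ℂ × ℂ | a ≤ ‖p.1‖ ∧ ‖p.1‖ ≤ b ∧
    ‖p.1 * Complex.exp (2 * (Real.pi : ℂ) * Complex.I * τ * p.2)‖ ≤ δ}

/-- The enlarged domain `S'_δ = {(z,ξ) : |q|·a ≤ |z| ≤ b, |z·exp(2πiτξ)| ≤ δ}`,
`q = exp(2πiτ)`. -/
noncomputable def sectDom' (τ : ℂ) (a b δ : ℝ) : Set (ℂ × ℂ) :=
  {p : ℂ × ℂ |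
    ‖Complex.exp (2 * (Real.pi : ℂ) * Complex.I * τ)‖ * a ≤ ‖p.1‖ ∧
    ‖p.1‖ ≤ b ∧
    ‖p.1 * Complex.exp (2 * (Real.pi : ℂ) * Complex.I * τ * p.2)‖ ≤ δ}

/-- The domain `Ω = {(z,ξ) : |q|·a/2 ≤ |z| ≤ 2b, |ξ| ≥ R₀}`. -/
noncomputable def omegaDom (τ : ℂ) (a b R₀ : ℝ) : Set (ℂ × ℂ) :=
  {p : ℂ × ℂ |
    ‖Complex.exp (2 * (Real.pi : ℂ) * Complex.I * τ)‖ * a / 2 ≤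
      ‖p.1‖ ∧
    ‖p.1‖ ≤ 2 * b ∧ R₀ ≤ ‖p.2‖}

/-- The norm `N'(u) = sup_{S'}|u| + sup_{S' ∩ {Im ξ ≥ 1}} |u|·√(Im ξ)`. -/
noncomputable def nprime (S' : Set (ℂ × ℂ)) (u : ℂ × ℂ → ℂ) : ℝ :=
  sSup ((fun p : ℂ × ℂ => ‖u p‖) '' S') +
  sSup ((fun p : ℂ × ℂ => ‖u p‖ * Real.sqrt p.2.im) ''
    (S' ∩ {p : ℂ × ℂ | 1 ≤ p.2.im}))

/-- The properties of the pair `(h, g̃)` of statement 15: holomorphic on `S'_δ`, with the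
relevant suprema finite and `N'(h) + N'(g̃) ≤ 1/2`, solving the nonlinear conjugacy system
on `S_δ` (with all displayed arguments in the respective domains). -/
noncomputable def pairSolProp (τ : ℂ) (a b R₀ δ : ℝ) (Δ₁ Δ₂ h g : ℂ × ℂ → ℂ) : Prop :=
  ContinuousOn h (sectDom' τ a b δ) ∧
  DifferentiableOn ℂ h (interior (sectDom' τ a b δ)) ∧
  ContinuousOn g (sectDom' τ a b δ) ∧
  DifferentiableOn ℂ g (interior (sectDom' τ a b δ)) ∧
  BddAbove ((fun p : ℂ × ℂ => ‖h p‖) '' sectDom' τ a b δ) ∧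
  BddAbove ((fun p : ℂ × ℂ => ‖h p‖ * Real.sqrt p.2.im) ''
    (sectDom' τ a b δ ∩ {p : ℂ × ℂ | 1 ≤ p.2.im})) ∧
  BddAbove ((fun p : ℂ × ℂ => ‖g p‖) '' sectDom' τ a b δ) ∧
  BddAbove ((fun p : ℂ × ℂ => ‖g p‖ * Real.sqrt p.2.im) ''
    (sectDom' τ a b δ ∩ {p : ℂ × ℂ | 1 ≤ p.2.im})) ∧
  nprime (sectDom' τ a b δ) h + nprime (sectDom' τ a b δ) g ≤ 1 / 2 ∧
  ∀ p ∈ sectDom τ a b δ,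
    (p.1 * (1 + g p), p.2 + h p) ∈ omegaDom τ a b R₀ ∧
    g (Complex.exp (2 * (Real.pi : ℂ) * Complex.I * τ) * p.1, p.2 - 1) - g p =
      (1 + g p) * Δ₁ (p.1 * (1 + g p), p.2 + h p) ∧
    h (Complex.exp (2 * (Real.pi : ℂ) * Complex.I * τ) * p.1, p.2 - 1) - h p =
      Δ₂ (p.1 * (1 + g p), p.2 + h p)

section PartOne
open Set Metric Filter Topology MeasureTheory

/-- Cauchy estimate for the Frechet derivative. -/
theorem s15_fderiv_bound {E F : Type*} [NormedAddCommGroup E] [NormedSpace ℂ E]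
    [NormedAddCommGroup F] [NormedSpace ℂ F] {f : E → F} {c : E} {r B : ℝ} (hr : 0 < r)
    (hd : DifferentiableOn ℂ f (ball c r)) (hB : ∀ x ∈ ball c r, ‖f x‖ ≤ B) :
    ‖fderiv ℂ f c‖ ≤ 2 * B / r := by
  apply Complex.norm_fderiv_le_div_of_mapsTo_ball hd _ hr
  intro x hx
  rw [mem_closedBall, dist_eq_norm]
  have h1 := hB x hx
  have h2 := hB c (mem_ball_self hr)
  calc ‖f x - f c‖ ≤ ‖f x‖ + ‖f c‖ := norm_sub_le _ _
    _ ≤ 2 * B := by linarith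

/-- Lipschitz estimate on a smaller ball. -/
theorem s15_lip {E F : Type*} [NormedAddCommGroup E] [NormedSpace ℂ E]
    [NormedAddCommGroup F] [NormedSpace ℂ F] {f : E → F} {c : E} {r η B : ℝ} (hη : 0 < η)
    (hd : DifferentiableOn ℂ f (ball c (r + η))) (hB : ∀ x ∈ ball c (r + η), ‖f x‖ ≤ B)
    {x y : E} (hx : x ∈ closedBall c r) (hy : y ∈ closedBall c r) :
    ‖f y - f x‖ ≤ 2 * B / η * ‖y - x‖ := by
  let _ : NormedSpace ℝ E := NormedSpace.restrictScalars ℝ ℂ E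
  have key : ∀ w ∈ closedBall c r, ball w η ⊆ ball c (r + η) := by
    intro w hw
    apply ball_subset_ball'
    rw [mem_closedBall] at hw
    linarith
  refine (convex_closedBall c r).norm_image_sub_le_of_norm_fderiv_le (𝕜 := ℂ) (f := f)
    (fun w hw => ?_) (fun w hw => ?_) hx hy
  · exact (hd.mono (key w hw)).differentiableAt (ball_mem_nhds w hη)
  · exact s15_fderiv_bound hη (hd.mono (key w hw)) (fun x hx => hB x (key w hw hx))

/-- Sum of a uniformly summable series of holomorphic functions. -/
theorem s15_tsum {E F : Type*} [NormedAddCommGroup E] [NormedSpace ℂ E]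
    [NormedAddCommGroup F] [NormedSpace ℂ F] [CompleteSpace F] {f : ℕ → E → F} {U : Set E}
    (hU : IsOpen U) {v : ℕ → ℝ} (hv : Summable v)
    (hd : ∀ n, DifferentiableOn ℂ (f n) U) (hb : ∀ n, ∀ x ∈ U, ‖f n x‖ ≤ v n) :
    DifferentiableOn ℂ (fun x => ∑' n, f n x) U := by
  let _ : NormedSpace ℝ E := NormedSpace.restrictScalars ℝ ℂ E
  intro x hx
  obtain ⟨r, hr, hrU⟩ := Metric.isOpen_iff.1 hU x hx
  have key : ∀ w ∈ ball x (r / 2), ball w (r / 2) ⊆ U := by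
    intro w hw
    refine (ball_subset_ball' ?_).trans hrU
    rw [mem_ball] at hw
    linarith
  have := hasFDerivAt_tsum_of_isPreconnected (𝕜 := ℂ) (u := fun n => 2 * v n / (r / 2))
    (f := f) (f' := fun n y => fderiv ℂ (f n) y) (s := ball x (r / 2)) (x₀ := x) (x := x)
    ((hv.mul_left 2).div_const _) isOpen_ball (convex_ball x (r / 2)).isPreconnected
    (fun n w hw => (((hd n).mono (key w hw)).differentiableAt
        (ball_mem_nhds w (by positivity))).hasFDerivAt)
    (fun n w hw => s15_fderiv_bound (by positivity) ((hd n).mono (key w hw))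
      (fun y hy => hb n y (key w hw hy))) (mem_ball_self (by positivity))
    (Summable.of_norm_bounded hv (fun n => hb n x hx)) (mem_ball_self (by positivity))
  exact this.differentiableAt.differentiableWithinAt

/-- Holomorphic dependence of integrals on parameters in `ℂ × ℂ`. -/
theorem s15_param {F : Type*}
    [NormedAddCommGroup F] [NormedSpace ℂ F] [CompleteSpace F]
    {f : ℂ × ℂ → ℝ → F} {c : ℂ × ℂ} {r : ℝ} (hr : 0 < r) {bound : ℝ → ℝ}
    (hbi : Integrable bound)
    (hm : ∀ p ∈ ball c r, AEStronglyMeasurable (f p) volume)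
    (hd : ∀ x, DifferentiableOn ℂ (fun p => f p x) (ball c r))
    (hb : ∀ x, ∀ p ∈ ball c r, ‖f p x‖ ≤ bound x) :
    DifferentiableAt ℂ (fun p => ∫ x, f p x) c := by
  have hdat : ∀ x, DifferentiableAt ℂ (fun p => f p x) c := fun x =>
    (hd x).differentiableAt (ball_mem_nhds c hr)
  have hdir : ∀ v : ℂ × ℂ, AEStronglyMeasurable
      (fun x => fderiv ℂ (fun p => f p x) c v) volume := by
    intro v
    have hsm : Tendsto (fun t : ℂ => c + t • v) (𝓝 0) (𝓝 c) := by
      have : Continuous (fun t : ℂ => c + t • v) := by fun_prop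
      simpa using this.tendsto 0
    obtain ⟨ε, hε, hεb⟩ := Metric.mem_nhds_iff.1 (hsm (ball_mem_nhds c hr))
    obtain ⟨n0, hn0⟩ := exists_nat_one_div_lt hε
    let t : ℕ → ℂ := fun n => ((1 / ((n : ℝ) + 1) : ℝ) : ℂ)
    have ht0 : Tendsto t atTop (𝓝 0) := by
      have := tendsto_one_div_add_atTop_nhds_zero_nat (𝕜 := ℝ)
      have h2 := (Complex.continuous_ofReal.tendsto 0).comp this
      simpa [t, Function.comp_def] using h2
    have htne : ∀ n, t n ≠ 0 := by
      intro n
      simp only [t]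
      exact_mod_cast (by positivity : (1 / ((n : ℝ) + 1)) ≠ 0)
    have hmem : ∀ n, c + t (n + n0) • v ∈ ball c r := by
      intro n
      apply hεb
      rw [mem_ball, dist_zero_right]
      simp only [t]
      rw [Complex.norm_real, Real.norm_of_nonneg (by positivity)]
      refine lt_of_le_of_lt ?_ hn0
      apply one_div_le_one_div_of_le (by positivity)
      push_cast
      linarith [(Nat.cast_nonneg n : (0 : ℝ) ≤ n)]
    refine aestronglyMeasurable_of_tendsto_ae atTop
      (f := fun n x => (t (n + n0))⁻¹ • (f (c + t (n + n0) • v) x - f c x)) ?_ ?_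
    · intro n
      exact ((hm _ (hmem n)).sub (hm c (mem_ball_self hr))).const_smul _
    · refine Eventually.of_forall (fun x => ?_)
      have h1 : HasDerivAt (fun s : ℂ => f (c + s • v) x)
          (fderiv ℂ (fun p => f p x) c v) 0 := by
        have h2 : HasFDerivAt (fun p => f p x) (fderiv ℂ (fun p => f p x) c)
          (c + (0 : ℂ) • v) := by simpa using (hdat x).hasFDerivAt
        have h3 : HasDerivAt (fun s : ℂ => c + s • v) v 0 := by
          simpa using ((hasDerivAt_id (0 : ℂ)).smul_const v).const_add c
        exact h2.comp_hasDerivAt 0 h3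
      have h4 := h1.tendsto_slope_zero
      have h5 : Tendsto (fun n => t (n + n0)) atTop (𝓝[≠] 0) := by
        rw [tendsto_nhdsWithin_iff]
        exact ⟨(tendsto_add_atTop_iff_nat n0).2 ht0, Eventually.of_forall (fun n => htne _)⟩
      have h6 := h4.comp h5
      simpa [Function.comp_def] using h6
  have hmeas : AEStronglyMeasurable (fun x => fderiv ℂ (fun p => f p x) c) volume := by
    have heq : (fun x => fderiv ℂ (fun p => f p x) c) = fun x =>
        (ContinuousLinearMap.smulRightL ℂ (ℂ × ℂ) F (ContinuousLinearMap.fst ℂ ℂ ℂ))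
          (fderiv ℂ (fun p => f p x) c (1, 0)) +
        (ContinuousLinearMap.smulRightL ℂ (ℂ × ℂ) F (ContinuousLinearMap.snd ℂ ℂ ℂ))
          (fderiv ℂ (fun p => f p x) c (0, 1)) := by
      funext x
      ext <;> simp
    rw [heq]
    exact ((ContinuousLinearMap.continuous _).comp_aestronglyMeasurable (hdir _)).add
      ((ContinuousLinearMap.continuous _).comp_aestronglyMeasurable (hdir _))
  have hr2 : (0 : ℝ) < r / 2 := by positivity
  have := hasFDerivAt_integral_of_dominated_loc_of_lip' (𝕜 := ℂ) (μ := volume)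
    (F := f) (x₀ := c) (s := ball c (r / 2)) (bound := fun x => 2 * bound x / (r / 2))
    (F' := fun x => fderiv ℂ (fun p => f p x) c)
    (ball_mem_nhds c hr2)
    (fun p hp => hm p (ball_subset_ball (by linarith) hp))
    (Integrable.mono' hbi (hm c (mem_ball_self hr))
      (Eventually.of_forall fun x => hb x c (mem_ball_self hr)))
    hmeas
    (Eventually.of_forall fun x p hp => by
      refine s15_lip (f := fun p => f p x) (c := c) (r := r / 2) (η := r / 2) hr2 ?_ ?_ ?_ ?_
      · simpa using hd x
      · simpa using hb x
      · exact mem_closedBall_self hr2.le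
      · exact ball_subset_closedBall hp)
    ((hbi.const_mul 2).div_const _)
    (Eventually.of_forall fun x => (hdat x).hasFDerivAt)
  exact this.2.differentiableAt

end PartOne

section PartTwo
open Set Metric Filter Topology MeasureTheory

/-- The `τ`-periodic kernel with residue `1/(2πi)` at the lattice points. -/
noncomputable def s15K (τ s : ℂ) : ℂ :=
  (τ * (Complex.exp (2 * (Real.pi : ℂ) * Complex.I * s / τ) - 1))⁻¹

theorem s15K_periodic {τ : ℂ} (hτ : τ ≠ 0) (s : ℂ) : s15K τ (s - τ) = s15K τ s := by
  unfold s15K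
  have : 2 * (Real.pi : ℂ) * Complex.I * (s - τ) / τ =
      2 * (Real.pi : ℂ) * Complex.I * s / τ - 2 * (Real.pi : ℂ) * Complex.I := by
    field_simp
  rw [this, Complex.exp_periodic.sub_eq]

theorem s15_exp_ne {τ s : ℂ} (hτ : 0 < τ.im) (hs0 : s ≠ 0) (h1 : -τ.im < s.im)
    (h2 : s.im < τ.im) : Complex.exp (2 * (Real.pi : ℂ) * Complex.I * s / τ) - 1 ≠ 0 := by
  intro h
  have hτ0 : τ ≠ 0 := by rintro rfl; simp at hτ
  rw [sub_eq_zero, Complex.exp_eq_one_iff] at h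
  obtain ⟨n, hn⟩ := h
  have hs : s = n * τ := by
    have : 2 * (Real.pi : ℂ) * Complex.I ≠ 0 := Complex.two_pi_I_ne_zero
    rw [div_eq_iff hτ0] at hn
    apply mul_left_cancel₀ this
    linear_combination hn
  have him : s.im = n * τ.im := by rw [hs]; simp
  rw [him] at h1 h2
  have hn1 : (n : ℝ) < 1 := by nlinarith
  have hn2 : (-1 : ℝ) < n := by nlinarith
  have hn1' : n < 1 := by exact_mod_cast hn1
  have hn2' : -1 < n := by exact_mod_cast hn2
  have : n = 0 := by omega
  apply hs0
  rw [hs, this]; simp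

theorem s15K_diffAt {τ s : ℂ} (hτ : 0 < τ.im) (hs0 : s ≠ 0) (h1 : -τ.im < s.im)
    (h2 : s.im < τ.im) : DifferentiableAt ℂ (s15K τ) s := by
  have hτ0 : τ ≠ 0 := by rintro rfl; simp at hτ
  have := s15_exp_ne hτ hs0 h1 h2
  unfold s15K
  refine DifferentiableAt.inv (by fun_prop) (mul_ne_zero hτ0 this)

theorem s15_norm_exp (τ s : ℂ) : ‖Complex.exp (2 * (Real.pi : ℂ) * Complex.I * s / τ)‖ =
    Real.exp (-(2 * Real.pi * (s / τ).im)) := by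
  rw [Complex.norm_exp]
  congr 1
  have : 2 * (Real.pi : ℂ) * Complex.I * s / τ = ((2 * Real.pi : ℝ) : ℂ) * (Complex.I * (s / τ)) := by
    push_cast; ring
  rw [this, Complex.re_ofReal_mul]
  simp

theorem s15K_far {τ s : ℂ} (ht : 1 ≤ |(s / τ).im|) :
    ‖s15K τ s‖ ≤ 2 / ‖τ‖ ∧ ‖s15K τ s‖ * (-(s / τ).im) ≤ 2 / ‖τ‖ := by
  set v := Complex.exp (2 * (Real.pi : ℂ) * Complex.I * s / τ) with hv
  have hvn : ‖v‖ = Real.exp (-(2 * Real.pi * (s / τ).im)) := s15_norm_exp τ s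
  have hK : ‖s15K τ s‖ = 1 / ‖τ‖ * ‖v - 1‖⁻¹ := by
    unfold s15K; rw [norm_inv, norm_mul, mul_inv, one_div]
  have hpi := Real.pi_gt_three
  rcases le_abs.1 ht with h | h
  · have h1 : ‖v‖ ≤ 1 / 2 := by
      rw [hvn]
      have : Real.exp (-(2 * Real.pi * (s / τ).im)) ≤ Real.exp (-1) :=
        Real.exp_le_exp.2 (by nlinarith)
      have h2 : Real.exp (-1) ≤ 1 / 2 := by
        rw [Real.exp_neg]
        have := Real.add_one_le_exp (1 : ℝ)
        rw [inv_le_comm₀ (by positivity) (by norm_num)]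
        linarith
      linarith
    have h2 : 1 / 2 ≤ ‖v - 1‖ := by
      have := norm_sub_norm_le (1 : ℂ) v
      rw [norm_one, norm_sub_rev] at this
      linarith
    have h3 : ‖v - 1‖⁻¹ ≤ 2 := by
      rw [inv_le_comm₀ (by linarith) (by norm_num)]; linarith
    have h4 : ‖s15K τ s‖ ≤ 2 / ‖τ‖ := by
      rw [hK]
      calc 1 / ‖τ‖ * ‖v - 1‖⁻¹ ≤ 1 / ‖τ‖ * 2 := by gcongr
        _ = 2 / ‖τ‖ := by ring
    refine ⟨h4, ?_⟩
    have : ‖s15K τ s‖ * (-(s / τ).im) ≤ 0 :=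
      mul_nonpos_of_nonneg_of_nonpos (norm_nonneg _) (by linarith)
    exact this.trans (by positivity)
  · have h1 : -(s / τ).im ≤ ‖v - 1‖ := by
      have := norm_sub_norm_le v 1
      rw [norm_one, hvn] at this
      have h5 := Real.add_one_le_exp (-(2 * Real.pi * (s / τ).im))
      nlinarith
    have hpos : 0 < ‖v - 1‖ := by linarith
    have h0 : (0 : ℝ) ≤ 1 / ‖τ‖ := by positivity
    constructor
    · rw [hK]
      have : ‖v - 1‖⁻¹ ≤ 2 := by
        rw [inv_le_comm₀ hpos (by norm_num)]; linarith
      calc 1 / ‖τ‖ * ‖v - 1‖⁻¹ ≤ 1 / ‖τ‖ * 2 := by gcongr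
        _ = 2 / ‖τ‖ := by ring
    · rw [hK, mul_assoc]
      have : ‖v - 1‖⁻¹ * (-(s / τ).im) ≤ 2 := by
        rw [inv_mul_le_iff₀ hpos]; linarith
      calc 1 / ‖τ‖ * (‖v - 1‖⁻¹ * (-(s / τ).im)) ≤ 1 / ‖τ‖ * 2 := by gcongr
        _ = 2 / ‖τ‖ := by ring

theorem s15_im_div (τ s : ℂ) : (s / τ).im * ‖τ‖ ^ 2 = s.im * τ.re - s.re * τ.im := by
  by_cases h : τ = 0
  · simp [h]
  · have h2 : (‖τ‖ ^ 2 : ℝ) ≠ 0 := by positivity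
    rw [Complex.div_im, Complex.normSq_eq_norm_sq]
    field_simp

theorem s15K_near {τ : ℂ} (hτ : 0 < τ.im) {ε : ℝ} (hε : 0 < ε) :
    ∃ C : ℝ, 0 < C ∧ ∀ s : ℂ, ε ≤ s.im → s.im ≤ τ.im - ε →
      ‖s15K τ s‖ ≤ C ∧ ‖s15K τ s‖ * (-(s / τ).im) ≤ C := by
  have hτ0 : τ ≠ 0 := by rintro rfl; simp at hτ
  let Q : Set ℂ := {s : ℂ | ε ≤ s.im ∧ s.im ≤ τ.im - ε ∧ |(s / τ).im| ≤ 1}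
  let m : ℝ × ℝ → ℂ := fun w =>
    (((w.1 * τ.re - w.2 * ‖τ‖ ^ 2) / τ.im : ℝ) : ℂ) + (w.1 : ℂ) * Complex.I
  have hmc : Continuous m := by
    simp only [m]; fun_prop
  have hcomp : IsCompact (m '' (Icc ε (τ.im - ε) ×ˢ Icc (-1) 1)) :=
    (isCompact_Icc.prod isCompact_Icc).image hmc
  have hQsub : Q ⊆ m '' (Icc ε (τ.im - ε) ×ˢ Icc (-1) 1) := by
    rintro s ⟨h1, h2, h3⟩
    refine ⟨(s.im, (s / τ).im), ⟨⟨h1, h2⟩, abs_le.1 h3⟩, ?_⟩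
    simp only [m]
    rw [s15_im_div]
    apply Complex.ext
    · simp; field_simp
    · simp
  have hcl : IsClosed Q := by
    have hc3 : Continuous (fun s : ℂ => |(s / τ).im|) :=
      (Complex.continuous_im.comp (continuous_id.div_const τ)).abs
    exact (isClosed_le continuous_const Complex.continuous_im).inter
      ((isClosed_le Complex.continuous_im continuous_const).inter
      (isClosed_le hc3 continuous_const))
  have hQ : IsCompact Q := hcomp.of_isClosed_subset hcl hQsub
  have hcont : ContinuousOn (s15K τ) Q := by
    rintro s ⟨h1, h2, _⟩
    refine (s15K_diffAt hτ ?_ (by linarith) (by linarith)).continuousAt.continuousWithinAt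
    rintro rfl
    simp at h1; linarith
  obtain ⟨C0, hC0⟩ := hQ.exists_bound_of_continuousOn hcont
  refine ⟨max C0 0 + 2 / ‖τ‖ + 1, by positivity, fun s h1 h2 => ?_⟩
  have hp : 0 ≤ 2 / ‖τ‖ := by positivity
  have hm1 := le_max_left C0 0
  have hm2 := le_max_right C0 0
  rcases le_total |(s / τ).im| 1 with h | h
  · have := hC0 s ⟨h1, h2, h⟩
    refine ⟨by linarith, ?_⟩
    have h3 : -(s / τ).im ≤ 1 := by linarith [(abs_le.1 h).1]
    have := mul_le_mul_of_nonneg_left h3 (norm_nonneg (s15K τ s))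
    linarith
  · have := s15K_far h
    exact ⟨by linarith [this.1], by linarith [this.2]⟩

theorem s15_inv_rect {X y1 y2 : ℝ} (hX : 0 < X) (h1 : y1 < 0) (h2 : 0 < y2) :
    (∫ x : ℝ in (-X)..X, ((x : ℂ) + y1 * I)⁻¹) - (∫ x : ℝ in (-X)..X, ((x : ℂ) + y2 * I)⁻¹) +
      I • (∫ y : ℝ in y1..y2, ((X : ℂ) + y * I)⁻¹) -
      I • (∫ y : ℝ in y1..y2, (((-X : ℝ) : ℂ) + y * I)⁻¹) = 2 * Real.pi * I := by
  have hor : ∀ y : ℝ, y ≠ 0 → ∫ x : ℝ in (-X)..X, ((x : ℂ) + y * I)⁻¹ =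
      Complex.log ((X : ℂ) + y * I) - Complex.log (((-X : ℝ) : ℂ) + y * I) := by
    intro y hy
    have hne : ∀ x : ℝ, ((x : ℂ) + y * I) ∈ slitPlane := by
      intro x; right; simpa using hy
    apply intervalIntegral.integral_eq_sub_of_hasDerivAt
    · intro x _
      have h := ((Complex.ofRealCLM.hasDerivAt (x := x)).add_const (y * I)).clog_real (hne x)
      simpa using h
    · apply Continuous.intervalIntegrable
      refine Continuous.inv₀ (by fun_prop) (fun x => slitPlane_ne_zero (hne x))
  have vr : I • (∫ y : ℝ in y1..y2, ((X : ℂ) + y * I)⁻¹) =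
      Complex.log ((X : ℂ) + y2 * I) - Complex.log ((X : ℂ) + y1 * I) := by
    have hne : ∀ y : ℝ, ((X : ℂ) + y * I) ∈ slitPlane := by
      intro x; left; simpa using hX
    rw [← intervalIntegral.integral_smul]
    apply intervalIntegral.integral_eq_sub_of_hasDerivAt
      (f := fun y : ℝ => Complex.log ((X : ℂ) + y * I))
    · intro y _
      have h := (((Complex.ofRealCLM.hasDerivAt (x := y)).mul_const I).const_add (X : ℂ)).clog_real (hne y)
      simpa [div_eq_mul_inv] using h
    · apply Continuous.intervalIntegrable
      have hci : Continuous (fun y : ℝ => ((X : ℂ) + y * I)⁻¹) :=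
        Continuous.inv₀ (by fun_prop) (fun x => slitPlane_ne_zero (hne x))
      exact hci.const_smul I
  have vl : I • (∫ y : ℝ in y1..y2, (((-X : ℝ) : ℂ) + y * I)⁻¹) =
      Complex.log ((X : ℂ) - y2 * I) - Complex.log ((X : ℂ) - y1 * I) := by
    have hne : ∀ y : ℝ, ((X : ℂ) - y * I) ∈ slitPlane := by
      intro x; left; simpa using hX
    rw [← intervalIntegral.integral_smul]
    apply intervalIntegral.integral_eq_sub_of_hasDerivAt
      (f := fun y : ℝ => Complex.log ((X : ℂ) - y * I))
    · intro y _
      have h := (((Complex.ofRealCLM.hasDerivAt (x := y)).mul_const I).const_sub (X : ℂ)).clog_real (hne y)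
      have e : (((-X : ℝ) : ℂ) + y * I) = -((X : ℂ) - y * I) := by push_cast; ring
      rw [e, inv_neg]
      simpa [div_eq_mul_inv] using h
    · have hne2 : ∀ y : ℝ, (((-X : ℝ) : ℂ) + y * I) ≠ 0 := by
        intro y
        have e : (((-X : ℝ) : ℂ) + y * I) = -((X : ℂ) - y * I) := by push_cast; ring
        rw [e]; exact neg_ne_zero.2 (slitPlane_ne_zero (hne y))
      apply Continuous.intervalIntegrable
      have hci : Continuous (fun y : ℝ => (((-X : ℝ) : ℂ) + y * I)⁻¹) :=
        Continuous.inv₀ (by fun_prop) hne2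
      exact hci.const_smul I
  rw [hor y1 h1.ne, hor y2 h2.ne', vr, vl]
  have e1 : Complex.log (((-X : ℝ) : ℂ) + y1 * I) =
      Complex.log ((X : ℂ) - y1 * I) - Real.pi * I := by
    have e : (((-X : ℝ) : ℂ) + y1 * I) = -((X : ℂ) - y1 * I) := by push_cast; ring
    have ha : Complex.arg (-((X : ℂ) - y1 * I)) = Complex.arg ((X : ℂ) - y1 * I) - Real.pi :=
      Complex.arg_neg_eq_arg_sub_pi_of_im_pos (by simpa using h1)
    rw [e, Complex.log, Complex.log, ha, norm_neg]; push_cast; ring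
  have e2 : Complex.log (((-X : ℝ) : ℂ) + y2 * I) =
      Complex.log ((X : ℂ) - y2 * I) + Real.pi * I := by
    have e : (((-X : ℝ) : ℂ) + y2 * I) = -((X : ℂ) - y2 * I) := by push_cast; ring
    have ha : Complex.arg (-((X : ℂ) - y2 * I)) = Complex.arg ((X : ℂ) - y2 * I) + Real.pi :=
      Complex.arg_neg_eq_arg_add_pi_of_im_neg (by simpa using h2)
    rw [e, Complex.log, Complex.log, ha, norm_neg]; push_cast; ring
  rw [e1, e2]; ring

end PartTwo

section PartThree
open Set Metric Filter Topology MeasureTheory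

/-- The boundary integral over the rectangle `[-X,X] × [y1,y2]`. -/
noncomputable def s15Rect {F : Type*} [NormedAddCommGroup F] [NormedSpace ℂ F]
    (H : ℂ → F) (X y1 y2 : ℝ) : F :=
  (∫ x : ℝ in (-X)..X, H ((x : ℂ) + y1 * I)) - (∫ x : ℝ in (-X)..X, H ((x : ℂ) + y2 * I)) +
      I • (∫ y : ℝ in y1..y2, H ((X : ℂ) + y * I)) -
      I • (∫ y : ℝ in y1..y2, H (((-X : ℝ) : ℂ) + y * I))

theorem s15Rect_zero {F : Type*} [NormedAddCommGroup F] [NormedSpace ℂ F] [CompleteSpace F]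
    {H : ℂ → F} {X y1 y2 : ℝ} (h12 : y1 ≤ y2)
    (hH : ∀ s : ℂ, y1 ≤ s.im → s.im ≤ y2 → DifferentiableAt ℂ H s) : s15Rect H X y1 y2 = 0 := by
  have := Complex.integral_boundary_rect_eq_zero_of_differentiableOn H
    (((-X : ℝ) : ℂ) + y1 * I) ((X : ℂ) + y2 * I) (by
      intro s hs
      have h2 := hs.2
      simp [uIcc_of_le h12] at h2
      exact (hH s h2.1 h2.2).differentiableWithinAt)
  simpa [s15Rect] using this

theorem s15Rect_congr {F : Type*} [NormedAddCommGroup F] [NormedSpace ℂ F]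
    {H H' : ℂ → F} {X y1 y2 : ℝ} (hX : 0 < X) (h1 : y1 < 0) (h2 : 0 < y2)
    (h : ∀ s : ℂ, s ≠ 0 → y1 ≤ s.im → s.im ≤ y2 → H s = H' s) :
    s15Rect H X y1 y2 = s15Rect H' X y1 y2 := by
  have h12 : y1 ≤ y2 := by linarith
  unfold s15Rect
  congr 1
  · congr 1
    · congr 1
      · apply intervalIntegral.integral_congr
        intro x _
        refine h _ ?_ (by simp) (by simpa using h12)
        intro h0; have := congrArg Complex.im h0; simp at this; linarith
      · apply intervalIntegral.integral_congr
        intro x _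
        refine h _ ?_ (by simpa using h12) (by simp)
        intro h0; have := congrArg Complex.im h0; simp at this; linarith
    · congr 1
      apply intervalIntegral.integral_congr
      intro y hy
      rw [uIcc_of_le h12] at hy
      refine h _ ?_ (by simpa using hy.1) (by simpa using hy.2)
      intro h0; have := congrArg Complex.re h0; simp at this; linarith
  · congr 1
    apply intervalIntegral.integral_congr
    intro y hy
    rw [uIcc_of_le h12] at hy
    refine h _ ?_ (by simpa using hy.1) (by simpa using hy.2)
    intro h0; have := congrArg Complex.re h0; simp at this; linarith

theorem s15Rect_add {F : Type*} [NormedAddCommGroup F] [NormedSpace ℂ F]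
    {H H' : ℂ → F} {X y1 y2 : ℝ} (hX : 0 < X) (h1 : y1 < 0) (h2 : 0 < y2)
    (hc : ∀ s : ℂ, s ≠ 0 → y1 ≤ s.im → s.im ≤ y2 → ContinuousAt H s)
    (hc' : ∀ s : ℂ, s ≠ 0 → y1 ≤ s.im → s.im ≤ y2 → ContinuousAt H' s) :
    s15Rect (fun s => H s + H' s) X y1 y2 = s15Rect H X y1 y2 + s15Rect H' X y1 y2 := by
  have h12 : y1 ≤ y2 := by linarith
  have ih : ∀ G : ℂ → F, (∀ s : ℂ, s ≠ 0 → y1 ≤ s.im → s.im ≤ y2 → ContinuousAt G s) →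
      ∀ y : ℝ, y ≠ 0 → y1 ≤ y → y ≤ y2 →
      IntervalIntegrable (fun x : ℝ => G ((x : ℂ) + y * I)) volume (-X) X := by
    intro G hG y hy hy1 hy2
    apply Continuous.intervalIntegrable
    rw [continuous_iff_continuousAt]
    intro x
    refine ContinuousAt.comp (g := G) (f := fun x : ℝ => (x : ℂ) + y * I) (hG _ ?_ ?_ ?_)
      (by fun_prop)
    · intro h0; have := congrArg Complex.im h0; simp at this; exact hy this
    · simpa using hy1
    · simpa using hy2
  have iv : ∀ G : ℂ → F, (∀ s : ℂ, s ≠ 0 → y1 ≤ s.im → s.im ≤ y2 → ContinuousAt G s) →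
      ∀ x : ℝ, x ≠ 0 →
      IntervalIntegrable (fun y : ℝ => G ((x : ℂ) + y * I)) volume y1 y2 := by
    intro G hG x hx
    apply ContinuousOn.intervalIntegrable
    rw [uIcc_of_le h12]
    intro y hy
    refine ContinuousAt.continuousWithinAt ?_
    refine ContinuousAt.comp (g := G) (f := fun y : ℝ => (x : ℂ) + y * I) (hG _ ?_ ?_ ?_)
      (by fun_prop)
    · intro h0; have := congrArg Complex.re h0; simp at this; exact hx this
    · simpa using hy.1
    · simpa using hy.2
  unfold s15Rect
  rw [intervalIntegral.integral_add (ih H hc y1 h1.ne le_rfl h12) (ih H' hc' y1 h1.ne le_rfl h12),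
    intervalIntegral.integral_add (ih H hc y2 h2.ne' h12 le_rfl) (ih H' hc' y2 h2.ne' h12 le_rfl),
    intervalIntegral.integral_add (iv H hc X hX.ne') (iv H' hc' X hX.ne'),
    intervalIntegral.integral_add (iv H hc (-X) (by linarith)) (iv H' hc' (-X) (by linarith)),
    smul_add, smul_add]
  abel

theorem s15Rect_inv {F : Type*} [NormedAddCommGroup F] [NormedSpace ℂ F] [CompleteSpace F]
    {X y1 y2 : ℝ} (hX : 0 < X) (h1 : y1 < 0) (h2 : 0 < y2) (v : F) :
    s15Rect (fun s => s⁻¹ • v) X y1 y2 = (2 * Real.pi * I : ℂ) • v := by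
  have := s15_inv_rect hX h1 h2
  unfold s15Rect
  simp only [intervalIntegral.integral_smul_const]
  rw [← this]
  simp only [sub_smul, add_smul, smul_assoc]

theorem s15Rect_pole {F : Type*} [NormedAddCommGroup F] [NormedSpace ℂ F] [CompleteSpace F]
    {τ : ℂ} (hτ : 0 < τ.im) {f : ℂ → F} {X y1 y2 : ℝ} (hX : 0 < X) (h1 : y1 < 0) (h2 : 0 < y2)
    (h1' : -τ.im < y1) (h2' : y2 < τ.im) {U : Set ℂ} (hU : IsOpen U)
    (hUs : ∀ s : ℂ, y1 ≤ s.im → s.im ≤ y2 → s ∈ U)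
    (hf : DifferentiableOn ℂ f U) :
    s15Rect (fun s => s15K τ s • f s) X y1 y2 = f 0 := by
  have hτ0 : τ ≠ 0 := by rintro rfl; simp at hτ
  let e : ℂ → ℂ := fun s => Complex.exp (2 * (Real.pi : ℂ) * Complex.I * s / τ)
  have he : Differentiable ℂ e := by simp only [e]; fun_prop
  let P : ℂ → ℂ := dslope e 0
  have hP : Differentiable ℂ P := by
    rw [← differentiableOn_univ]
    exact (Complex.differentiableOn_dslope univ_mem).2 he.differentiableOn
  have hP0 : P 0 = 2 * Real.pi * I / τ := by
    simp only [P, dslope_same]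
    have h3 : HasDerivAt e (Complex.exp (2 * (Real.pi : ℂ) * Complex.I * 0 / τ) *
        (2 * Real.pi * I / τ)) 0 := by
      have : HasDerivAt (fun s : ℂ => 2 * (Real.pi : ℂ) * Complex.I * s / τ)
          (2 * Real.pi * I / τ) 0 := by
        simpa using ((hasDerivAt_id (0 : ℂ)).const_mul (2 * (Real.pi : ℂ) * Complex.I)).div_const τ
      exact this.cexp
    rw [h3.deriv]; simp
  have hPs : ∀ s : ℂ, s ≠ 0 → P s = s⁻¹ * (e s - 1) := by
    intro s hs
    simp only [P]
    rw [dslope_of_ne _ hs, slope_def_module]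
    simp [e]
  let W : Set ℂ := U ∩ {s : ℂ | -τ.im < s.im ∧ s.im < τ.im}
  have hW : IsOpen W := hU.inter ((isOpen_lt continuous_const Complex.continuous_im).inter
    (isOpen_lt Complex.continuous_im continuous_const))
  have hWs : ∀ s : ℂ, y1 ≤ s.im → s.im ≤ y2 → s ∈ W := fun s a b =>
    ⟨hUs s a b, by constructor <;> linarith⟩
  have hPne : ∀ s ∈ W, P s ≠ 0 := by
    intro s hs
    by_cases h0 : s = 0
    · rw [h0, hP0]; exact div_ne_zero Complex.two_pi_I_ne_zero hτ0
    · rw [hPs s h0]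
      exact mul_ne_zero (inv_ne_zero h0) (s15_exp_ne hτ h0 hs.2.1 hs.2.2)
  let n : ℂ → F := fun s => (τ * P s)⁻¹ • f s
  have hn : DifferentiableOn ℂ n W := by
    refine DifferentiableOn.smul ?_ (hf.mono inter_subset_left)
    exact DifferentiableOn.inv ((hP.const_mul τ).differentiableOn)
      (fun s hs => mul_ne_zero hτ0 (hPne s hs))
  have h0W : W ∈ 𝓝 (0 : ℂ) := hW.mem_nhds (hWs 0 (by simpa using h1.le) (by simpa using h2.le))
  have hnd : DifferentiableOn ℂ (dslope n 0) W := (Complex.differentiableOn_dslope h0W).2 hn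
  have hda : ∀ s : ℂ, y1 ≤ s.im → s.im ≤ y2 → DifferentiableAt ℂ (dslope n 0) s :=
    fun s a b => hnd.differentiableAt (hW.mem_nhds (hWs s a b))
  have hn0 : n 0 = (2 * Real.pi * I : ℂ)⁻¹ • f 0 := by
    simp only [n, hP0]
    congr 2
    field_simp
  have hcong : s15Rect (fun s => s15K τ s • f s) X y1 y2 =
      s15Rect (fun s => dslope n 0 s + s⁻¹ • n 0) X y1 y2 := by
    apply s15Rect_congr hX h1 h2
    intro s hs _ _
    rw [dslope_of_ne _ hs, slope_def_module, sub_zero, smul_sub, sub_add_cancel]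
    simp only [n, smul_smul]
    congr 1
    rw [hPs s hs]
    unfold s15K
    simp only [e, mul_inv, inv_inv]
    field_simp
  rw [hcong, s15Rect_add (H := dslope n 0) (H' := fun s => s⁻¹ • n 0) hX h1 h2 (fun s _ a b => (hda s a b).continuousAt)
    (fun s hs _ _ => ((continuousAt_inv₀ hs).smul (continuousAt_const (y := n 0)))),
    s15Rect_zero (by linarith) hda, s15Rect_inv hX h1 h2, hn0, smul_smul,
    mul_inv_cancel₀ Complex.two_pi_I_ne_zero]
  simp

/-- Passage to the limit in rectangles. -/
theorem s15Rect_lim {F : Type*} [NormedAddCommGroup F] [NormedSpace ℂ F]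
    {H : ℂ → F} {y1 y2 : ℝ} {R : F} (h12 : y1 ≤ y2) (hR : ∀ X : ℝ, 0 < X → s15Rect H X y1 y2 = R)
    (hdec : ∀ ε : ℝ, 0 < ε → ∀ᶠ X : ℝ in atTop, ∀ y : ℝ, y1 ≤ y → y ≤ y2 →
      ‖H ((X : ℂ) + y * I)‖ ≤ ε ∧ ‖H (((-X : ℝ) : ℂ) + y * I)‖ ≤ ε) :
    Tendsto (fun X : ℝ => (∫ x : ℝ in (-X)..X, H ((x : ℂ) + y1 * I)) -
      (∫ x : ℝ in (-X)..X, H ((x : ℂ) + y2 * I))) atTop (𝓝 R) := by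
  rw [Metric.tendsto_atTop']
  intro ε hε
  have hpos : 0 < ε / (4 * (y2 - y1 + 1)) := by
    apply div_pos hε; linarith
  obtain ⟨N, hN⟩ := eventually_atTop.1 (hdec _ hpos)
  refine ⟨max N 0, fun X hX => ?_⟩
  have hXN : N ≤ X := (le_max_left _ _).trans hX.le
  have hX0 : 0 < X := lt_of_le_of_lt (le_max_right _ _) hX
  have b1 : ‖∫ y : ℝ in y1..y2, H ((X : ℂ) + y * I)‖ ≤
      ε / (4 * (y2 - y1 + 1)) * |y2 - y1| := by
    apply intervalIntegral.norm_integral_le_of_norm_le_const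
    intro y hy
    rw [uIoc_of_le h12] at hy
    exact (hN X hXN y hy.1.le hy.2).1
  have b2 : ‖∫ y : ℝ in y1..y2, H (((-X : ℝ) : ℂ) + y * I)‖ ≤
      ε / (4 * (y2 - y1 + 1)) * |y2 - y1| := by
    apply intervalIntegral.norm_integral_le_of_norm_le_const
    intro y hy
    rw [uIoc_of_le h12] at hy
    exact (hN X hXN y hy.1.le hy.2).2
  have b3 : ε / (4 * (y2 - y1 + 1)) * |y2 - y1| ≤ ε / 4 := by
    rw [abs_of_nonneg (by linarith), div_mul_eq_mul_div, div_le_div_iff₀ (by linarith) (by norm_num)]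
    nlinarith
  have hRX := hR X hX0
  unfold s15Rect at hRX
  rw [dist_eq_norm, ← hRX]
  set A := (∫ x : ℝ in (-X)..X, H ((x : ℂ) + y1 * I)) - (∫ x : ℝ in (-X)..X, H ((x : ℂ) + y2 * I))
  set B := ∫ y : ℝ in y1..y2, H ((X : ℂ) + y * I)
  set D := ∫ y : ℝ in y1..y2, H (((-X : ℝ) : ℂ) + y * I)
  have : A - (A + I • B - I • D) = I • D - I • B := by abel
  rw [this]
  calc ‖I • D - I • B‖ ≤ ‖I • D‖ + ‖I • B‖ := norm_sub_le _ _
    _ = ‖D‖ + ‖B‖ := by simp [norm_smul]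
    _ < ε := by linarith

end PartThree

section PartFour
open Set Metric Filter Topology MeasureTheory

/-- The logarithmic level of `z`. -/
noncomputable def s15l (p : ℂ × ℂ) : ℝ := Real.log ‖p.1‖ / (2 * Real.pi)

/-- The invariant `-log |z exp(2πiτξ)| / (2π)`. -/
noncomputable def s15w (τ : ℂ) (p : ℂ × ℂ) : ℝ := (τ * p.2).im - s15l p

/-- The flow preserving `z exp(2πiτξ)`. -/
noncomputable def s15psi (τ s : ℂ) (p : ℂ × ℂ) : ℂ × ℂ :=
  (p.1 * Complex.exp (-(2 * (Real.pi : ℂ) * I * s)), p.2 + s / τ)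

/-- Open domains in terms of levels. -/
def s15D (τ : ℂ) (A B w : ℝ) : Set (ℂ × ℂ) :=
  {p : ℂ × ℂ | p.1 ≠ 0 ∧ A < s15l p ∧ s15l p < B ∧ w < s15w τ p}

theorem s15l_psi (τ s : ℂ) {p : ℂ × ℂ} (hp : p.1 ≠ 0) : s15l (s15psi τ s p) = s15l p + s.im := by
  unfold s15l s15psi
  have hpi := Real.pi_pos
  have : ‖Complex.exp (-(2 * (Real.pi : ℂ) * I * s))‖ = Real.exp (2 * Real.pi * s.im) := by
    rw [Complex.norm_exp]
    congr 1
    have : -(2 * (Real.pi : ℂ) * I * s) = ((2 * Real.pi : ℝ) : ℂ) * (-(I * s)) := by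
      push_cast; ring
    rw [this, Complex.re_ofReal_mul]; simp
  simp only [norm_mul]
  rw [this, Real.log_mul (norm_ne_zero_iff.2 hp) (Real.exp_ne_zero _), Real.log_exp]
  field_simp

theorem s15w_psi {τ : ℂ} (hτ : τ ≠ 0) (s : ℂ) {p : ℂ × ℂ} (hp : p.1 ≠ 0) :
    s15w τ (s15psi τ s p) = s15w τ p := by
  unfold s15w
  rw [s15l_psi τ s hp]
  have : τ * (s15psi τ s p).2 = τ * p.2 + s := by
    simp only [s15psi]; field_simp
  rw [this, Complex.add_im]; ring

theorem s15psi_ne (τ s : ℂ) {p : ℂ × ℂ} (hp : p.1 ≠ 0) : (s15psi τ s p).1 ≠ 0 :=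
  mul_ne_zero hp (Complex.exp_ne_zero _)

theorem s15psi_psi (τ s t : ℂ) (p : ℂ × ℂ) :
    s15psi τ s (s15psi τ t p) = s15psi τ (s + t) p := by
  unfold s15psi
  ext1
  · simp only
    rw [mul_assoc, ← Complex.exp_add]; ring_nf
  · simp only; ring

theorem s15psi_zero (τ : ℂ) (p : ℂ × ℂ) : s15psi τ 0 p = p := by
  unfold s15psi; simp

theorem s15psi_tau {τ : ℂ} (hτ : τ ≠ 0) (p : ℂ × ℂ) : s15psi τ (-τ) p =
    (Complex.exp (2 * (Real.pi : ℂ) * Complex.I * τ) * p.1, p.2 - 1) := by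
  unfold s15psi
  ext1
  · simp only; rw [mul_comm]; ring_nf
  · simp only; field_simp; ring

theorem s15psi_mem {τ : ℂ} (hτ : τ ≠ 0) {s : ℂ} {p : ℂ × ℂ} {A B w A' B' : ℝ}
    (hp : p ∈ s15D τ A B w) (h1 : A' < s15l p + s.im) (h2 : s15l p + s.im < B') :
    s15psi τ s p ∈ s15D τ A' B' w := by
  refine ⟨s15psi_ne τ s hp.1, ?_, ?_, ?_⟩
  · rwa [s15l_psi τ s hp.1]
  · rwa [s15l_psi τ s hp.1]
  · rw [s15w_psi hτ s hp.1]; exact hp.2.2.2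

theorem s15l_cont {p : ℂ × ℂ} (hp : p.1 ≠ 0) : ContinuousAt s15l p := by
  unfold s15l
  exact ((continuous_fst.norm.continuousAt).log (norm_ne_zero_iff.2 hp)).div_const _

theorem s15w_cont (τ : ℂ) {p : ℂ × ℂ} (hp : p.1 ≠ 0) : ContinuousAt (s15w τ) p := by
  unfold s15w
  refine ContinuousAt.sub ?_ (s15l_cont hp)
  exact (Complex.continuous_im.comp (continuous_const.mul continuous_snd)).continuousAt

theorem s15D_open (τ : ℂ) (A B w : ℝ) : IsOpen (s15D τ A B w) := by
  rw [isOpen_iff_mem_nhds]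
  intro p hp
  have h1 : ∀ᶠ x in 𝓝 p, x.1 ≠ 0 := continuous_fst.continuousAt.eventually_ne hp.1
  have h2 := (s15l_cont hp.1).eventually (lt_mem_nhds hp.2.1)
  have h3 := (s15l_cont hp.1).eventually (gt_mem_nhds hp.2.2.1)
  have h4 := (s15w_cont τ hp.1).eventually (lt_mem_nhds hp.2.2.2)
  filter_upwards [h1, h2, h3, h4] with x a b c d
  exact ⟨a, b, c, d⟩

theorem s15psi_diff_s (τ : ℂ) (p : ℂ × ℂ) : Differentiable ℂ (fun s => s15psi τ s p) := by
  unfold s15psi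
  fun_prop

theorem s15psi_diff_p (τ s : ℂ) : Differentiable ℂ (fun p => s15psi τ s p) := by
  unfold s15psi
  fun_prop

theorem s15_low {τ : ℂ} (hτ : τ ≠ 0) {A B w L : ℝ} (hA : -L ≤ A) (hB : B ≤ L)
    (hw : 2 * L + 2 + 2 * ‖τ‖ ≤ w) {p : ℂ × ℂ} (hp : p ∈ s15D τ A B w) :
    s15w τ p / 2 ≤ (τ * p.2).im ∧ (τ * p.2).im ≤ 2 * s15w τ p ∧ 1 ≤ (τ * p.2).im ∧
      1 ≤ ‖p.2‖ ∧ 1 ≤ s15w τ p := by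
  obtain ⟨h0, h1, h2, h3⟩ := hp
  have e : (τ * p.2).im = s15w τ p + s15l p := by unfold s15w; ring
  have hn : 0 < ‖τ‖ := norm_pos_iff.2 hτ
  have h4 : 1 + ‖τ‖ ≤ (τ * p.2).im := by rw [e]; linarith
  refine ⟨by rw [e]; linarith, by rw [e]; linarith, by linarith, ?_, by linarith⟩
  have h5 : (τ * p.2).im ≤ ‖τ‖ * ‖p.2‖ := by
    rw [← norm_mul]; exact (le_abs_self _).trans (Complex.abs_im_le_norm _)
  by_contra h
  push Not at h
  nlinarith

theorem s15_pow_low {η : ℂ} {w : ℝ} (hw : 0 < w) (h1 : 1 ≤ η.im) (h2 : w / 2 ≤ η.im) {k : ℕ}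
    (hk : 2 ≤ k) : (w ^ (k - 2) / 2 ^ k) * (1 + η.re ^ 2) ≤ ‖η‖ ^ k := by
  obtain ⟨j, rfl⟩ := Nat.exists_eq_add_of_le hk
  have e : 2 + j - 2 = j := by omega
  rw [e]
  have h3 : 1 + η.re ^ 2 ≤ ‖η‖ ^ 2 := by
    rw [← Complex.normSq_eq_norm_sq, Complex.normSq_apply]; nlinarith
  have h4 : w / 2 ≤ ‖η‖ := h2.trans ((le_abs_self _).trans (Complex.abs_im_le_norm _))
  calc (w ^ j / 2 ^ (2 + j)) * (1 + η.re ^ 2) ≤ (w / 2) ^ j * (1 + η.re ^ 2) := by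
        gcongr
        rw [div_pow]
        gcongr
        · norm_num
        · omega
    _ ≤ ‖η‖ ^ j * ‖η‖ ^ 2 := by gcongr
    _ = ‖η‖ ^ (2 + j) := by ring

/-- Lower bound for `ξ` along the flow lines. -/
theorem s15_xi_bound {τ : ℂ} (hτ : τ ≠ 0) {A B w L : ℝ} (hA : -L ≤ A) (hB : B ≤ L)
    (hw : 2 * L + 2 + 2 * ‖τ‖ ≤ w) {p : ℂ × ℂ} {s : ℂ} (h0 : p.1 ≠ 0)
    (hp : s15psi τ s p ∈ s15D τ A B w) {k : ℕ} (hk : 2 ≤ k) :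
    1 / ‖(s15psi τ s p).2‖ ^ k ≤ (2 * ‖τ‖) ^ k / s15w τ p ^ (k - 2) *
      (1 + ((τ * p.2).re + s.re) ^ 2)⁻¹ := by
  obtain ⟨h1, _, h3, h4, h5⟩ := s15_low hτ hA hB hw hp
  rw [s15w_psi hτ s h0] at h1 h5
  have e : τ * (s15psi τ s p).2 = τ * p.2 + s := by
    simp only [s15psi]; field_simp
  have h6 := s15_pow_low (by linarith) h3 h1 hk
  rw [norm_mul, mul_pow] at h6
  rw [e, Complex.add_re] at h6
  have hn : 0 < ‖τ‖ := norm_pos_iff.2 hτ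
  have hq : 0 < 1 + ((τ * p.2).re + s.re) ^ 2 := by positivity
  have hwp : 0 < s15w τ p ^ (k - 2) := by positivity
  have hx : 0 < ‖(s15psi τ s p).2‖ ^ k := by positivity
  rw [div_mul_eq_mul_div, ← div_eq_mul_inv, div_div, div_le_div_iff₀ hx (by positivity), mul_pow]
  rw [div_mul_eq_mul_div, div_le_iff₀ (by positivity)] at h6
  linarith

theorem s15_int_bump (c : ℝ) : Integrable (fun x : ℝ => (1 + (c + x) ^ 2)⁻¹) :=
  integrable_inv_one_add_sq.comp_add_left c

theorem s15_int_bump_val (c : ℝ) : ∫ x : ℝ, (1 + (c + x) ^ 2)⁻¹ = Real.pi := by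
  rw [integral_add_left_eq_self (fun x : ℝ => (1 + x ^ 2)⁻¹) c]
  exact integral_univ_inv_one_add_sq

end PartFour

section PartFive
open Set Metric Filter Topology MeasureTheory

variable {F : Type*} [NormedAddCommGroup F] [NormedSpace ℂ F]

/-- The integral operator along the line at height `y`. -/
noncomputable def s15I (τ : ℂ) (E : ℂ × ℂ → F) (y : ℝ) (p : ℂ × ℂ) : F :=
  ∫ x : ℝ, s15K τ ((x : ℂ) + y * I) • E (s15psi τ ((x : ℂ) + y * I) p)

theorem s15_ptw {τ : ℂ} (hτ : τ ≠ 0) {A B w L : ℝ} (hA : -L ≤ A) (hB : B ≤ L)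
    (hw : 2 * L + 2 + 2 * ‖τ‖ ≤ w) {C Λ : ℝ} (hC0 : 0 < C) (hΛ : 0 ≤ Λ)
    {N : ℕ} (hN : 4 ≤ N) {E : ℂ × ℂ → F}
    (hE : ∀ p ∈ s15D τ A B w, ‖E p‖ ≤ Λ / ‖p.2‖ ^ N) {p : ℂ × ℂ} {s : ℂ}
    (hp0 : p.1 ≠ 0) (hp : s15psi τ s p ∈ s15D τ A B w)
    (hC : ‖s15K τ s‖ ≤ C ∧ ‖s15K τ s‖ * (-(s / τ).im) ≤ C) :
    ‖s15K τ s • E (s15psi τ s p)‖ ≤ C * Λ * (2 * ‖τ‖) ^ N / s15w τ p ^ (N - 2) *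
        (1 + ((τ * p.2).re + s.re) ^ 2)⁻¹ ∧
    ‖s15K τ s • E (s15psi τ s p)‖ * p.2.im ≤
      2 * C * Λ * (2 * ‖τ‖) ^ (N - 1) / s15w τ p ^ (N - 3) *
        (1 + ((τ * p.2).re + s.re) ^ 2)⁻¹ := by
  have h1 := hE _ hp
  obtain ⟨_, _, _, h4, h5⟩ := s15_low hτ hA hB hw hp
  have hb := s15_xi_bound hτ hA hB hw hp0 hp (k := N) (by omega)
  have hb' := s15_xi_bound hτ hA hB hw hp0 hp (k := N - 1) (by omega)
  have e3 : N - 1 - 2 = N - 3 := by omega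
  rw [e3] at hb'
  set ξ' := (s15psi τ s p).2 with hξ'
  have hx : 0 < ‖ξ'‖ := by linarith
  have hK0 := norm_nonneg (s15K τ s)
  rw [norm_smul]
  constructor
  · calc ‖s15K τ s‖ * ‖E (s15psi τ s p)‖ ≤ C * (Λ / ‖ξ'‖ ^ N) := by
          gcongr; exact hC.1
      _ = C * Λ * (1 / ‖ξ'‖ ^ N) := by ring
      _ ≤ C * Λ * ((2 * ‖τ‖) ^ N / s15w τ p ^ (N - 2) *
        (1 + ((τ * p.2).re + s.re) ^ 2)⁻¹) := by gcongr
      _ = _ := by ring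
  · have e1 : p.2.im = ξ'.im + (-(s / τ).im) := by
      rw [hξ']; simp [s15psi]
    have h6 : ‖s15K τ s‖ * p.2.im ≤ 2 * C * ‖ξ'‖ := by
      have h7 : ξ'.im ≤ ‖ξ'‖ := (le_abs_self _).trans (Complex.abs_im_le_norm _)
      have h8 : ‖s15K τ s‖ * ξ'.im ≤ C * ‖ξ'‖ := by
        calc _ ≤ ‖s15K τ s‖ * ‖ξ'‖ := by gcongr
          _ ≤ _ := by gcongr; exact hC.1
      rw [e1, mul_add]
      nlinarith [hC.2]
    have eN : ‖ξ'‖ ^ N = ‖ξ'‖ ^ (N - 1) * ‖ξ'‖ := by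
      rw [← pow_succ]; congr 1; omega
    calc ‖s15K τ s‖ * ‖E (s15psi τ s p)‖ * p.2.im
        = (‖s15K τ s‖ * p.2.im) * ‖E (s15psi τ s p)‖ := by ring
      _ ≤ (2 * C * ‖ξ'‖) * ‖E (s15psi τ s p)‖ := by gcongr
      _ ≤ (2 * C * ‖ξ'‖) * (Λ / ‖ξ'‖ ^ N) := by gcongr
      _ = 2 * C * Λ * (1 / ‖ξ'‖ ^ (N - 1)) := by rw [eN]; field_simp
      _ ≤ 2 * C * Λ * ((2 * ‖τ‖) ^ (N - 1) / s15w τ p ^ (N - 3) *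
        (1 + ((τ * p.2).re + s.re) ^ 2)⁻¹) := by gcongr
      _ = _ := by ring

/-- The constant in the integral estimate. -/
noncomputable def s15C1 (τ : ℂ) (C : ℝ) (N : ℕ) : ℝ :=
  C * (2 * ‖τ‖) ^ N * Real.pi + 2 * C * (2 * ‖τ‖) ^ (N - 1) * Real.pi

theorem s15I_est {τ : ℂ} (hτ : τ ≠ 0) {A B w L : ℝ} (hA : -L ≤ A) (hB : B ≤ L)
    (hw : 2 * L + 2 + 2 * ‖τ‖ ≤ w) {C Λ ε : ℝ} (hC0 : 0 < C) (hΛ : 0 ≤ Λ)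
    (hC : ∀ s : ℂ, ε ≤ s.im → s.im ≤ τ.im - ε →
      ‖s15K τ s‖ ≤ C ∧ ‖s15K τ s‖ * (-(s / τ).im) ≤ C)
    {N : ℕ} (hN : 4 ≤ N) {E : ℂ × ℂ → F}
    (hE : ∀ p ∈ s15D τ A B w, ‖E p‖ ≤ Λ / ‖p.2‖ ^ N) {p : ℂ × ℂ} {y A' B' : ℝ}
    (hp : p ∈ s15D τ A' B' w) (hy1 : ε ≤ y) (hy2 : y ≤ τ.im - ε)
    (h1 : A < s15l p + y) (h2 : s15l p + y < B) (hwp : 0 < s15w τ p) :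
    ‖s15I τ E y p‖ ≤ s15C1 τ C N * Λ / s15w τ p ^ (N - 2) ∧
    ‖s15I τ E y p‖ * p.2.im ≤ s15C1 τ C N * Λ / s15w τ p ^ (N - 3) := by
  have key := fun x : ℝ => s15_ptw hτ hA hB hw hC0 hΛ hN hE (p := p) (s := (x : ℂ) + y * I) hp.1
    (s15psi_mem hτ hp (by simpa using h1) (by simpa using h2)) (hC _ (by simpa) (by simpa))
  have hre : ∀ x : ℝ, ((x : ℂ) + y * I).re = x := fun x => by simp
  simp only [hre] at key
  set c := (τ * p.2).re
  have hn : 0 < ‖τ‖ := norm_pos_iff.2 hτ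
  have hpi := Real.pi_pos
  constructor
  · have h3 : ‖s15I τ E y p‖ ≤ ∫ x : ℝ, C * Λ * (2 * ‖τ‖) ^ N / s15w τ p ^ (N - 2) *
        (1 + (c + x) ^ 2)⁻¹ :=
      norm_integral_le_of_norm_le ((s15_int_bump c).const_mul _) (ae_of_all _ fun x => (key x).1)
    rw [integral_const_mul, s15_int_bump_val] at h3
    refine h3.trans ?_
    have : C * Λ * (2 * ‖τ‖) ^ N / s15w τ p ^ (N - 2) * Real.pi
      = (C * (2 * ‖τ‖) ^ N * Real.pi) * Λ / s15w τ p ^ (N - 2) := by ring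
    rw [this]
    gcongr
    unfold s15C1
    have : 0 < 2 * C * (2 * ‖τ‖) ^ (N - 1) * Real.pi := by positivity
    linarith
  · rcases le_or_gt p.2.im 0 with h | h
    · refine (mul_nonpos_of_nonneg_of_nonpos (norm_nonneg _) h).trans ?_
      unfold s15C1
      positivity
    have h3 : ‖s15I τ E y p‖ ≤ ∫ x : ℝ, (2 * C * Λ * (2 * ‖τ‖) ^ (N - 1) /
        s15w τ p ^ (N - 3) * p.2.im⁻¹) * (1 + (c + x) ^ 2)⁻¹ := by
      refine norm_integral_le_of_norm_le ((s15_int_bump c).const_mul _) (ae_of_all _ fun x => ?_)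
      have := (key x).2
      rw [← le_div_iff₀ h] at this
      refine this.trans (le_of_eq ?_)
      ring
    rw [integral_const_mul, s15_int_bump_val] at h3
    calc ‖s15I τ E y p‖ * p.2.im ≤ (2 * C * Λ * (2 * ‖τ‖) ^ (N - 1) /
        s15w τ p ^ (N - 3) * p.2.im⁻¹ * Real.pi) * p.2.im := by gcongr
      _ = (2 * C * (2 * ‖τ‖) ^ (N - 1) * Real.pi) * Λ / s15w τ p ^ (N - 3) := by
        field_simp
      _ ≤ _ := by
        gcongr
        unfold s15C1
        have : 0 < C * (2 * ‖τ‖) ^ N * Real.pi := by positivity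
        linarith

end PartFive

section PartSix
open Set Metric Filter Topology MeasureTheory

variable {F : Type*} [NormedAddCommGroup F] [NormedSpace ℂ F]

/-- The weak growth condition. -/
def s15Bd (u : ℂ × ℂ → F) (W : Set (ℂ × ℂ)) (B0 : ℝ) : Prop :=
  ∀ p ∈ W, ‖u p‖ ≤ B0 ∧ (1 ≤ p.2.im → ‖u p‖ * Real.sqrt p.2.im ≤ B0)

theorem s15_im_lim {τ : ℂ} (hτ : 0 < τ.im) (y1 y2 Q : ℝ) : ∃ X0 : ℝ, 0 < X0 ∧
    ∀ s : ℂ, y1 ≤ s.im → s.im ≤ y2 → (X0 ≤ s.re → (s / τ).im ≤ -Q) ∧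
      (s.re ≤ -X0 → Q ≤ (s / τ).im) := by
  have hτ0 : τ ≠ 0 := by rintro rfl; simp at hτ
  have hn : 0 < ‖τ‖ := norm_pos_iff.2 hτ0
  refine ⟨(|Q| * ‖τ‖ ^ 2 + (|y1| + |y2|) * |τ.re|) / τ.im + 1, by positivity, ?_⟩
  intro s h1 h2
  have e := s15_im_div τ s
  have hy : |s.im * τ.re| ≤ (|y1| + |y2|) * |τ.re| := by
    rw [abs_mul]
    gcongr
    rw [abs_le]
    constructor
    · linarith [neg_abs_le y1, abs_nonneg y2]
    · linarith [le_abs_self y2, abs_nonneg y1]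
  have hy' := abs_le.1 hy
  have hQ := le_abs_self Q
  set X0 := (|Q| * ‖τ‖ ^ 2 + (|y1| + |y2|) * |τ.re|) / τ.im + 1 with hX0
  have e2 : X0 * τ.im = |Q| * ‖τ‖ ^ 2 + (|y1| + |y2|) * |τ.re| + τ.im := by
    rw [hX0]; field_simp
  have hn2 : 0 < ‖τ‖ ^ 2 := by positivity
  have hQ2 : Q * ‖τ‖ ^ 2 ≤ |Q| * ‖τ‖ ^ 2 := by gcongr
  constructor
  · intro h3
    have : X0 * τ.im ≤ s.re * τ.im := by gcongr
    by_contra hc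
    push Not at hc
    have : (-Q) * ‖τ‖ ^ 2 < (s / τ).im * ‖τ‖ ^ 2 := by gcongr
    linarith
  · intro h3
    have : s.re * τ.im ≤ (-X0) * τ.im := by gcongr
    by_contra hc
    push Not at hc
    have : (s / τ).im * ‖τ‖ ^ 2 < Q * ‖τ‖ ^ 2 := by gcongr
    linarith

theorem s15_dec {τ : ℂ} (hτ : 0 < τ.im) {u : ℂ × ℂ → F} {W : Set (ℂ × ℂ)} {B0 : ℝ}
    (hu : s15Bd u W B0) {p : ℂ × ℂ} {y1 y2 : ℝ}
    (hW : ∀ s : ℂ, y1 ≤ s.im → s.im ≤ y2 → s15psi τ s p ∈ W) (ε : ℝ) (hε : 0 < ε) :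
    ∀ᶠ X : ℝ in atTop, ∀ s : ℂ, y1 ≤ s.im → s.im ≤ y2 → X ≤ |s.re| →
      ‖s15K τ s • u (s15psi τ s p)‖ ≤ ε := by
  have hτ0 : τ ≠ 0 := by rintro rfl; simp at hτ
  have hn : 0 < ‖τ‖ := norm_pos_iff.2 hτ0
  set Q1 : ℝ := 1 + 2 / ‖τ‖ * |B0| / ε with hQ1
  have hQ1p : 1 ≤ Q1 := by rw [hQ1]; have : 0 ≤ 2 / ‖τ‖ * |B0| / ε := by positivity
                           linarith
  set Q2 : ℝ := 1 + |p.2.im| + Q1 ^ 2 with hQ2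
  obtain ⟨X1, hX1, h1⟩ := s15_im_lim hτ y1 y2 Q1
  obtain ⟨X2, hX2, h2⟩ := s15_im_lim hτ y1 y2 Q2
  filter_upwards [eventually_ge_atTop X1, eventually_ge_atTop X2] with X hXa hXb
  intro s hs1 hs2 hsX
  have hB := hu _ (hW s hs1 hs2)
  have hB0 : 0 ≤ B0 := (norm_nonneg _).trans hB.1
  have hB0a : |B0| = B0 := abs_of_nonneg hB0
  rw [hB0a] at hQ1
  have hQe : 2 / ‖τ‖ * B0 ≤ ε * Q1 := by
    rw [hQ1, mul_add, mul_div_cancel₀ _ hε.ne']; linarith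
  rw [norm_smul]
  rcases le_abs.1 hsX with h | h
  · have h3 := (h1 s hs1 hs2).1 (by linarith)
    have hK := (s15K_far (τ := τ) (s := s) (by rw [le_abs]; right; linarith)).2
    have hK2 : ‖s15K τ s‖ * Q1 ≤ 2 / ‖τ‖ := by
      refine le_trans ?_ hK
      gcongr; linarith
    have : ‖s15K τ s‖ * ‖u (s15psi τ s p)‖ * Q1 ≤ ε * Q1 := by
      calc _ = (‖s15K τ s‖ * Q1) * ‖u (s15psi τ s p)‖ := by ring
        _ ≤ (2 / ‖τ‖) * B0 := by gcongr; exact hB.1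
        _ ≤ _ := hQe
    exact le_of_mul_le_mul_right this (by linarith)
  · have h3 := (h2 s hs1 hs2).2 (by linarith)
    have hq2 : 1 ≤ Q2 := by rw [hQ2]; have := abs_nonneg p.2.im; nlinarith
    have hK := (s15K_far (τ := τ) (s := s) (by rw [le_abs]; left; linarith)).1
    have him : 1 + Q1 ^ 2 ≤ (s15psi τ s p).2.im := by
      simp only [s15psi, Complex.add_im]
      have := neg_abs_le p.2.im
      linarith
    have h4 := hB.2 (by nlinarith)
    have h5 : Q1 ≤ Real.sqrt (s15psi τ s p).2.im := by
      apply Real.le_sqrt_of_sq_le; linarith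
    have h6 : ‖u (s15psi τ s p)‖ * Q1 ≤ B0 := by
      refine le_trans ?_ h4
      gcongr
    have : ‖s15K τ s‖ * ‖u (s15psi τ s p)‖ * Q1 ≤ ε * Q1 := by
      calc _ = ‖s15K τ s‖ * (‖u (s15psi τ s p)‖ * Q1) := by ring
        _ ≤ (2 / ‖τ‖) * B0 := by gcongr
        _ ≤ _ := hQe
    exact le_of_mul_le_mul_right this (by linarith)

theorem s15_line_cont {τ : ℂ} (hτ : 0 < τ.im) {E : ℂ × ℂ → F} {V : Set (ℂ × ℂ)}
    (hE : ContinuousOn E V) {y : ℝ} (hy1 : -τ.im < y) (hy2 : y < τ.im) (hy0 : y ≠ 0)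
    {p : ℂ × ℂ} (hp : ∀ x : ℝ, s15psi τ ((x : ℂ) + y * I) p ∈ V) :
    Continuous (fun x : ℝ => s15K τ ((x : ℂ) + y * I) • E (s15psi τ ((x : ℂ) + y * I) p)) := by
  have hl : Continuous (fun x : ℝ => (x : ℂ) + y * I) := by fun_prop
  refine Continuous.smul ?_ ?_
  · rw [continuous_iff_continuousAt]
    intro x
    have : DifferentiableAt ℂ (s15K τ) ((x : ℂ) + y * I) := by
      apply s15K_diffAt hτ
      · intro h
        have := congrArg Complex.im h
        simp at this
        exact hy0 this
      · simpa
      · simpa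
    exact ContinuousAt.comp (f := fun x : ℝ => (x : ℂ) + y * I) this.continuousAt hl.continuousAt
  · exact hE.comp_continuous ((s15psi_diff_s τ p).continuous.comp hl) hp

theorem s15_integrable {τ : ℂ} (hτ : 0 < τ.im) {A B w L : ℝ} (hA : -L ≤ A) (hB : B ≤ L)
    (hw : 2 * L + 2 + 2 * ‖τ‖ ≤ w) {Λ : ℝ} (hΛ : 0 ≤ Λ)
    {N : ℕ} (hN : 4 ≤ N) {E : ℂ × ℂ → F} (hEc : ContinuousOn E (s15D τ A B w))
    (hE : ∀ p ∈ s15D τ A B w, ‖E p‖ ≤ Λ / ‖p.2‖ ^ N) {p : ℂ × ℂ} {y A' B' : ℝ}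
    (hp : p ∈ s15D τ A' B' w) (hy1 : 0 < y) (hy2 : y < τ.im)
    (h1 : A < s15l p + y) (h2 : s15l p + y < B) :
    Integrable (fun x : ℝ => s15K τ ((x : ℂ) + y * I) • E (s15psi τ ((x : ℂ) + y * I) p)) := by
  have hτ0 : τ ≠ 0 := by rintro rfl; simp at hτ
  obtain ⟨C, hC0, hC⟩ := s15K_near hτ (ε := min y (τ.im - y)) (lt_min hy1 (by linarith))
  have hmem : ∀ x : ℝ, s15psi τ ((x : ℂ) + y * I) p ∈ s15D τ A B w := fun x =>
    s15psi_mem hτ0 hp (by simpa using h1) (by simpa using h2)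
  refine Integrable.mono' ((s15_int_bump (τ * p.2).re).const_mul
    (C * Λ * (2 * ‖τ‖) ^ N / s15w τ p ^ (N - 2)))
    (s15_line_cont hτ hEc (by linarith) hy2 hy1.ne' hmem).aestronglyMeasurable
    (ae_of_all _ fun x => ?_)
  have := (s15_ptw hτ0 hA hB hw hC0 hΛ hN hE (p := p) (s := (x : ℂ) + y * I) hp.1 (hmem x)
    (hC _ (by simp) (by simp; linarith [min_le_right y (τ.im - y)]))).1
  simpa using this

end PartSix

section PartSeven
open Set Metric Filter Topology MeasureTheory

variable {F : Type*} [NormedAddCommGroup F] [NormedSpace ℂ F]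

theorem s15_dec' {τ : ℂ} (hτ : 0 < τ.im) {u : ℂ × ℂ → F} {W : Set (ℂ × ℂ)} {B0 : ℝ}
    (hu : s15Bd u W B0) {p : ℂ × ℂ} {y1 y2 : ℝ}
    (hW : ∀ s : ℂ, y1 ≤ s.im → s.im ≤ y2 → s15psi τ s p ∈ W) (ε : ℝ) (hε : 0 < ε) :
    ∀ᶠ X : ℝ in atTop, ∀ y : ℝ, y1 ≤ y → y ≤ y2 →
      ‖s15K τ ((X : ℂ) + y * I) • u (s15psi τ ((X : ℂ) + y * I) p)‖ ≤ ε ∧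
      ‖s15K τ (((-X : ℝ) : ℂ) + y * I) • u (s15psi τ (((-X : ℝ) : ℂ) + y * I) p)‖ ≤ ε := by
  filter_upwards [s15_dec hτ hu hW ε hε, eventually_ge_atTop 0] with X hX hX0 y h1 h2
  exact ⟨hX _ (by simpa) (by simpa) (by simp [le_abs_self]),
    hX _ (by simpa) (by simpa) (by simp [le_abs_self])⟩

theorem s15_lim_pole [CompleteSpace F] {τ : ℂ} (hτ : 0 < τ.im) {u : ℂ × ℂ → F}
    {W : Set (ℂ × ℂ)} (hWo : IsOpen W) {B0 : ℝ} (hud : DifferentiableOn ℂ u W)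
    (hu : s15Bd u W B0) {p : ℂ × ℂ} {y1 y2 : ℝ} (h1 : y1 < 0) (h2 : 0 < y2)
    (h1' : -τ.im < y1) (h2' : y2 < τ.im)
    (hW : ∀ s : ℂ, y1 ≤ s.im → s.im ≤ y2 → s15psi τ s p ∈ W) :
    Tendsto (fun X : ℝ =>
      (∫ x : ℝ in (-X)..X, s15K τ ((x : ℂ) + y1 * I) • u (s15psi τ ((x : ℂ) + y1 * I) p)) -
      (∫ x : ℝ in (-X)..X, s15K τ ((x : ℂ) + y2 * I) • u (s15psi τ ((x : ℂ) + y2 * I) p)))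
      atTop (𝓝 (u p)) := by
  refine s15Rect_lim (H := fun s => s15K τ s • u (s15psi τ s p)) (by linarith) ?_
    (fun ε hε => s15_dec' hτ hu hW ε hε)
  intro X hX
  have := s15Rect_pole (f := fun s => u (s15psi τ s p)) hτ hX h1 h2 h1' h2'
    (U := (fun s => s15psi τ s p) ⁻¹' W) (hWo.preimage (s15psi_diff_s τ p).continuous) hW
    (hud.comp (s15psi_diff_s τ p).differentiableOn (fun s hs => hs))
  rw [this, s15psi_zero]

theorem s15_lim_zero [CompleteSpace F] {τ : ℂ} (hτ : 0 < τ.im) {u : ℂ × ℂ → F}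
    {W : Set (ℂ × ℂ)} (hWo : IsOpen W) {B0 : ℝ} (hud : DifferentiableOn ℂ u W)
    (hu : s15Bd u W B0) {p : ℂ × ℂ} {y1 y2 : ℝ} (h12 : y1 ≤ y2) (h1 : 0 < y1)
    (h2' : y2 < τ.im)
    (hW : ∀ s : ℂ, y1 ≤ s.im → s.im ≤ y2 → s15psi τ s p ∈ W) :
    Tendsto (fun X : ℝ =>
      (∫ x : ℝ in (-X)..X, s15K τ ((x : ℂ) + y1 * I) • u (s15psi τ ((x : ℂ) + y1 * I) p)) -
      (∫ x : ℝ in (-X)..X, s15K τ ((x : ℂ) + y2 * I) • u (s15psi τ ((x : ℂ) + y2 * I) p)))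
      atTop (𝓝 0) := by
  refine s15Rect_lim (H := fun s => s15K τ s • u (s15psi τ s p)) h12 ?_
    (fun ε hε => s15_dec' hτ hu hW ε hε)
  intro X hX
  apply s15Rect_zero h12
  intro s hs1 hs2
  refine DifferentiableAt.smul (s15K_diffAt hτ ?_ (by linarith) (by linarith)) ?_
  · rintro rfl
    simp at hs1; linarith
  · exact ((hud _ (hW s hs1 hs2)).differentiableAt (hWo.mem_nhds (hW s hs1 hs2))).comp s
      (s15psi_diff_s τ p s)

theorem s15_shift {J : ℝ → F} (hJ : Continuous J) (r : ℝ)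
    (hdec : ∀ ε : ℝ, 0 < ε → ∀ᶠ X : ℝ in atTop, ∀ x : ℝ, X ≤ |x| → ‖J x‖ ≤ ε) :
    Tendsto (fun X : ℝ => (∫ x : ℝ in (-X)..X, J (x + r)) - ∫ x : ℝ in (-X)..X, J x)
      atTop (𝓝 0) := by
  rw [Metric.tendsto_atTop']
  intro ε hε
  have hpos : 0 < ε / (4 * (|r| + 1)) := by positivity
  obtain ⟨N, hN⟩ := eventually_atTop.1 (hdec _ hpos)
  have hN := hN N le_rfl
  refine ⟨|N| + |r|, fun X hX => ?_⟩
  have hi : ∀ a b : ℝ, IntervalIntegrable J volume a b := fun a b => hJ.intervalIntegrable a b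
  have e : (∫ x : ℝ in (-X)..X, J (x + r)) - (∫ x : ℝ in (-X)..X, J x) =
      (∫ x : ℝ in X..(X + r), J x) - ∫ x : ℝ in (-X)..(-X + r), J x := by
    rw [intervalIntegral.integral_comp_add_right,
      intervalIntegral.integral_interval_sub_interval_comm' (hi _ _) (hi _ _) (hi _ _)]
  rw [dist_zero_right, e]
  have b1 : ‖∫ x : ℝ in X..(X + r), J x‖ ≤ ε / (4 * (|r| + 1)) * |X + r - X| := by
    apply intervalIntegral.norm_integral_le_of_norm_le_const
    intro x hx
    apply hN
    rcases mem_uIoc.1 hx with h | h <;>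
    · rw [le_abs]; left
      linarith [le_abs_self N, neg_abs_le r, abs_nonneg r]
  have b2 : ‖∫ x : ℝ in (-X)..(-X + r), J x‖ ≤ ε / (4 * (|r| + 1)) * |-X + r - (-X)| := by
    apply intervalIntegral.norm_integral_le_of_norm_le_const
    intro x hx
    apply hN
    rcases mem_uIoc.1 hx with h | h <;>
    · rw [le_abs]; right
      linarith [le_abs_self N, neg_abs_le r, abs_nonneg r, le_abs_self r]
  have e1 : |X + r - X| = |r| := by congr 1; ring
  have e2 : |-X + r - (-X)| = |r| := by congr 1; ring
  rw [e1] at b1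
  rw [e2] at b2
  have b3 : ε / (4 * (|r| + 1)) * |r| ≤ ε / 4 := by
    rw [div_mul_eq_mul_div, div_le_div_iff₀ (by positivity) (by norm_num)]
    nlinarith [abs_nonneg r]
  calc _ ≤ _ := norm_sub_le _ _
    _ ≤ ε / 4 + ε / 4 := by linarith
    _ < ε := by linarith

/-- Representation of solutions of the linear equation. -/
theorem s15_rep [CompleteSpace F] {τ : ℂ} (hτ : 0 < τ.im) {A B w L : ℝ} (hA : -L ≤ A)
    (hB : B ≤ L) (hw : 2 * L + 2 + 2 * ‖τ‖ ≤ w) {Λ : ℝ} (hΛ : 0 ≤ Λ)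
    {N : ℕ} (hN : 4 ≤ N) {u E : ℂ × ℂ → F} {B0 : ℝ}
    (hud : DifferentiableOn ℂ u (s15D τ (A - τ.im) B w))
    (hub : s15Bd u (s15D τ (A - τ.im) B w) B0)
    (heq : ∀ p ∈ s15D τ A B w, u (s15psi τ (-τ) p) - u p = E p)
    (hE : ∀ p ∈ s15D τ A B w, ‖E p‖ ≤ Λ / ‖p.2‖ ^ N) {p : ℂ × ℂ} {y : ℝ}
    (hp : p ∈ s15D τ (A - τ.im) B w) (hy1 : 0 < y) (hy2 : y < τ.im)
    (h1 : A < s15l p + y) (h2 : s15l p + y < B) :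
    u p = s15I τ E y p := by
  have hτ0 : τ ≠ 0 := by rintro rfl; simp at hτ
  have hUo := s15D_open τ (A - τ.im) B w
  have hmemV : ∀ x : ℝ, s15psi τ ((x : ℂ) + y * I) p ∈ s15D τ A B w := fun x =>
    s15psi_mem hτ0 hp (by simpa using h1) (by simpa using h2)
  have hW : ∀ s : ℂ, y - τ.im ≤ s.im → s.im ≤ y → s15psi τ s p ∈ s15D τ (A - τ.im) B w :=
    fun s a b => s15psi_mem hτ0 hp (by linarith) (by linarith)
  have hVU : s15D τ A B w ⊆ s15D τ (A - τ.im) B w := fun x hx =>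
    ⟨hx.1, by linarith [hx.2.1], hx.2.2⟩
  have hφ : MapsTo (fun x => s15psi τ (-τ) x) (s15D τ A B w) (s15D τ (A - τ.im) B w) := by
    intro x hx
    have := hx.2.1
    have := hx.2.2.1
    exact s15psi_mem hτ0 hx (by simp; linarith) (by simp; linarith)
  have hEc : ContinuousOn E (s15D τ A B w) := by
    have : ContinuousOn (fun p => u (s15psi τ (-τ) p) - u p) (s15D τ A B w) :=
      (hud.continuousOn.comp (s15psi_diff_p τ (-τ)).continuous.continuousOn hφ).sub
        (hud.continuousOn.mono hVU)
    exact this.congr fun x hx => (heq x hx).symm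
  have hIntg := s15_integrable hτ hA hB hw hΛ hN hEc hE hp hy1 hy2 h1 h2
  have L1 := s15_lim_pole hτ hUo hud hub (y1 := y - τ.im) (y2 := y) (by linarith) hy1
    (by linarith) hy2 hW
  set J : ℝ → F := fun x => s15K τ ((x : ℂ) + y * I) •
    u (s15psi τ ((x : ℂ) + y * I - τ) p) with hJ
  have hJe : ∀ x : ℝ, s15K τ ((x : ℂ) + (y - τ.im : ℝ) * I) •
      u (s15psi τ ((x : ℂ) + (y - τ.im : ℝ) * I) p) = J (x + τ.re) := by
    intro x
    have e : (x : ℂ) + (y - τ.im : ℝ) * I = ((x + τ.re : ℝ) : ℂ) + y * I - τ := by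
      apply Complex.ext <;> simp
    rw [hJ, e]
    simp only [s15K_periodic hτ0]
  have hJc : Continuous J := by
    have hc := s15_line_cont hτ (E := u) hud.continuousOn (y := y - τ.im) (by linarith)
      (by linarith) (by linarith) (p := p) (fun x => hW _ (by simp) (by simp [hτ.le]))
    simp_rw [hJe] at hc
    have : J = (fun x => J (x + τ.re)) ∘ (fun x => x - τ.re) := by ext x; simp
    rw [this]
    exact hc.comp (by fun_prop)
  have L2 := s15_shift hJc τ.re (by
    intro ε hε
    obtain ⟨X0, hX0⟩ := eventually_atTop.1 (s15_dec hτ hub hW ε hε)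
    filter_upwards [eventually_ge_atTop (X0 + |τ.re|)] with X hX x hx
    have := hJe (x - τ.re)
    rw [sub_add_cancel] at this
    rw [← this]
    refine hX0 X0 le_rfl _ (by simp) (by simp [hτ.le]) ?_
    have e : ((((x - τ.re : ℝ) : ℂ)) + (y - τ.im : ℝ) * I).re = x - τ.re := by simp
    rw [e]
    have := abs_sub_abs_le_abs_sub x τ.re
    linarith)
  simp_rw [hJe] at L1
  have L3 := L1.sub L2
  rw [sub_zero] at L3
  have hc2 := s15_line_cont hτ (E := u) hud.continuousOn (y := y) (by linarith)
      hy2 hy1.ne' (p := p) (fun x => hW _ (by simp [hτ.le]) (by simp))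
  have L4 : Tendsto (fun X : ℝ => ∫ x : ℝ in (-X)..X,
      s15K τ ((x : ℂ) + y * I) • E (s15psi τ ((x : ℂ) + y * I) p)) atTop (𝓝 (u p)) := by
    refine L3.congr fun X => ?_
    rw [sub_sub_sub_cancel_left, ← intervalIntegral.integral_sub (hJc.intervalIntegrable _ _)
      (hc2.intervalIntegrable _ _)]
    refine intervalIntegral.integral_congr fun x _ => ?_
    simp only [hJ]
    rw [← smul_sub, ← heq _ (hmemV x), s15psi_psi, neg_add_eq_sub]
  have L5 := intervalIntegral_tendsto_integral hIntg tendsto_neg_atTop_atBot tendsto_id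
  exact tendsto_nhds_unique L4 L5

end PartSeven

section PartEight
open Set Metric Filter Topology MeasureTheory

variable {F : Type*} [NormedAddCommGroup F] [NormedSpace ℂ F]

/-- Quantitative decay estimate. -/
def s15Est (τ : ℂ) (N : ℕ) (u : ℂ × ℂ → F) (S : Set (ℂ × ℂ)) (D : ℝ) : Prop :=
  ∀ p ∈ S, ‖u p‖ ≤ D / s15w τ p ^ (N - 2) ∧ ‖u p‖ * p.2.im ≤ D / s15w τ p ^ (N - 3)

theorem s15_E_est {τ : ℂ} (hτ : τ ≠ 0) {A B w L : ℝ} (hA : -L ≤ A) (hB : B ≤ L)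
    (hw : 2 * L + 2 + 2 * ‖τ‖ ≤ w) {Λ : ℝ} (hΛ : 0 ≤ Λ)
    {N : ℕ} (hN : 4 ≤ N) {E : ℂ × ℂ → F}
    (hE : ∀ p ∈ s15D τ A B w, ‖E p‖ ≤ Λ / ‖p.2‖ ^ N) :
    s15Est τ N E (s15D τ A B w) (((2 * ‖τ‖) ^ N + (2 * ‖τ‖) ^ (N - 1)) * Λ) := by
  intro p hp
  have hp' : s15psi τ 0 p ∈ s15D τ A B w := by rwa [s15psi_zero]
  have h1 := hE _ hp
  obtain ⟨_, _, _, h4, h5⟩ := s15_low hτ hA hB hw hp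
  have hb := s15_xi_bound hτ hA hB hw hp.1 hp' (k := N) (by omega)
  have hb' := s15_xi_bound hτ hA hB hw hp.1 hp' (k := N - 1) (by omega)
  have e3 : N - 1 - 2 = N - 3 := by omega
  rw [e3] at hb'
  rw [s15psi_zero] at hb hb'
  have hx : 0 < ‖p.2‖ := by linarith
  have hbump : (1 + ((τ * p.2).re + (0 : ℂ).re) ^ 2)⁻¹ ≤ 1 := by
    apply inv_le_one_of_one_le₀; nlinarith [sq_nonneg ((τ * p.2).re + (0 : ℂ).re)]
  have hw0 : 0 < s15w τ p := by linarith
  have hq1 : 0 ≤ (2 * ‖τ‖) ^ N := by positivity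
  have hq2 : 0 ≤ (2 * ‖τ‖) ^ (N - 1) := by positivity
  constructor
  · calc ‖E p‖ ≤ Λ * (1 / ‖p.2‖ ^ N) := by rw [mul_one_div]; exact h1
      _ ≤ Λ * ((2 * ‖τ‖) ^ N / s15w τ p ^ (N - 2) * 1) := by
        gcongr; exact hb.trans (by gcongr)
      _ = (2 * ‖τ‖) ^ N * Λ / s15w τ p ^ (N - 2) := by ring
      _ ≤ _ := by gcongr; linarith
  · have eN : ‖p.2‖ ^ N = ‖p.2‖ ^ (N - 1) * ‖p.2‖ := by
      rw [← pow_succ]; congr 1; omega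
    have him : p.2.im ≤ ‖p.2‖ := (le_abs_self _).trans (Complex.abs_im_le_norm _)
    calc ‖E p‖ * p.2.im ≤ ‖E p‖ * ‖p.2‖ := by gcongr
      _ ≤ (Λ / ‖p.2‖ ^ N) * ‖p.2‖ := by gcongr
      _ = Λ * (1 / ‖p.2‖ ^ (N - 1)) := by rw [eN]; field_simp
      _ ≤ Λ * ((2 * ‖τ‖) ^ (N - 1) / s15w τ p ^ (N - 3) * 1) := by
        gcongr; exact hb'.trans (by gcongr)
      _ = (2 * ‖τ‖) ^ (N - 1) * Λ / s15w τ p ^ (N - 3) := by ring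
      _ ≤ _ := by gcongr; linarith

theorem s15_transfer {τ : ℂ} (hτ : 0 < τ.im) {A B w L : ℝ} (hA : -L ≤ A) (hB : B ≤ L)
    (hw : 2 * L + 2 + 2 * ‖τ‖ ≤ w) {Λ : ℝ} (hΛ : 0 ≤ Λ)
    {N : ℕ} (hN : 4 ≤ N) {u E : ℂ × ℂ → F} {ε D : ℝ} (hε : 0 < ε) (hD : 0 ≤ D)
    (hεT : 4 * ε ≤ τ.im) (hεB : 4 * ε ≤ B - A)
    (heq : ∀ p ∈ s15D τ A B w, u (s15psi τ (-τ) p) - u p = E p)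
    (hE : ∀ p ∈ s15D τ A B w, ‖E p‖ ≤ Λ / ‖p.2‖ ^ N)
    (hmid : s15Est τ N u (s15D τ (A - τ.im + ε) (B - ε) w) (D * Λ)) :
    s15Est τ N u (s15D τ (A - τ.im) B w)
      ((D + ((2 * ‖τ‖) ^ N + (2 * ‖τ‖) ^ (N - 1))) * Λ) := by
  have hτ0 : τ ≠ 0 := by rintro rfl; simp at hτ
  intro p hp
  have hEe := s15_E_est hτ0 hA hB hw hΛ hN hE
  have hw0 : 0 < s15w τ p := by
    have := hp.2.2.2
    have := hp.2.2.1
    have := norm_nonneg τ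
    linarith
  have hq0 : 0 ≤ (2 * ‖τ‖) ^ N + (2 * ‖τ‖) ^ (N - 1) := by positivity
  set c := (2 * ‖τ‖) ^ N + (2 * ‖τ‖) ^ (N - 1) with hc
  -- combination step
  have comb : ∀ (x y : F) (v : ℝ), u p = x + y → 
      (‖x‖ ≤ D * Λ / s15w τ p ^ (N - 2) ∧ ‖x‖ * p.2.im ≤ D * Λ / s15w τ p ^ (N - 3)) →
      (‖y‖ ≤ c * Λ / s15w τ p ^ (N - 2) ∧ ‖y‖ * p.2.im ≤ c * Λ / s15w τ p ^ (N - 3)) →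
      ‖u p‖ ≤ (D + c) * Λ / s15w τ p ^ (N - 2) ∧
      ‖u p‖ * p.2.im ≤ (D + c) * Λ / s15w τ p ^ (N - 3) := by
    intro x y v e hx hy
    have hn : ‖u p‖ ≤ ‖x‖ + ‖y‖ := by rw [e]; exact norm_add_le _ _
    have s1 : ∀ k : ℕ, (D + c) * Λ / s15w τ p ^ k =
      D * Λ / s15w τ p ^ k + c * Λ / s15w τ p ^ k := fun k => by ring
    rw [s1, s1]
    refine ⟨by linarith [hx.1, hy.1], ?_⟩
    rcases le_or_gt p.2.im 0 with h | h
    · refine (mul_nonpos_of_nonneg_of_nonpos (norm_nonneg _) h).trans ?_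
      positivity
    · calc ‖u p‖ * p.2.im ≤ (‖x‖ + ‖y‖) * p.2.im := by gcongr
        _ = ‖x‖ * p.2.im + ‖y‖ * p.2.im := by ring
        _ ≤ _ := by linarith [hx.2, hy.2]
  rcases le_or_gt (B - ε) (s15l p) with h | h
  · have hpV : p ∈ s15D τ A B w := ⟨hp.1, by linarith, hp.2.2⟩
    have hq : s15psi τ (-τ) p ∈ s15D τ (A - τ.im + ε) (B - ε) w :=
      s15psi_mem hτ0 hp (by simp; linarith) (by have := hp.2.2.1; simp; linarith)
    have h1 := hmid _ hq
    rw [s15w_psi hτ0 _ hp.1] at h1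
    have e2 : (s15psi τ (-τ) p).2.im = p.2.im := by rw [s15psi_tau hτ0]; simp
    rw [e2] at h1
    refine comb (u (s15psi τ (-τ) p)) (-E p) 0 ?_ h1 ?_
    · rw [← heq p hpV]; abel
    · rw [norm_neg]; exact hEe p hpV
  · rcases le_or_gt (s15l p) (A - τ.im + ε) with h' | h'
    · have hpV : s15psi τ τ p ∈ s15D τ A B w :=
        s15psi_mem hτ0 hp (by linarith [hp.2.1]) (by linarith)
      have hq : s15psi τ τ p ∈ s15D τ (A - τ.im + ε) (B - ε) w :=
        s15psi_mem hτ0 hp (by linarith [hp.2.1]) (by linarith)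
      have h1 := hmid _ hq
      have h2 := hEe _ hpV
      rw [s15w_psi hτ0 _ hp.1] at h1 h2
      have e2 : (s15psi τ τ p).2.im = p.2.im := by simp [s15psi, hτ0]
      rw [e2] at h1 h2
      refine comb (u (s15psi τ τ p)) (E (s15psi τ τ p)) 0 ?_ h1 h2
      rw [← heq _ hpV, s15psi_psi, neg_add_cancel, s15psi_zero]; abel
    · have h1 := hmid p ⟨hp.1, h', h, hp.2.2.2⟩
      refine comb (u p) 0 0 (by simp) h1 ?_
      rw [norm_zero, zero_mul]
      constructor <;> positivity

theorem s15_choose_y {A B T l ε : ℝ} (hε : 0 < ε) (hT : 4 * ε ≤ T) (hB : 4 * ε ≤ B - A)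
    (h1 : A - T + ε < l) (h2 : l < B - ε) :
    ∃ y : ℝ, ε ≤ y ∧ y ≤ T - ε ∧ A < l + y ∧ l + y < B := by
  rcases lt_or_ge (A - l) ε with h | h
  · exact ⟨ε, le_rfl, by linarith, by linarith, by linarith⟩
  · refine ⟨min (T - ε) ((A + B) / 2 - l), le_min (by linarith) (by linarith), min_le_left _ _,
      ?_, ?_⟩
    · have : A - l < min (T - ε) ((A + B) / 2 - l) := lt_min (by linarith) (by linarith)
      linarith
    · have := min_le_right (T - ε) ((A + B) / 2 - l)
      linarith

/-- The transition width. -/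
noncomputable def s15eps (τ : ℂ) (A B : ℝ) : ℝ := min τ.im (B - A) / 4

theorem s15eps_spec {τ : ℂ} (hτ : 0 < τ.im) {A B : ℝ} (hAB : A < B) :
    0 < s15eps τ A B ∧ 4 * s15eps τ A B ≤ τ.im ∧ 4 * s15eps τ A B ≤ B - A := by
  unfold s15eps
  have := min_le_left τ.im (B - A)
  have := min_le_right τ.im (B - A)
  have : 0 < min τ.im (B - A) := lt_min hτ (by linarith)
  exact ⟨by linarith, by linarith, by linarith⟩

/-- Any function coinciding with the line integrals in the middle, and solving the equation,
satisfies the estimates. -/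
theorem s15_est_of_rep {τ : ℂ} (hτ : 0 < τ.im) {A B : ℝ} (hAB : A < B) {N : ℕ} (hN : 4 ≤ N) :
    ∃ C : ℝ, 0 < C ∧ ∀ (w L Λ : ℝ), -L ≤ A → B ≤ L → 2 * L + 2 + 2 * ‖τ‖ ≤ w → 0 ≤ Λ →
    ∀ (u E : ℂ × ℂ → F), 
    (∀ p ∈ s15D τ A B w, u (s15psi τ (-τ) p) - u p = E p) →
    (∀ p ∈ s15D τ A B w, ‖E p‖ ≤ Λ / ‖p.2‖ ^ N) →
    (∀ p ∈ s15D τ (A - τ.im) B w, ∀ y : ℝ, 0 < y → y < τ.im → A < s15l p + y →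
      s15l p + y < B → u p = s15I τ E y p) →
    s15Est τ N u (s15D τ (A - τ.im) B w) (C * Λ) := by
  have hτ0 : τ ≠ 0 := by rintro rfl; simp at hτ
  have hn : 0 < ‖τ‖ := norm_pos_iff.2 hτ0
  have hpi := Real.pi_pos
  obtain ⟨hε, hεT, hεB⟩ := s15eps_spec hτ hAB
  set ε := s15eps τ A B
  obtain ⟨C, hC0, hC⟩ := s15K_near hτ hε
  have hC1 : 0 < s15C1 τ C N := by unfold s15C1; positivity
  refine ⟨s15C1 τ C N + ((2 * ‖τ‖) ^ N + (2 * ‖τ‖) ^ (N - 1)), by positivity, ?_⟩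
  intro w L Λ hA hB hw hΛ u E heq hE hrep
  refine s15_transfer hτ hA hB hw hΛ hN hε hC1.le hεT hεB heq hE ?_
  intro p hp
  obtain ⟨y, y1, y2, y3, y4⟩ := s15_choose_y hε hεT hεB hp.2.1 hp.2.2.1
  have hpU : p ∈ s15D τ (A - τ.im) B w :=
    ⟨hp.1, by linarith [hp.2.1], by linarith [hp.2.2.1], hp.2.2.2⟩
  rw [hrep p hpU y (by linarith) (by linarith) y3 y4]
  have hw0 : 0 < s15w τ p := by
    have := hp.2.2.2
    linarith
  exact s15I_est hτ0 hA hB hw hC0 hΛ hC hN hE hpU y1 y2 y3 y4 hw0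

end PartEight

section PartNine
open Set Metric Filter Topology MeasureTheory

variable {F : Type*} [NormedAddCommGroup F] [NormedSpace ℂ F]

theorem s15_Bd_of {τ : ℂ} (hτ : τ ≠ 0) {A B w L : ℝ} (hA : -L ≤ A) (hB : B ≤ L)
    (hw : 2 * L + 2 + 2 * ‖τ‖ ≤ w) {Λ : ℝ} (hΛ : 0 ≤ Λ)
    {N : ℕ} (hN : 4 ≤ N) {E : ℂ × ℂ → F}
    (hE : ∀ p ∈ s15D τ A B w, ‖E p‖ ≤ Λ / ‖p.2‖ ^ N) : s15Bd E (s15D τ A B w) Λ := by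
  intro p hp
  obtain ⟨_, _, _, h4, h5⟩ := s15_low hτ hA hB hw hp
  have h1 := hE p hp
  have h6 : ‖p.2‖ ≤ ‖p.2‖ ^ N := le_self_pow₀ h4 (by omega)
  have h7 : 0 < ‖p.2‖ := by linarith
  constructor
  · refine h1.trans (div_le_self hΛ (by linarith))
  · intro him
    have h8 : Real.sqrt p.2.im ≤ ‖p.2‖ := by
      refine le_trans ?_ ((le_abs_self _).trans (Complex.abs_im_le_norm p.2))
      rw [Real.sqrt_le_left (by linarith)]
      nlinarith
    calc ‖E p‖ * Real.sqrt p.2.im ≤ (Λ / ‖p.2‖ ^ N) * ‖p.2‖ ^ N := by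
          gcongr; linarith
      _ = Λ := by field_simp

theorem s15_indep [CompleteSpace F] {τ : ℂ} (hτ : 0 < τ.im) {A B w L : ℝ} (hA : -L ≤ A)
    (hB : B ≤ L) (hw : 2 * L + 2 + 2 * ‖τ‖ ≤ w) {Λ : ℝ} (hΛ : 0 ≤ Λ)
    {N : ℕ} (hN : 4 ≤ N) {G : ℂ × ℂ → F} (hGd : DifferentiableOn ℂ G (s15D τ A B w))
    (hG : ∀ p ∈ s15D τ A B w, ‖G p‖ ≤ Λ / ‖p.2‖ ^ N) {p : ℂ × ℂ} {A' B' y1 y2 : ℝ}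
    (hp : p ∈ s15D τ A' B' w) (h12 : y1 ≤ y2) (hy1 : 0 < y1) (hy2 : y2 < τ.im)
    (h1 : A < s15l p + y1) (h2 : s15l p + y2 < B) : s15I τ G y1 p = s15I τ G y2 p := by
  have hτ0 : τ ≠ 0 := by rintro rfl; simp at hτ
  have i1 := s15_integrable hτ hA hB hw hΛ hN hGd.continuousOn hG hp hy1 (by linarith) h1
    (by linarith)
  have i2 := s15_integrable hτ hA hB hw hΛ hN hGd.continuousOn hG hp (by linarith) hy2
    (by linarith) h2
  have L0 := s15_lim_zero hτ (s15D_open τ A B w) hGd (s15_Bd_of hτ0 hA hB hw hΛ hN hG) h12 hy1 hy2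
    (p := p) (fun s a b => s15psi_mem hτ0 hp (by linarith) (by linarith))
  have L1 := intervalIntegral_tendsto_integral i1 tendsto_neg_atTop_atBot tendsto_id
  have L2 := intervalIntegral_tendsto_integral i2 tendsto_neg_atTop_atBot tendsto_id
  have := tendsto_nhds_unique L0 (L1.sub L2)
  exact (sub_eq_zero.1 this.symm)

theorem s15_lineq [CompleteSpace F] {τ : ℂ} (hτ : 0 < τ.im) {A B w L : ℝ} (hA : -L ≤ A)
    (hB : B ≤ L) (hw : 2 * L + 2 + 2 * ‖τ‖ ≤ w) {Λ : ℝ} (hΛ : 0 ≤ Λ)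
    {N : ℕ} (hN : 4 ≤ N) {G : ℂ × ℂ → F} (hGd : DifferentiableOn ℂ G (s15D τ A B w))
    (hG : ∀ p ∈ s15D τ A B w, ‖G p‖ ≤ Λ / ‖p.2‖ ^ N) {p : ℂ × ℂ} {y y' : ℝ}
    (hp : p ∈ s15D τ A B w) (hy1 : 0 < y) (hy2 : y < τ.im)
    (h2 : s15l p + y < B) (hy1' : 0 < y') (hy2' : y' < τ.im)
    (h1' : A < s15l p - τ.im + y') :
    s15I τ G y' (s15psi τ (-τ) p) - s15I τ G y p = G p := by
  have hτ0 : τ ≠ 0 := by rintro rfl; simp at hτ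
  have hpl := hp.2.1
  have hpl2 := hp.2.2.1
  have hlφ : s15l (s15psi τ (-τ) p) = s15l p - τ.im := by
    rw [s15l_psi τ _ hp.1]; simp; ring
  have hφ : s15psi τ (-τ) p ∈ s15D τ (A - τ.im) (B - τ.im) w :=
    s15psi_mem hτ0 hp (by simp; linarith) (by simp; linarith)
  have i1 := s15_integrable hτ hA hB hw hΛ hN hGd.continuousOn hG hφ hy1' hy2'
    (by rw [hlφ]; linarith) (by rw [hlφ]; linarith)
  have i2 := s15_integrable hτ hA hB hw hΛ hN hGd.continuousOn hG hp hy1 hy2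
    (by linarith) h2
  have hJe : ∀ x : ℝ, s15K τ (((x + τ.re : ℝ) : ℂ) + y' * I) •
      G (s15psi τ (((x + τ.re : ℝ) : ℂ) + y' * I) (s15psi τ (-τ) p)) =
      s15K τ ((x : ℂ) + (y' - τ.im : ℝ) * I) • G (s15psi τ ((x : ℂ) + (y' - τ.im : ℝ) * I) p) := by
    intro x
    have e : (x : ℂ) + (y' - τ.im : ℝ) * I = ((x + τ.re : ℝ) : ℂ) + y' * I - τ := by
      apply Complex.ext <;> simp
    rw [e, s15psi_psi, s15K_periodic hτ0, sub_eq_add_neg]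
  have i1' := i1.comp_add_right τ.re
  have v1 := integral_add_right_eq_self (μ := volume) (fun x : ℝ => s15K τ ((x : ℂ) + y' * I) •
      G (s15psi τ ((x : ℂ) + y' * I) (s15psi τ (-τ) p))) τ.re
  simp_rw [hJe] at i1' v1
  have L0 := s15_lim_pole hτ (s15D_open τ A B w) hGd (s15_Bd_of hτ0 hA hB hw hΛ hN hG)
    (y1 := y' - τ.im) (y2 := y) (by linarith) hy1 (by linarith) hy2
    (p := p) (fun s a b => s15psi_mem hτ0 hp (by linarith) (by linarith))
  have L1 := intervalIntegral_tendsto_integral i1' tendsto_neg_atTop_atBot tendsto_id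
  have L2 := intervalIntegral_tendsto_integral i2 tendsto_neg_atTop_atBot tendsto_id
  have := tendsto_nhds_unique L0 (L1.sub L2)
  rw [this, v1]
  rfl

theorem s15I_diff [CompleteSpace F] {τ : ℂ} (hτ : 0 < τ.im) {A B w L : ℝ} (hA : -L ≤ A)
    (hB : B ≤ L) (hw : 2 * L + 2 + 2 * ‖τ‖ ≤ w) {Λ : ℝ} (hΛ : 0 ≤ Λ)
    {N : ℕ} (hN : 4 ≤ N) {G : ℂ × ℂ → F} (hGd : DifferentiableOn ℂ G (s15D τ A B w))
    (hG : ∀ p ∈ s15D τ A B w, ‖G p‖ ≤ Λ / ‖p.2‖ ^ N) {p : ℂ × ℂ} {y : ℝ}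
    (hy1 : 0 < y) (hy2 : y < τ.im) (hp : p ∈ s15D τ (A - y) (B - y) w) :
    DifferentiableAt ℂ (s15I τ G y) p := by
  have hτ0 : τ ≠ 0 := by rintro rfl; simp at hτ
  obtain ⟨r0, hr0, hball⟩ := Metric.isOpen_iff.1 (s15D_open τ (A - y) (B - y) w) p hp
  obtain ⟨C, hC0, hC⟩ := s15K_near hτ (ε := min y (τ.im - y)) (lt_min hy1 (by linarith))
  set r := min r0 1 with hr
  have hrp : 0 < r := lt_min hr0 one_pos
  have hr1 : r ≤ 1 := min_le_right _ _
  have hb : ball p r ⊆ s15D τ (A - y) (B - y) w := (ball_subset_ball (min_le_left _ _)).trans hball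
  have hmem : ∀ q ∈ ball p r, ∀ x : ℝ, s15psi τ ((x : ℂ) + y * I) q ∈ s15D τ A B w := by
    intro q hq x
    have := hb hq
    exact s15psi_mem hτ0 this (by have := this.2.1; simp; linarith)
      (by have := this.2.2.1; simp; linarith)
  set c := (τ * p.2).re with hc
  refine s15_param (f := fun q x => s15K τ ((x : ℂ) + y * I) • G (s15psi τ ((x : ℂ) + y * I) q))
    (bound := fun x => (C * Λ * (2 * ‖τ‖) ^ N * (2 + 2 * ‖τ‖ ^ 2)) * (1 + (c + x) ^ 2)⁻¹)
    (r := r) hrp ((s15_int_bump c).const_mul _) ?_ ?_ ?_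
  · intro q hq
    exact (s15_line_cont hτ hGd.continuousOn (by linarith) hy2 hy1.ne'
      (hmem q hq)).aestronglyMeasurable
  · intro x
    exact (hGd.comp (s15psi_diff_p τ _).differentiableOn (fun q hq => hmem q hq x)).const_smul _
  · intro x q hq
    have h1 := (s15_ptw hτ0 hA hB hw hC0 hΛ hN hG (p := q) (s := (x : ℂ) + y * I) (hb hq).1
      (hmem q hq x) (hC _ (by simp) (by simp; linarith [min_le_right y (τ.im - y)]))).1
    have hw1 : 1 ≤ s15w τ q := by
      have h5 := (s15_low hτ0 hA hB hw (hmem q hq x)).2.2.2.2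
      rwa [s15w_psi hτ0 _ (hb hq).1] at h5
    refine h1.trans ?_
    have e1 : ((x : ℂ) + y * I).re = x := by simp
    rw [e1]
    have hd : |(τ * q.2).re - c| ≤ ‖τ‖ := by
      rw [hc, ← Complex.sub_re, ← mul_sub]
      refine (Complex.abs_re_le_norm _).trans ?_
      rw [norm_mul]
      have : ‖q.2 - p.2‖ ≤ 1 := by
        have h2 : ‖q - p‖ < r := by rwa [mem_ball, dist_eq_norm] at hq
        have h3 : ‖(q - p).2‖ ≤ ‖q - p‖ := norm_snd_le _
        simp at h3
        linarith
      nlinarith [norm_nonneg τ]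
    set c' := (τ * q.2).re
    have hd2 : (c' - c) ^ 2 ≤ ‖τ‖ ^ 2 := sq_le_sq' (abs_le.1 hd).1 (abs_le.1 hd).2
    have hbump : (1 + (c' + x) ^ 2)⁻¹ ≤ (2 + 2 * ‖τ‖ ^ 2) * (1 + (c + x) ^ 2)⁻¹ := by
      rw [← div_eq_mul_inv, inv_eq_one_div, div_le_div_iff₀ (by positivity) (by positivity)]
      have : (c + x) ^ 2 ≤ 2 * (c' + x) ^ 2 + 2 * (c' - c) ^ 2 := by
        nlinarith [sq_nonneg ((c' + x) + (c' - c))]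
      nlinarith [mul_nonneg (sq_nonneg ‖τ‖) (sq_nonneg (c' + x))]
    have hp1 : 1 ≤ s15w τ q ^ (N - 2) := one_le_pow₀ hw1
    calc C * Λ * (2 * ‖τ‖) ^ N / s15w τ q ^ (N - 2) * (1 + (c' + x) ^ 2)⁻¹
        ≤ C * Λ * (2 * ‖τ‖) ^ N * ((2 + 2 * ‖τ‖ ^ 2) * (1 + (c + x) ^ 2)⁻¹) := by
          gcongr
          exact div_le_self (by positivity) hp1
      _ = _ := by ring

theorem s15_choose_y' {A B T l : ℝ} (hT : 0 < T) (hB : A < B)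
    (h1 : A - T < l) (h2 : l < B) :
    ∃ y : ℝ, 0 < y ∧ y < T ∧ A < l + y ∧ l + y < B := by
  have : max 0 (A - l) < min T (B - l) := by
    apply max_lt <;> apply lt_min <;> linarith
  obtain ⟨y, h3, h4⟩ := exists_between this
  have a1 := max_lt_iff.1 h3
  have a2 := lt_min_iff.1 h4
  exact ⟨y, a1.1, a2.1, by linarith, by linarith⟩

/-- Existence for the linear equation, with the line-integral representation. -/
theorem s15_linear [CompleteSpace F] {τ : ℂ} (hτ : 0 < τ.im) {A B w L : ℝ} (hA : -L ≤ A)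
    (hAB : A < B)
    (hB : B ≤ L) (hw : 2 * L + 2 + 2 * ‖τ‖ ≤ w) {Λ : ℝ} (hΛ : 0 ≤ Λ)
    {N : ℕ} (hN : 4 ≤ N) {G : ℂ × ℂ → F} (hGd : DifferentiableOn ℂ G (s15D τ A B w))
    (hG : ∀ p ∈ s15D τ A B w, ‖G p‖ ≤ Λ / ‖p.2‖ ^ N) :
    ∃ u : ℂ × ℂ → F, DifferentiableOn ℂ u (s15D τ (A - τ.im) B w) ∧
      (∀ p ∈ s15D τ A B w, u (s15psi τ (-τ) p) - u p = G p) ∧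
      (∀ p ∈ s15D τ (A - τ.im) B w, ∀ y : ℝ, 0 < y → y < τ.im → A < s15l p + y →
        s15l p + y < B → u p = s15I τ G y p) := by
  have hτ0 : τ ≠ 0 := by rintro rfl; simp at hτ
  have hex : ∀ p : ℂ × ℂ, ∃ y : ℝ, p ∈ s15D τ (A - τ.im) B w →
      0 < y ∧ y < τ.im ∧ A < s15l p + y ∧ s15l p + y < B := by
    intro p
    by_cases hp : p ∈ s15D τ (A - τ.im) B w
    · obtain ⟨y, hy⟩ := s15_choose_y' hτ hAB hp.2.1 hp.2.2.1
      exact ⟨y, fun _ => hy⟩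
    · exact ⟨0, fun h => absurd h hp⟩
  choose Y hY using hex
  have hrep : ∀ p ∈ s15D τ (A - τ.im) B w, ∀ y : ℝ, 0 < y → y < τ.im → A < s15l p + y →
        s15l p + y < B → s15I τ G (Y p) p = s15I τ G y p := by
    intro p hp y y1 y2 y3 y4
    obtain ⟨z1, z2, z3, z4⟩ := hY p hp
    rcases le_total y (Y p) with h | h
    · exact (s15_indep hτ hA hB hw hΛ hN hGd hG hp h y1 z2 y3 z4).symm
    · exact s15_indep hτ hA hB hw hΛ hN hGd hG hp h z1 y2 z3 y4
  refine ⟨fun p => s15I τ G (Y p) p, ?_, ?_, hrep⟩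
  · intro p hp
    obtain ⟨z1, z2, z3, z4⟩ := hY p hp
    have hp' : p ∈ s15D τ (A - Y p) (B - Y p) w := ⟨hp.1, by linarith, by linarith, hp.2.2.2⟩
    have hd := s15I_diff hτ hA hB hw hΛ hN hGd hG z1 z2 hp'
    refine (hd.congr_of_eventuallyEq ?_).differentiableWithinAt
    filter_upwards [(s15D_open τ (A - Y p) (B - Y p) w).mem_nhds hp',
      (s15D_open τ (A - τ.im) B w).mem_nhds hp] with q hq hq'
    have := hq.2.1
    have := hq.2.2.1
    exact hrep q hq' (Y p) z1 z2 (by linarith) (by linarith)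
  · intro p hp
    have hpl := hp.2.1
    have hpl2 := hp.2.2.1
    have hpU : p ∈ s15D τ (A - τ.im) B w := ⟨hp.1, by linarith, hp.2.2⟩
    have hφ : s15psi τ (-τ) p ∈ s15D τ (A - τ.im) B w :=
      s15psi_mem hτ0 hp (by simp; linarith) (by simp; linarith)
    obtain ⟨z1, z2, z3, z4⟩ := hY p hpU
    obtain ⟨v1, v2, v3, v4⟩ := hY _ hφ
    rw [s15l_psi τ _ hp.1] at v3
    refine s15_lineq hτ hA hB hw hΛ hN hGd hG hp z1 z2 z4 v1 v2 ?_
    simp at v3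
    linarith

end PartNine

section PartTen
open Set Metric Filter Topology MeasureTheory

variable {F : Type*} [NormedAddCommGroup F] [NormedSpace ℂ F]

/-- The linear theory: a priori estimate and solvability with constant `C`. -/
def s15Lin (F : Type*) [NormedAddCommGroup F] [NormedSpace ℂ F] (τ : ℂ) (N : ℕ) (A B w C : ℝ) :
    Prop :=
  ∀ Λ : ℝ, 0 ≤ Λ →
    (∀ (u E : ℂ × ℂ → F) (B0 : ℝ), DifferentiableOn ℂ u (s15D τ (A - τ.im) B w) →
      s15Bd u (s15D τ (A - τ.im) B w) B0 →
      (∀ p ∈ s15D τ A B w, u (s15psi τ (-τ) p) - u p = E p) →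
      (∀ p ∈ s15D τ A B w, ‖E p‖ ≤ Λ / ‖p.2‖ ^ N) →
      s15Est τ N u (s15D τ (A - τ.im) B w) (C * Λ)) ∧
    (∀ G : ℂ × ℂ → F, DifferentiableOn ℂ G (s15D τ A B w) →
      (∀ p ∈ s15D τ A B w, ‖G p‖ ≤ Λ / ‖p.2‖ ^ N) →
      ∃ u : ℂ × ℂ → F, DifferentiableOn ℂ u (s15D τ (A - τ.im) B w) ∧
        (∀ p ∈ s15D τ A B w, u (s15psi τ (-τ) p) - u p = G p) ∧
        s15Est τ N u (s15D τ (A - τ.im) B w) (C * Λ))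

theorem s15_pack [CompleteSpace F] {τ : ℂ} (hτ : 0 < τ.im) {A B L : ℝ} (hAB : A < B)
    (hA : -L ≤ A) (hB : B ≤ L) {N : ℕ} (hN : 4 ≤ N) :
    ∃ C : ℝ, 0 < C ∧ ∀ w : ℝ, 2 * L + 2 + 2 * ‖τ‖ ≤ w → s15Lin F τ N A B w C := by
  obtain ⟨C, hC, h⟩ := s15_est_of_rep (F := F) hτ hAB hN
  refine ⟨C, hC, fun w hw Λ hΛ => ⟨?_, ?_⟩⟩
  · intro u E B0 hud hub heq hE
    refine h w L Λ hA hB hw hΛ u E heq hE ?_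
    intro p hp y y1 y2 y3 y4
    exact s15_rep hτ hA hB hw hΛ hN hud hub heq hE hp y1 y2 y3 y4
  · intro G hGd hG
    obtain ⟨u, h1, h2, h3⟩ := s15_linear hτ hA hAB hB hw hΛ hN hGd hG
    exact ⟨u, h1, h2, h w L Λ hA hB hw hΛ u G h2 hG h3⟩

theorem s15Est_pt {τ : ℂ} {N : ℕ} (hN : 4 ≤ N) {D w : ℝ} (hD : 0 ≤ D) (hw : 1 ≤ w)
    {x : F} {p : ℂ × ℂ} (hp : w ≤ s15w τ p)
    (h : ‖x‖ ≤ D / s15w τ p ^ (N - 2) ∧ ‖x‖ * p.2.im ≤ D / s15w τ p ^ (N - 3)) :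
    ‖x‖ ≤ D / w ∧ (1 ≤ p.2.im → ‖x‖ * Real.sqrt p.2.im ≤ D / w) := by
  have key : ∀ k : ℕ, k ≠ 0 → D / s15w τ p ^ k ≤ D / w := by
    intro k hk
    have : s15w τ p ≤ s15w τ p ^ k := le_self_pow₀ (by linarith) hk
    gcongr
    linarith
  refine ⟨h.1.trans (key _ (by omega)), fun him => ?_⟩
  have : Real.sqrt p.2.im ≤ p.2.im := by
    rw [Real.sqrt_le_left (by linarith)]; nlinarith
  calc _ ≤ ‖x‖ * p.2.im := by gcongr
    _ ≤ _ := h.2.trans (key _ (by omega))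

theorem s15Est_Bd {τ : ℂ} {N : ℕ} (hN : 4 ≤ N) {D w A B : ℝ} (hD : 0 ≤ D) (hw : 1 ≤ w)
    {u : ℂ × ℂ → F} (h : s15Est τ N u (s15D τ A B w) D) : s15Bd u (s15D τ A B w) (D / w) :=
  fun p hp => s15Est_pt hN hD hw hp.2.2.2.le (h p hp)

theorem s15Bd_sub {u v : ℂ × ℂ → F} {W : Set (ℂ × ℂ)} {B0 B1 : ℝ} (hu : s15Bd u W B0)
    (hv : s15Bd v W B1) : s15Bd (fun p => u p - v p) W (B0 + B1) := by
  intro p hp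
  have h1 := hu p hp
  have h2 := hv p hp
  refine ⟨(norm_sub_le _ _).trans (by linarith), fun him => ?_⟩
  have := h1.2 him
  have := h2.2 him
  calc _ ≤ (‖u p‖ + ‖v p‖) * Real.sqrt p.2.im := by gcongr; exact norm_sub_le _ _
    _ ≤ _ := by rw [add_mul]; linarith

/-- Hypotheses on the nonlinearity. -/
structure s15NL (τ : ℂ) (N : ℕ) (A B w r Λ : ℝ) (G : ℂ × ℂ → F → F) : Prop where
  bd : ∀ p ∈ s15D τ A B w, ∀ v : F, ‖v‖ ≤ r → ‖G p v‖ ≤ Λ / ‖p.2‖ ^ N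
  lip : ∀ p ∈ s15D τ A B w, ∀ v v' : F, ‖v‖ ≤ r → ‖v'‖ ≤ r →
    ‖G p v - G p v'‖ ≤ Λ * ‖v - v'‖ / ‖p.2‖ ^ N
  diff : ∀ u : ℂ × ℂ → F, DifferentiableOn ℂ u (s15D τ A B w) →
    (∀ p ∈ s15D τ A B w, ‖u p‖ ≤ r) → DifferentiableOn ℂ (fun p => G p (u p)) (s15D τ A B w)

theorem s15_VU {τ : ℂ} (hτ : 0 < τ.im) (A B w : ℝ) :
    s15D τ A B w ⊆ s15D τ (A - τ.im) B w := fun x hx =>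
  ⟨hx.1, by linarith [hx.2.1], hx.2.2⟩

theorem s15_halve {τ : ℂ} (hτ : 0 < τ.im) {N : ℕ} (hN : 4 ≤ N) {A B w r Λ C : ℝ}
    {G : ℂ × ℂ → F → F} (hlin : s15Lin F τ N A B w C) (hG : s15NL τ N A B w r Λ G)
    (hC : 0 < C) (hΛ : 0 ≤ Λ) (hw : 1 ≤ w) (hsm : C * Λ / w ≤ 1 / 2)
    {u v u' v' : ℂ × ℂ → F} {B0 B1 κ : ℝ} (hκ : 0 ≤ κ)
    (hur : ∀ p ∈ s15D τ (A - τ.im) B w, ‖u p‖ ≤ r)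
    (hvr : ∀ p ∈ s15D τ (A - τ.im) B w, ‖v p‖ ≤ r)
    (hd : ∀ p ∈ s15D τ (A - τ.im) B w, ‖u p - v p‖ ≤ κ)
    (hu'd : DifferentiableOn ℂ u' (s15D τ (A - τ.im) B w))
    (hv'd : DifferentiableOn ℂ v' (s15D τ (A - τ.im) B w))
    (hu'b : s15Bd u' (s15D τ (A - τ.im) B w) B0)
    (hv'b : s15Bd v' (s15D τ (A - τ.im) B w) B1)
    (heu : ∀ p ∈ s15D τ A B w, u' (s15psi τ (-τ) p) - u' p = G p (u p))
    (hev : ∀ p ∈ s15D τ A B w, v' (s15psi τ (-τ) p) - v' p = G p (v p)) :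
    ∀ p ∈ s15D τ (A - τ.im) B w, ‖u' p - v' p‖ ≤ κ / 2 := by
  have hVU := s15_VU hτ A B w
  have h1 := (hlin (Λ * κ) (by positivity)).1 (fun p => u' p - v' p)
    (fun p => G p (u p) - G p (v p)) _ (hu'd.sub hv'd) (s15Bd_sub hu'b hv'b) ?_ ?_
  · have h2 := s15Est_Bd hN (by positivity) hw h1
    intro p hp
    refine (h2 p hp).1.trans ?_
    calc C * (Λ * κ) / w = (C * Λ / w) * κ := by ring
      _ ≤ 1 / 2 * κ := by gcongr
      _ = _ := by ring
  · intro p hp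
    rw [← heu p hp, ← hev p hp]; abel
  · intro p hp
    refine (hG.lip p hp _ _ (hur p (hVU hp)) (hvr p (hVU hp))).trans ?_
    have := hd p (hVU hp)
    gcongr

theorem s15_unique {τ : ℂ} (hτ : 0 < τ.im) {N : ℕ} (hN : 4 ≤ N) {A B w r Λ C : ℝ}
    {G : ℂ × ℂ → F → F} (hlin : s15Lin F τ N A B w C) (hG : s15NL τ N A B w r Λ G)
    (hC : 0 < C) (hΛ : 0 ≤ Λ) (hw : 1 ≤ w) (hsm : C * Λ / w ≤ 1 / 2) (hr : 0 ≤ r)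
    {u v : ℂ × ℂ → F} {B0 B1 : ℝ}
    (hur : ∀ p ∈ s15D τ (A - τ.im) B w, ‖u p‖ ≤ r)
    (hvr : ∀ p ∈ s15D τ (A - τ.im) B w, ‖v p‖ ≤ r)
    (hud : DifferentiableOn ℂ u (s15D τ (A - τ.im) B w))
    (hvd : DifferentiableOn ℂ v (s15D τ (A - τ.im) B w))
    (hub : s15Bd u (s15D τ (A - τ.im) B w) B0)
    (hvb : s15Bd v (s15D τ (A - τ.im) B w) B1)
    (heu : ∀ p ∈ s15D τ A B w, u (s15psi τ (-τ) p) - u p = G p (u p))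
    (hev : ∀ p ∈ s15D τ A B w, v (s15psi τ (-τ) p) - v p = G p (v p)) :
    ∀ p ∈ s15D τ (A - τ.im) B w, u p = v p := by
  have key : ∀ n : ℕ, ∀ p ∈ s15D τ (A - τ.im) B w, ‖u p - v p‖ ≤ 2 * r * (1 / 2) ^ n := by
    intro n
    induction n with
    | zero =>
      intro p hp
      have := norm_sub_le (u p) (v p)
      have := hur p hp
      have := hvr p hp
      simp; linarith
    | succ n ih =>
      intro p hp
      have := s15_halve hτ hN hlin hG hC hΛ hw hsm (κ := 2 * r * (1 / 2) ^ n) (by positivity)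
        hur hvr ih hud hvd hub hvb heu hev p hp
      refine this.trans (le_of_eq ?_)
      ring
  intro p hp
  have ht : Tendsto (fun n : ℕ => 2 * r * (1 / 2 : ℝ) ^ n) atTop (𝓝 (2 * r * 0)) :=
    (tendsto_pow_atTop_nhds_zero_of_lt_one (by norm_num) (by norm_num)).const_mul _
  rw [mul_zero] at ht
  have := ge_of_tendsto' ht (fun n => key n p hp)
  exact sub_eq_zero.1 (norm_le_zero_iff.1 this)

theorem s15_exist [CompleteSpace F] {τ : ℂ} (hτ : 0 < τ.im) {N : ℕ} (hN : 4 ≤ N)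
    {A B w r Λ C : ℝ}
    {G : ℂ × ℂ → F → F} (hlin : s15Lin F τ N A B w C) (hG : s15NL τ N A B w r Λ G)
    (hC : 0 < C) (hΛ : 0 ≤ Λ) (hw : 1 ≤ w) (hsm : C * Λ / w ≤ 1 / 2) (hr : 0 ≤ r)
    (hsr : C * Λ / w ≤ r) :
    ∃ u : ℂ × ℂ → F, DifferentiableOn ℂ u (s15D τ (A - τ.im) B w) ∧
      s15Est τ N u (s15D τ (A - τ.im) B w) (C * Λ) ∧
      (∀ p ∈ s15D τ (A - τ.im) B w, ‖u p‖ ≤ r) ∧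
      ∀ p ∈ s15D τ A B w, u (s15psi τ (-τ) p) - u p = G p (u p) := by
  have hτ0 : τ ≠ 0 := by rintro rfl; simp at hτ
  have hVU := s15_VU hτ A B w
  set U := s15D τ (A - τ.im) B w with hU
  have hCΛ : 0 ≤ C * Λ := by positivity
  let X := {u : ℂ × ℂ → F // DifferentiableOn ℂ u U ∧ ∀ p ∈ U, ‖u p‖ ≤ r}
  have hstep : ∀ u : X, ∃ u' : X, s15Est τ N u'.1 U (C * Λ) ∧
      ∀ p ∈ s15D τ A B w, u'.1 (s15psi τ (-τ) p) - u'.1 p = G p (u.1 p) := by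
    intro u
    obtain ⟨u', h1, h2, h3⟩ := (hlin Λ hΛ).2 (fun p => G p (u.1 p))
      (hG.diff _ (u.2.1.mono hVU) (fun p hp => u.2.2 p (hVU hp)))
      (fun p hp => hG.bd p hp _ (u.2.2 p (hVU hp)))
    refine ⟨⟨u', h1, fun p hp => ((s15Est_Bd hN hCΛ hw h3 p hp).1).trans hsr⟩, h3, h2⟩
  choose Φ hΦ1 hΦ2 using hstep
  let x0 : X := ⟨fun _ => 0, differentiableOn_const _, fun p _ => by simpa using hr⟩
  let s : ℕ → X := fun n => Φ^[n] x0
  have hs : ∀ n, s (n + 1) = Φ (s n) := fun n => Function.iterate_succ_apply' Φ n x0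
  have hest : ∀ n, s15Est τ N (s n).1 U (C * Λ) := by
    intro n
    cases n with
    | zero =>
      intro p hp
      have h0 : (s 0).1 p = 0 := rfl
      have : 0 ≤ s15w τ p := by have := hp.2.2.2; linarith
      rw [h0, norm_zero, zero_mul]
      constructor <;> positivity
    | succ n => rw [hs]; exact hΦ1 _
  have hdiff : ∀ n, ∀ p ∈ U, ‖(s (n + 1)).1 p - (s n).1 p‖ ≤ r * (1 / 2) ^ n := by
    intro n
    induction n with
    | zero =>
      intro p hp
      have h0 : (s 0).1 p = 0 := rfl
      rw [h0, sub_zero]; simpa using (s 1).2.2 p hp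
    | succ n ih =>
      intro p hp
      have h1 := hΦ2 (s (n + 1))
      have h2 := hΦ2 (s n)
      rw [← hs] at h1 h2
      have := s15_halve hτ hN hlin hG hC hΛ hw hsm (κ := r * (1 / 2) ^ n) (by positivity)
        (s (n + 1)).2.2 (s n).2.2 ih (s (n + 1 + 1)).2.1 (s (n + 1)).2.1
        (s15Est_Bd hN hCΛ hw (hest (n + 1 + 1))) (s15Est_Bd hN hCΛ hw (hest (n + 1))) h1 h2 p hp
      refine this.trans (le_of_eq ?_)
      ring
  have hsum : Summable (fun n : ℕ => r * (1 / 2 : ℝ) ^ n) :=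
    (summable_geometric_of_lt_one (by norm_num) (by norm_num)).mul_left _
  let u : ℂ × ℂ → F := fun p => ∑' n, ((s (n + 1)).1 p - (s n).1 p)
  have hlim : ∀ p ∈ U, Tendsto (fun n => (s n).1 p) atTop (𝓝 (u p)) := by
    intro p hp
    have hS : Summable (fun n => (s (n + 1)).1 p - (s n).1 p) :=
      Summable.of_norm_bounded hsum (fun n => hdiff n p hp)
    have := hS.hasSum.tendsto_sum_nat
    refine this.congr fun n => ?_
    rw [Finset.sum_range_sub (fun n => (s n).1 p)]
    have h0 : (s 0).1 p = 0 := rfl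
    rw [h0, sub_zero]
  have hur : ∀ p ∈ U, ‖u p‖ ≤ r := fun p hp =>
    le_of_tendsto' (hlim p hp).norm (fun n => (s n).2.2 p hp)
  refine ⟨u, ?_, ?_, hur, ?_⟩
  · exact s15_tsum (s15D_open _ _ _ _) hsum (fun n => (s (n + 1)).2.1.sub (s n).2.1)
      (fun n p hp => hdiff n p hp)
  · intro p hp
    exact ⟨le_of_tendsto' (hlim p hp).norm (fun n => (hest n p hp).1),
      le_of_tendsto' ((hlim p hp).norm.mul_const _) (fun n => (hest n p hp).2)⟩
  · intro p hp
    have hpl := hp.2.1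
    have hpl2 := hp.2.2.1
    have hφ : s15psi τ (-τ) p ∈ U :=
      s15psi_mem hτ0 hp (by simp; linarith) (by simp; linarith)
    have L1 : Tendsto (fun n => (s (n + 1)).1 (s15psi τ (-τ) p) - (s (n + 1)).1 p) atTop
        (𝓝 (u (s15psi τ (-τ) p) - u p)) :=
      ((hlim _ hφ).comp (tendsto_add_atTop_nat 1)).sub
        ((hlim _ (hVU hp)).comp (tendsto_add_atTop_nat 1))
    have L2 : Tendsto (fun n => G p ((s n).1 p)) atTop (𝓝 (G p (u p))) := by
      rw [tendsto_iff_norm_sub_tendsto_zero]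
      have h3 := tendsto_iff_norm_sub_tendsto_zero.1 (hlim p (hVU hp))
      have h4 : Tendsto (fun n => Λ * ‖(s n).1 p - u p‖ / ‖p.2‖ ^ N) atTop (𝓝 0) := by
        have := (h3.const_mul Λ).div_const (‖p.2‖ ^ N)
        simpa using this
      exact squeeze_zero (fun n => norm_nonneg _)
        (fun n => hG.lip p hp _ _ ((s n).2.2 p (hVU hp)) (hur p (hVU hp))) h4
    refine tendsto_nhds_unique L1 (L2.congr fun n => ?_)
    rw [hs, hΦ2 (s n) p hp]

end PartTen

section PartEleven
open Set Metric Filter Topology MeasureTheory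

/-- The nonlinearity, with unknown `v = (h, g)`. -/
noncomputable def s15G (Δ₁ Δ₂ : ℂ × ℂ → ℂ) (p : ℂ × ℂ) (v : ℂ × ℂ) : ℂ × ℂ :=
  (Δ₂ (p.1 * (1 + v.2), p.2 + v.1), (1 + v.2) * Δ₁ (p.1 * (1 + v.2), p.2 + v.1))

/-- Level of a radius. -/
noncomputable def s15lev (a : ℝ) : ℝ := Real.log a / (2 * Real.pi)

theorem s15lev_lt {a : ℝ} (ha : 0 < a) {p : ℂ × ℂ} (hp : p.1 ≠ 0) :
    s15lev a < s15l p ↔ a < ‖p.1‖ := by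
  unfold s15lev s15l
  rw [div_lt_div_iff_of_pos_right (by positivity), Real.log_lt_log_iff ha (norm_pos_iff.2 hp)]

theorem s15lt_lev {a : ℝ} (ha : 0 < a) {p : ℂ × ℂ} (hp : p.1 ≠ 0) :
    s15l p < s15lev a ↔ ‖p.1‖ < a := by
  unfold s15lev s15l
  rw [div_lt_div_iff_of_pos_right (by positivity), Real.log_lt_log_iff (norm_pos_iff.2 hp) ha]

theorem s15_omega_int (τ : ℂ) (a b R₀ : ℝ) {p : ℂ × ℂ}
    (h1 : ‖Complex.exp (2 * (Real.pi : ℂ) * Complex.I * τ)‖ * a / 2 < ‖p.1‖)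
    (h2 : ‖p.1‖ < 2 * b) (h3 : R₀ < ‖p.2‖) : p ∈ interior (omegaDom τ a b R₀) := by
  rw [mem_interior]
  refine ⟨{p | ‖Complex.exp (2 * (Real.pi : ℂ) * Complex.I * τ)‖ * a / 2 < ‖p.1‖} ∩
    ({p | ‖p.1‖ < 2 * b} ∩ {p | R₀ < ‖p.2‖}), ?_, ?_, ⟨h1, h2, h3⟩⟩
  · rintro x ⟨h1, h2, h3⟩
    exact ⟨le_of_lt h1, le_of_lt h2, le_of_lt h3⟩
  · refine (isOpen_lt continuous_const continuous_fst.norm).inter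
      ((isOpen_lt continuous_fst.norm continuous_const).inter
        (isOpen_lt continuous_const continuous_snd.norm))

theorem s15_xi_large {τ : ℂ} (hτ : τ ≠ 0) {A B w L R : ℝ} (hA : -L ≤ A) (hB : B ≤ L)
    (hw : 2 * L + 2 + 2 * ‖τ‖ ≤ w) (hw2 : 2 * ‖τ‖ * R ≤ w) {p : ℂ × ℂ} (hp : p ∈ s15D τ A B w) :
    R < ‖p.2‖ := by
  have h1 := (s15_low hτ hA hB hw hp).1
  have h2 := hp.2.2.2
  have hn : 0 < ‖τ‖ := norm_pos_iff.2 hτ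
  have h5 : (τ * p.2).im ≤ ‖τ‖ * ‖p.2‖ := by
    rw [← norm_mul]; exact (le_abs_self _).trans (Complex.abs_im_le_norm _)
  by_contra h
  push Not at h
  nlinarith

/-- Basic facts on the perturbed arguments. -/
theorem s15_arg {τ : ℂ} {a b R₀ a' b' ρ : ℝ} {z ξ : ℂ} {v : ℂ × ℂ}
    (h1 : ‖Complex.exp (2 * (Real.pi : ℂ) * Complex.I * τ)‖ * a / 2 < a' * (1 - ρ))
    (h2 : b' * (1 + ρ) < 2 * b) (hρ : ρ ≤ 1) (ha' : a' ≤ ‖z‖) (hb' : ‖z‖ ≤ b')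
    (hξ : R₀ + 2 < ‖ξ‖) (hR₀ : 0 < R₀) (hv : ‖v‖ ≤ ρ) :
    (z * (1 + v.2), ξ + v.1) ∈ interior (omegaDom τ a b R₀) ∧ ‖ξ‖ / 2 ≤ ‖ξ + v.1‖ ∧
      ‖1 + v.2‖ ≤ 2 := by
  have hv1 : ‖v.1‖ ≤ ρ := (norm_fst_le v).trans hv
  have hv2 : ‖v.2‖ ≤ ρ := (norm_snd_le v).trans hv
  have e1 : 1 - ρ ≤ ‖1 + v.2‖ := by
    have := norm_sub_le_norm_add (1 : ℂ) v.2
    rw [norm_one] at this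
    linarith
  have e2 : ‖1 + v.2‖ ≤ 1 + ρ := by
    have := norm_add_le (1 : ℂ) v.2
    rw [norm_one] at this
    linarith
  have e3 : ‖ξ‖ - 1 ≤ ‖ξ + v.1‖ := by
    have := norm_sub_le_norm_add ξ v.1
    linarith
  have hz := norm_nonneg z
  have h0 := norm_nonneg v
  refine ⟨s15_omega_int _ _ _ _ ?_ ?_ ?_, by linarith, by linarith⟩
  · simp only [norm_mul]
    refine h1.trans_le ?_
    calc a' * (1 - ρ) ≤ ‖z‖ * (1 - ρ) := by
          apply mul_le_mul_of_nonneg_right ha'; linarith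
      _ ≤ _ := by gcongr
  · simp only [norm_mul]
    refine lt_of_le_of_lt ?_ h2
    calc ‖z‖ * ‖1 + v.2‖ ≤ ‖z‖ * (1 + ρ) := by gcongr
      _ ≤ _ := by gcongr; linarith
  · simp only; linarith

theorem s15_Gbd {Δ₁ Δ₂ : ℂ × ℂ → ℂ} {τ : ℂ} {a b R₀ M : ℝ} {N : ℕ} (hM : 0 < M)
    (hΔ₁b : ∀ p ∈ omegaDom τ a b R₀, ‖Δ₁ p‖ ≤ M / ‖p.2‖ ^ N)
    (hΔ₂b : ∀ p ∈ omegaDom τ a b R₀, ‖Δ₂ p‖ ≤ M / ‖p.2‖ ^ N) {p v : ℂ × ℂ}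
    (hξ : 0 < ‖p.2‖)
    (h : (p.1 * (1 + v.2), p.2 + v.1) ∈ interior (omegaDom τ a b R₀) ∧
      ‖p.2‖ / 2 ≤ ‖p.2 + v.1‖ ∧ ‖1 + v.2‖ ≤ 2) :
    ‖s15G Δ₁ Δ₂ p v‖ ≤ (2 * 2 ^ N * M) / ‖p.2‖ ^ N := by
  obtain ⟨h1, h2, h3⟩ := h
  have h1' := interior_subset h1
  have d1 := hΔ₁b _ h1'
  have d2 := hΔ₂b _ h1'
  have hb : M / ‖p.2 + v.1‖ ^ N ≤ 2 ^ N * M / ‖p.2‖ ^ N := by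
    calc M / ‖p.2 + v.1‖ ^ N ≤ M / (‖p.2‖ / 2) ^ N := by gcongr
      _ = _ := by rw [div_pow]; field_simp
  have hX : 0 ≤ 2 ^ N * M / ‖p.2‖ ^ N := by positivity
  have e : 2 * 2 ^ N * M / ‖p.2‖ ^ N = 2 * (2 ^ N * M / ‖p.2‖ ^ N) := by ring
  rw [e]
  unfold s15G
  rw [Prod.norm_mk]
  refine max_le ?_ ?_
  · have := d2.trans hb
    linarith
  · rw [norm_mul]
    have := d1.trans hb
    gcongr

theorem s15_NL {Δ₁ Δ₂ : ℂ × ℂ → ℂ} {τ : ℂ} (hτ : 0 < τ.im) {a b R₀ M : ℝ} {N : ℕ} (hM : 0 < M)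
    (hR₀ : 0 < R₀)
    (hΔ₁d : DifferentiableOn ℂ Δ₁ (interior (omegaDom τ a b R₀)))
    (hΔ₂d : DifferentiableOn ℂ Δ₂ (interior (omegaDom τ a b R₀)))
    (hΔ₁b : ∀ p ∈ omegaDom τ a b R₀, ‖Δ₁ p‖ ≤ M / ‖p.2‖ ^ N)
    (hΔ₂b : ∀ p ∈ omegaDom τ a b R₀, ‖Δ₂ p‖ ≤ M / ‖p.2‖ ^ N)
    {a' b' r η w L : ℝ} (ha' : 0 < a') (hb' : 0 < b') (hη : 0 < η) (hrη : r + η ≤ 1)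
    (h1 : ‖Complex.exp (2 * (Real.pi : ℂ) * Complex.I * τ)‖ * a / 2 < a' * (1 - (r + η)))
    (h2 : b' * (1 + (r + η)) < 2 * b)
    (hA : -L ≤ s15lev a') (hB : s15lev b' ≤ L) (hw : 2 * L + 2 + 2 * ‖τ‖ ≤ w)
    (hw2 : 2 * ‖τ‖ * (R₀ + 2) ≤ w) :
    s15NL τ N (s15lev a') (s15lev b') w r (2 * 2 ^ N * M * (1 + 2 / η)) (s15G Δ₁ Δ₂) := by
  have hτ0 : τ ≠ 0 := by rintro rfl; simp at hτ
  have harg : ∀ p ∈ s15D τ (s15lev a') (s15lev b') w, ∀ v : ℂ × ℂ, ‖v‖ ≤ r + η →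
      (p.1 * (1 + v.2), p.2 + v.1) ∈ interior (omegaDom τ a b R₀) ∧
      ‖p.2‖ / 2 ≤ ‖p.2 + v.1‖ ∧ ‖1 + v.2‖ ≤ 2 := fun p hp v hv =>
    s15_arg h1 h2 hrη ((s15lev_lt ha' hp.1).1 hp.2.1).le ((s15lt_lev hb' hp.1).1 hp.2.2.1).le
      (s15_xi_large hτ0 hA hB hw hw2 hp) hR₀ hv
  have hpos : ∀ p ∈ s15D τ (s15lev a') (s15lev b') w, 0 < ‖p.2‖ := fun p hp => by
    have := s15_xi_large hτ0 hA hB hw hw2 hp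
    linarith
  have hη2 : 0 < 2 / η := by positivity
  have hΛ0 : 0 < 2 * 2 ^ N * M := by positivity
  refine ⟨?_, ?_, ?_⟩
  · intro p hp v hv
    have := hpos p hp
    refine (s15_Gbd hM hΔ₁b hΔ₂b this (harg p hp v (by linarith))).trans ?_
    rw [div_le_div_iff_of_pos_right (by positivity)]
    nlinarith
  · intro p hp v v' hv hv'
    have hx := hpos p hp
    have hlip := s15_lip (f := s15G Δ₁ Δ₂ p) (c := (0 : ℂ × ℂ)) (r := r) (η := η)
      (B := (2 * 2 ^ N * M) / ‖p.2‖ ^ N) hη ?_ ?_ (x := v') (y := v) (by simpa using hv')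
      (by simpa using hv)
    · refine hlip.trans ?_
      have e : 2 * (2 * 2 ^ N * M / ‖p.2‖ ^ N) / η * ‖v - v'‖ =
        (2 * 2 ^ N * M * (2 / η)) * ‖v - v'‖ / ‖p.2‖ ^ N := by ring
      rw [e]
      gcongr
      linarith
    · intro x hx
      have hx' : ‖x‖ ≤ r + η := by simpa using (le_of_lt (by simpa using hx : ‖x‖ < r + η))
      have hm := (harg p hp x hx').1
      have e1 := (hΔ₁d _ hm).differentiableAt (isOpen_interior.mem_nhds hm)
      have e2 := (hΔ₂d _ hm).differentiableAt (isOpen_interior.mem_nhds hm)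
      have ea : DifferentiableAt ℂ (fun v : ℂ × ℂ => (p.1 * (1 + v.2), p.2 + v.1)) x := by
        fun_prop
      have f1 := DifferentiableAt.comp x (g := Δ₁)
        (f := fun v : ℂ × ℂ => (p.1 * (1 + v.2), p.2 + v.1)) e1 ea
      have f2 := DifferentiableAt.comp x (g := Δ₂)
        (f := fun v : ℂ × ℂ => (p.1 * (1 + v.2), p.2 + v.1)) e2 ea
      have f3 : DifferentiableAt ℂ (fun v : ℂ × ℂ => 1 + v.2) x := by fun_prop
      exact (f2.prodMk (f3.mul f1)).differentiableWithinAt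
    · intro x hx
      have hx' : ‖x‖ ≤ r + η := by simpa using (le_of_lt (by simpa using hx : ‖x‖ < r + η))
      exact s15_Gbd hM hΔ₁b hΔ₂b (hpos p hp) (harg p hp x hx')
  · intro u hud hur p hp
    have hm := (harg p hp (u p) (by linarith [hur p hp])).1
    have e1 := (hΔ₁d _ hm).differentiableAt (isOpen_interior.mem_nhds hm)
    have e2 := (hΔ₂d _ hm).differentiableAt (isOpen_interior.mem_nhds hm)
    have eu := (hud p hp).differentiableAt ((s15D_open _ _ _ _).mem_nhds hp)
    have ea : DifferentiableAt ℂ (fun q : ℂ × ℂ => (q.1 * (1 + (u q).2), q.2 + (u q).1)) p := by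
      fun_prop
    have f1 := DifferentiableAt.comp p (g := Δ₁)
      (f := fun q : ℂ × ℂ => (q.1 * (1 + (u q).2), q.2 + (u q).1)) e1 ea
    have f2 := DifferentiableAt.comp p (g := Δ₂)
      (f := fun q : ℂ × ℂ => (q.1 * (1 + (u q).2), q.2 + (u q).1)) e2 ea
    have f3 : DifferentiableAt ℂ (fun q : ℂ × ℂ => 1 + (u q).2) p := by fun_prop
    exact (f2.prodMk (f3.mul f1)).differentiableWithinAt

end PartEleven

section PartTwelve
open Set Metric Filter Topology MeasureTheory

theorem s15_q (τ : ℂ) : ‖Complex.exp (2 * (Real.pi : ℂ) * Complex.I * τ)‖ =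
    Real.exp (-(2 * Real.pi * τ.im)) := by
  rw [Complex.norm_exp]
  congr 1
  have : 2 * (Real.pi : ℂ) * Complex.I * τ = ((2 * Real.pi : ℝ) : ℂ) * (Complex.I * τ) := by
    push_cast; ring
  rw [this, Complex.re_ofReal_mul]; simp

theorem s15lev_q (τ : ℂ) {a : ℝ} (ha : 0 < a) :
    s15lev (‖Complex.exp (2 * (Real.pi : ℂ) * Complex.I * τ)‖ * a) = s15lev a - τ.im := by
  unfold s15lev
  rw [s15_q, Real.log_mul (Real.exp_ne_zero _) ha.ne', Real.log_exp]
  have := Real.pi_pos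
  field_simp
  ring

theorem s15lev_le {a : ℝ} (ha : 0 < a) {p : ℂ × ℂ} (hp : p.1 ≠ 0) :
    s15lev a ≤ s15l p ↔ a ≤ ‖p.1‖ := by
  rw [← not_lt, s15lt_lev ha hp, not_lt]

theorem s15le_lev {a : ℝ} (ha : 0 < a) {p : ℂ × ℂ} (hp : p.1 ≠ 0) :
    s15l p ≤ s15lev a ↔ ‖p.1‖ ≤ a := by
  rw [← not_lt, s15lev_lt ha hp, not_lt]

theorem s15lev_mono {a b : ℝ} (ha : 0 < a) (h : a < b) : s15lev a < s15lev b := by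
  unfold s15lev
  have := Real.log_lt_log ha h
  have := Real.pi_pos
  gcongr

theorem s15_wnorm (τ : ℂ) {p : ℂ × ℂ} (hp : p.1 ≠ 0) :
    ‖p.1 * Complex.exp (2 * (Real.pi : ℂ) * Complex.I * τ * p.2)‖ =
      Real.exp (-(2 * Real.pi * s15w τ p)) := by
  have hpi := Real.pi_pos
  rw [norm_mul, mul_assoc _ τ, s15_q, s15w, s15l]
  have h0 : 0 < ‖p.1‖ := norm_pos_iff.2 hp
  have : -(2 * Real.pi * ((τ * p.2).im - Real.log ‖p.1‖ / (2 * Real.pi))) =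
      Real.log ‖p.1‖ + -(2 * Real.pi * (τ * p.2).im) := by field_simp; ring
  rw [this, Real.exp_add, Real.exp_log h0]

theorem s15w_le {τ : ℂ} {δ : ℝ} (hδ : 0 < δ) {p : ℂ × ℂ} (hp : p.1 ≠ 0) :
    ‖p.1 * Complex.exp (2 * (Real.pi : ℂ) * Complex.I * τ * p.2)‖ ≤ δ ↔
      -s15lev δ ≤ s15w τ p := by
  have hpi := Real.pi_pos
  rw [s15_wnorm τ hp, ← Real.le_log_iff_exp_le hδ, s15lev, neg_le, ← neg_div,
    div_le_iff₀ (by positivity)]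
  constructor <;> intro h <;> linarith

theorem s15_S' {τ : ℂ} {a b δ : ℝ} (ha : 0 < a) (hb : 0 < b) (hδ : 0 < δ) {p : ℂ × ℂ} :
    p ∈ sectDom' τ a b δ ↔ p.1 ≠ 0 ∧ s15lev a - τ.im ≤ s15l p ∧ s15l p ≤ s15lev b ∧
      -s15lev δ ≤ s15w τ p := by
  have hq : 0 < ‖Complex.exp (2 * (Real.pi : ℂ) * Complex.I * τ)‖ * a := by
    rw [s15_q]; positivity
  rw [← s15lev_q τ ha]
  constructor
  · rintro ⟨h1, h2, h3⟩
    have hp : p.1 ≠ 0 := norm_pos_iff.1 (hq.trans_le h1)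
    exact ⟨hp, (s15lev_le hq hp).2 h1, (s15le_lev hb hp).2 h2, (s15w_le hδ hp).1 h3⟩
  · rintro ⟨hp, h1, h2, h3⟩
    exact ⟨(s15lev_le hq hp).1 h1, (s15le_lev hb hp).1 h2, (s15w_le hδ hp).2 h3⟩

theorem s15_S {τ : ℂ} {a b δ : ℝ} (ha : 0 < a) (hb : 0 < b) (hδ : 0 < δ) {p : ℂ × ℂ} :
    p ∈ sectDom τ a b δ ↔ p.1 ≠ 0 ∧ s15lev a ≤ s15l p ∧ s15l p ≤ s15lev b ∧
      -s15lev δ ≤ s15w τ p := by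
  constructor
  · rintro ⟨h1, h2, h3⟩
    have hp : p.1 ≠ 0 := norm_pos_iff.1 (ha.trans_le h1)
    exact ⟨hp, (s15lev_le ha hp).2 h1, (s15le_lev hb hp).2 h2, (s15w_le hδ hp).1 h3⟩
  · rintro ⟨hp, h1, h2, h3⟩
    exact ⟨(s15lev_le ha hp).1 h1, (s15le_lev hb hp).1 h2, (s15w_le hδ hp).2 h3⟩

theorem s15_closure {τ : ℂ} (hτ : τ ≠ 0) {A B w : ℝ} (hAB : A < B) {p : ℂ × ℂ} (hp : p.1 ≠ 0)
    (h1 : A ≤ s15l p) (h2 : s15l p ≤ B) (h3 : w ≤ s15w τ p) : p ∈ closure (s15D τ A B w) := by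
  set c : ℝ := (A + B) / 2 - s15l p with hc
  -- move along the flow and then upwards in `ξ`
  let f : ℝ → ℂ × ℂ := fun t =>
    ((s15psi τ ((t * c : ℝ) * I) p).1, (s15psi τ ((t * c : ℝ) * I) p).2 + (t : ℂ) * I / τ)
  have hf : Continuous f := by
    simp only [f, s15psi]; fun_prop
  have hf0 : f 0 = p := by simp [f, s15psi]
  have ht : Tendsto f (𝓝[>] 0) (𝓝 p) := by
    have := (hf.tendsto 0).mono_left (nhdsWithin_le_nhds (s := Ioi 0))
    rwa [hf0] at this
  refine mem_closure_of_tendsto ht ?_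
  filter_upwards [Ioo_mem_nhdsGT (zero_lt_one (α := ℝ))] with t ht
  have hl : s15l (f t) = s15l p + t * c := by
    have := s15l_psi τ ((t * c : ℝ) * I) hp
    have e : (((t * c : ℝ) : ℂ) * I).im = t * c := by simp
    rw [e] at this
    rw [← this]
    rfl
  have hwf : s15w τ (f t) = s15w τ p + t := by
    have := s15w_psi hτ ((t * c : ℝ) * I) hp
    rw [← this]
    have e : s15l (f t) = s15l (s15psi τ ((t * c : ℝ) * I) p) := rfl
    unfold s15w
    rw [e]
    simp only [f]
    have : τ * ((s15psi τ ((t * c : ℝ) * I) p).2 + (t : ℂ) * I / τ) =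
      τ * (s15psi τ ((t * c : ℝ) * I) p).2 + (t : ℂ) * I := by field_simp
    rw [this, Complex.add_im]
    simp
    ring
  obtain ⟨t0, t1⟩ := ht
  refine ⟨s15psi_ne τ _ hp, ?_, ?_, by rw [hwf]; linarith⟩
  · rw [hl, hc]; nlinarith
  · rw [hl, hc]; nlinarith

theorem s15_sin {θ α : ℝ} (h0 : 0 < θ) (h1 : θ ≤ α) (h2 : α ≤ Real.pi - θ) :
    Real.sin θ ≤ Real.sin α := by
  rcases le_total α (Real.pi / 2) with h | h
  · exact Real.sin_le_sin_of_le_of_le_pi_div_two (by linarith [Real.pi_pos]) h h1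
  · rw [← Real.sin_pi_sub α]
    exact Real.sin_le_sin_of_le_of_le_pi_div_two (by linarith [Real.pi_pos]) (by linarith)
      (by linarith)

theorem s15_im_polar (τ ξ : ℂ) : (τ * ξ).im = ‖τ‖ * ‖ξ‖ * Real.sin (ξ.arg + τ.arg) := by
  rw [Complex.mul_im, Real.sin_add]
  have h1 := Complex.norm_mul_cos_arg τ
  have h2 := Complex.norm_mul_sin_arg τ
  have h3 := Complex.norm_mul_cos_arg ξ
  have h4 := Complex.norm_mul_sin_arg ξ
  calc τ.re * ξ.im + τ.im * ξ.re = (‖τ‖ * Real.cos τ.arg) * (‖ξ‖ * Real.sin ξ.arg) +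
      (‖τ‖ * Real.sin τ.arg) * (‖ξ‖ * Real.cos ξ.arg) := by rw [h1, h2, h3, h4]
    _ = _ := by ring

theorem s15_sector {τ : ℂ} (hτ : τ ≠ 0) {N m : ℕ} (hmN : m < N) {θ K x : ℝ} (hK : 0 ≤ K)
    (h0 : 0 < θ) (hθ : θ ≤ Real.pi / 2) {p : ℂ × ℂ}
    (hx : x ≤ K / s15w τ p ^ (N - 2)) (hw : 1 ≤ s15w τ p) (hI : (τ * p.2).im ≤ 2 * s15w τ p)
    (hξ : 0 < ‖p.2‖)
    (h1 : θ - Complex.arg τ ≤ Complex.arg p.2)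
    (h2 : Complex.arg p.2 ≤ Real.pi - θ - Complex.arg τ) :
    x ≤ K * (2 / (‖τ‖ * Real.sin θ)) ^ (m - 2) / ‖p.2‖ ^ (m - 2) := by
  have hn : 0 < ‖τ‖ := norm_pos_iff.2 hτ
  have hs : 0 < Real.sin θ := Real.sin_pos_of_pos_of_lt_pi h0 (by linarith [Real.pi_pos])
  have hs2 : Real.sin θ ≤ Real.sin (p.2.arg + τ.arg) := s15_sin h0 (by linarith) (by linarith)
  have h3 : ‖τ‖ * ‖p.2‖ * Real.sin θ ≤ 2 * s15w τ p := by
    refine le_trans ?_ hI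
    rw [s15_im_polar]
    gcongr
  have h4 : ‖τ‖ * Real.sin θ / 2 * ‖p.2‖ ≤ s15w τ p := by linarith
  have h5 : (‖τ‖ * Real.sin θ / 2 * ‖p.2‖) ^ (m - 2) ≤ s15w τ p ^ (N - 2) := by
    calc _ ≤ s15w τ p ^ (m - 2) := by gcongr
      _ ≤ _ := pow_le_pow_right₀ hw (by omega)
  refine hx.trans ?_
  calc K / s15w τ p ^ (N - 2) ≤ K / (‖τ‖ * Real.sin θ / 2 * ‖p.2‖) ^ (m - 2) := by gcongr
    _ = _ := by
      rw [mul_pow, div_mul_eq_div_div, div_eq_mul_inv K, ← inv_pow, inv_div]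

end PartTwelve

section PartThirteen
open Set Metric Filter Topology MeasureTheory

theorem s15_interior {τ : ℂ} {a b δ : ℝ} (ha : 0 < a) (hb : 0 < b) (hδ : 0 < δ) :
    s15D τ (s15lev a - τ.im) (s15lev b) (-s15lev δ) ⊆ interior (sectDom' τ a b δ) := by
  rw [(s15D_open τ _ _ _).subset_interior_iff]
  intro p hp
  exact (s15_S' ha hb hδ).2 ⟨hp.1, hp.2.1.le, hp.2.2.1.le, hp.2.2.2.le⟩

/-- pointwise bounds from `nprime`. -/
theorem s15_nprime_pt {S : Set (ℂ × ℂ)} {u v : ℂ × ℂ → ℂ}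
    (h1 : BddAbove ((fun p : ℂ × ℂ => ‖u p‖) '' S))
    (h2 : BddAbove ((fun p : ℂ × ℂ => ‖u p‖ * Real.sqrt p.2.im) ''
      (S ∩ {p : ℂ × ℂ | 1 ≤ p.2.im}))) {c : ℝ}
    (h : nprime S u + nprime S v ≤ c) : s15Bd u S c := by
  have e : ∀ w : ℂ × ℂ → ℂ, 0 ≤ sSup ((fun p : ℂ × ℂ => ‖w p‖) '' S) := fun w => by
    apply Real.sSup_nonneg
    rintro _ ⟨p, -, rfl⟩
    exact norm_nonneg _
  have e' : ∀ w : ℂ × ℂ → ℂ, 0 ≤ sSup ((fun p : ℂ × ℂ => ‖w p‖ * Real.sqrt p.2.im) ''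
      (S ∩ {p : ℂ × ℂ | 1 ≤ p.2.im})) := fun w => by
    apply Real.sSup_nonneg
    rintro _ ⟨p, -, rfl⟩
    positivity
  have a1 := e u
  have a2 := e v
  have a3 := e' u
  have a4 := e' v
  unfold nprime at h
  intro p hp
  constructor
  · have := le_csSup h1 (mem_image_of_mem _ hp)
    linarith
  · intro hi
    have := le_csSup h2 (mem_image_of_mem _ (⟨hp, hi⟩ : p ∈ S ∩ {p : ℂ × ℂ | 1 ≤ p.2.im}))
    linarith

theorem s15_nprime_le {S : Set (ℂ × ℂ)} {u : ℂ × ℂ → ℂ} {c : ℝ} (hc : 0 ≤ c) (h : s15Bd u S c) :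
    BddAbove ((fun p : ℂ × ℂ => ‖u p‖) '' S) ∧
    BddAbove ((fun p : ℂ × ℂ => ‖u p‖ * Real.sqrt p.2.im) ''
      (S ∩ {p : ℂ × ℂ | 1 ≤ p.2.im})) ∧ nprime S u ≤ 2 * c := by
  have h1 : ∀ x ∈ ((fun p : ℂ × ℂ => ‖u p‖) '' S), x ≤ c := by
    rintro _ ⟨p, hp, rfl⟩
    exact (h p hp).1
  have h2 : ∀ x ∈ ((fun p : ℂ × ℂ => ‖u p‖ * Real.sqrt p.2.im) ''
      (S ∩ {p : ℂ × ℂ | 1 ≤ p.2.im})), x ≤ c := by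
    rintro _ ⟨p, hp, rfl⟩
    exact (h p hp.1).2 hp.2
  refine ⟨⟨c, h1⟩, ⟨c, h2⟩, ?_⟩
  unfold nprime
  have := Real.sSup_le h1 hc
  have := Real.sSup_le h2 hc
  linarith

theorem s15_nprime_congr {S : Set (ℂ × ℂ)} {u v : ℂ × ℂ → ℂ} (h : ∀ p ∈ S, u p = v p) :
    nprime S u = nprime S v := by
  unfold nprime
  congr 2
  · exact image_congr fun p hp => by simp only [h p hp]
  · exact image_congr fun p hp => by simp only [h p hp.1]

theorem s15_sol_data {τ : ℂ} (hτ : 0 < τ.im) {a b R₀ δ : ℝ} (ha : 0 < a) (hb : 0 < b) (hδ : 0 < δ)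
    {Δ₁ Δ₂ h g : ℂ × ℂ → ℂ} (H : pairSolProp τ a b R₀ δ Δ₁ Δ₂ h g) :
    (∀ p ∈ s15D τ (s15lev a - τ.im) (s15lev b) (-s15lev δ), ‖((h p, g p) : ℂ × ℂ)‖ ≤ 1 / 2) ∧
    DifferentiableOn ℂ (fun p => ((h p, g p) : ℂ × ℂ))
      (s15D τ (s15lev a - τ.im) (s15lev b) (-s15lev δ)) ∧
    s15Bd (fun p => ((h p, g p) : ℂ × ℂ)) (s15D τ (s15lev a - τ.im) (s15lev b) (-s15lev δ)) (1 / 2) ∧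
    (∀ p ∈ s15D τ (s15lev a) (s15lev b) (-s15lev δ),
      (fun p => ((h p, g p) : ℂ × ℂ)) (s15psi τ (-τ) p) - (fun p => ((h p, g p) : ℂ × ℂ)) p =
        s15G Δ₁ Δ₂ p (h p, g p)) := by
  have hτ0 : τ ≠ 0 := by rintro rfl; simp at hτ
  obtain ⟨hc, hd, gc, gd, b1, b2, b3, b4, hs, heq⟩ := H
  have hsub := s15_interior (τ := τ) ha hb hδ
  have B1 := s15_nprime_pt b1 b2 hs
  have B2 := s15_nprime_pt (v := h) b3 b4 (c := 1 / 2) (by linarith)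
  have hB : s15Bd (fun p => ((h p, g p) : ℂ × ℂ))
      (s15D τ (s15lev a - τ.im) (s15lev b) (-s15lev δ)) (1 / 2) := by
    intro p hp
    have hp' := interior_subset (hsub hp)
    refine ⟨max_le (B1 p hp').1 (B2 p hp').1, fun hi => ?_⟩
    rcases max_choice ‖h p‖ ‖g p‖ with hh | hh <;> simp only [Prod.norm_def, hh]
    · exact (B1 p hp').2 hi
    · exact (B2 p hp').2 hi
  refine ⟨fun p hp => (hB p hp).1, (hd.mono hsub).prodMk (gd.mono hsub), hB, ?_⟩
  intro p hp
  have hpS : p ∈ sectDom τ a b δ :=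
    (s15_S ha hb hδ).2 ⟨hp.1, hp.2.1.le, hp.2.2.1.le, hp.2.2.2.le⟩
  obtain ⟨-, e1, e2⟩ := heq p hpS
  simp only [s15psi_tau hτ0, s15G, Prod.mk_sub_mk, e1, e2]

/-- Uniqueness. -/
theorem s15_sol_unique {τ : ℂ} (hτ : 0 < τ.im) {N : ℕ} (hN : 4 ≤ N) {a b R₀ δ C Λ : ℝ}
    (ha : 0 < a) (hb : 0 < b) (hab : a < b)
    (hδ : 0 < δ) {Δ₁ Δ₂ h g h' g' : ℂ × ℂ → ℂ}
    (hlin : s15Lin (ℂ × ℂ) τ N (s15lev a) (s15lev b) (-s15lev δ) C)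
    (hG : s15NL τ N (s15lev a) (s15lev b) (-s15lev δ) (1 / 2) Λ (s15G Δ₁ Δ₂))
    (hC : 0 < C) (hΛ : 0 ≤ Λ) (hw : 1 ≤ -s15lev δ) (hsm : C * Λ / (-s15lev δ) ≤ 1 / 2)
    (H : pairSolProp τ a b R₀ δ Δ₁ Δ₂ h g) (H' : pairSolProp τ a b R₀ δ Δ₁ Δ₂ h' g') :
    ∀ p ∈ sectDom' τ a b δ, h' p = h p ∧ g' p = g p := by
  have hτ0 : τ ≠ 0 := by rintro rfl; simp at hτ
  obtain ⟨r1, d1, b1, e1⟩ := s15_sol_data hτ ha hb hδ H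
  obtain ⟨r2, d2, b2, e2⟩ := s15_sol_data hτ ha hb hδ H'
  have key := s15_unique hτ hN hlin hG hC hΛ hw hsm (by norm_num) r2 r1 d2 d1 b2 b1 e2 e1
  have hsub := (s15_interior (τ := τ) ha hb hδ).trans interior_subset
  have hcl : sectDom' τ a b δ ⊆
      closure (s15D τ (s15lev a - τ.im) (s15lev b) (-s15lev δ)) := by
    intro p hp
    obtain ⟨p0, p1, p2, p3⟩ := (s15_S' ha hb hδ).1 hp
    refine s15_closure hτ0 ?_ p0 p1 p2 p3
    have := s15lev_mono ha hab
    linarith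
  have k1 : EqOn h' h (sectDom' τ a b δ) := by
    refine EqOn.of_subset_closure (fun p hp => ?_) H'.1 H.1 hsub hcl
    exact (Prod.ext_iff.1 (key p hp)).1
  have k2 : EqOn g' g (sectDom' τ a b δ) := by
    refine EqOn.of_subset_closure (fun p hp => ?_) H'.2.2.1 H.2.2.1 hsub hcl
    exact (Prod.ext_iff.1 (key p hp)).2
  exact fun p hp => ⟨k1 hp, k2 hp⟩

theorem s15_sub1 {τ : ℂ} {a b δ a' b' : ℝ} (ha : 0 < a) (hb : 0 < b) (hδ : 0 < δ)
    (ha' : 0 < a') (h1 : a' < a) (h2 : b < b') :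
    sectDom' τ a b δ ⊆ s15D τ (s15lev a' - τ.im) (s15lev b') (-s15lev (2 * δ)) ∧
    sectDom τ a b δ ⊆ s15D τ (s15lev a') (s15lev b') (-s15lev (2 * δ)) := by
  have e1 := s15lev_mono ha' h1
  have e2 := s15lev_mono hb h2
  have e3 := s15lev_mono hδ (show δ < 2 * δ by linarith)
  constructor
  · intro p hp
    obtain ⟨p0, p1, p2, p3⟩ := (s15_S' ha hb hδ).1 hp
    exact ⟨p0, by linarith, by linarith, by linarith⟩
  · intro p hp
    obtain ⟨p0, p1, p2, p3⟩ := (s15_S ha hb hδ).1 hp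
    exact ⟨p0, by linarith, by linarith, by linarith⟩

/-- Existence. -/
theorem s15_sol_exist {τ : ℂ} (hτ : 0 < τ.im) {N : ℕ} (hN : 4 ≤ N) {a b R₀ δ C Λ L : ℝ}
    (ha : 0 < a) (hb : 0 < b) (hR₀ : 0 < R₀)
    (hδ : 0 < δ) {Δ₁ Δ₂ : ℂ × ℂ → ℂ}
    (hA : -L ≤ s15lev (3 * a / 4) - τ.im) (hB : s15lev (5 * b / 4) ≤ L)
    (hwL : 2 * L + 2 + 2 * ‖τ‖ ≤ -s15lev (2 * δ)) (hw2 : 2 * ‖τ‖ * (R₀ + 2) ≤ -s15lev (2 * δ))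
    (hlin : s15Lin (ℂ × ℂ) τ N (s15lev (3 * a / 4)) (s15lev (5 * b / 4)) (-s15lev (2 * δ)) C)
    (hG : s15NL τ N (s15lev (3 * a / 4)) (s15lev (5 * b / 4)) (-s15lev (2 * δ)) (1 / 8) Λ
      (s15G Δ₁ Δ₂))
    (hC : 0 < C) (hΛ : 0 ≤ Λ) (hw : 1 ≤ -s15lev (2 * δ))
    (hsm : C * Λ / (-s15lev (2 * δ)) ≤ 1 / 8) :
    ∃ h g, pairSolProp τ a b R₀ δ Δ₁ Δ₂ h g ∧
      (∀ p ∈ sectDom' τ a b δ, 1 ≤ s15w τ p ∧ (τ * p.2).im ≤ 2 * s15w τ p ∧ 0 < ‖p.2‖ ∧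
        ‖h p‖ ≤ C * Λ / s15w τ p ^ (N - 2) ∧ ‖g p‖ ≤ C * Λ / s15w τ p ^ (N - 2)) ∧
      nprime (sectDom' τ a b δ) h + nprime (sectDom' τ a b δ) g ≤
        4 * (C * Λ / (-s15lev (2 * δ))) := by
  have hτ0 : τ ≠ 0 := by rintro rfl; simp at hτ
  obtain ⟨u, hud, hue, hur, heq⟩ :=
    s15_exist hτ hN hlin hG hC hΛ hw (by linarith) (by norm_num) hsm
  have hCΛ : 0 ≤ C * Λ := by positivity
  have hc : 0 ≤ C * Λ / (-s15lev (2 * δ)) := by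
    apply div_nonneg hCΛ; linarith
  obtain ⟨s1, s2⟩ := s15_sub1 (τ := τ) (a' := 3 * a / 4) (b' := 5 * b / 4) ha hb hδ
    (by positivity) (by linarith) (by linarith)
  have hBd := s15Est_Bd hN hCΛ hw hue
  have hB1 : s15Bd (fun p => (u p).1) (sectDom' τ a b δ) (C * Λ / (-s15lev (2 * δ))) := by
    intro p hp
    obtain ⟨e1, e2⟩ := hBd p (s1 hp)
    refine ⟨(norm_fst_le _).trans e1, fun hi => le_trans ?_ (e2 hi)⟩
    exact mul_le_mul_of_nonneg_right (norm_fst_le _) (Real.sqrt_nonneg _)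
  have hB2 : s15Bd (fun p => (u p).2) (sectDom' τ a b δ) (C * Λ / (-s15lev (2 * δ))) := by
    intro p hp
    obtain ⟨e1, e2⟩ := hBd p (s1 hp)
    refine ⟨(norm_snd_le _).trans e1, fun hi => le_trans ?_ (e2 hi)⟩
    exact mul_le_mul_of_nonneg_right (norm_snd_le _) (Real.sqrt_nonneg _)
  obtain ⟨b1, b2, n1⟩ := s15_nprime_le hc hB1
  obtain ⟨b3, b4, n2⟩ := s15_nprime_le hc hB2
  have d1 : DifferentiableOn ℂ (fun p => (u p).1) (sectDom' τ a b δ) := (hud.mono s1).fst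
  have d2 : DifferentiableOn ℂ (fun p => (u p).2) (sectDom' τ a b δ) := (hud.mono s1).snd
  refine ⟨fun p => (u p).1, fun p => (u p).2, ⟨d1.continuousOn, d1.mono interior_subset,
    d2.continuousOn, d2.mono interior_subset, b1, b2, b3, b4, by linarith, ?_⟩, ?_, by linarith⟩
  · intro p hp
    have hp1 := s2 hp
    have hpU := s15_VU hτ _ _ _ hp1
    have hq : ‖Complex.exp (2 * (Real.pi : ℂ) * Complex.I * τ)‖ ≤ 1 := by
      rw [s15_q]
      apply Real.exp_le_one_iff.2
      have := Real.pi_pos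
      have : 0 < 2 * Real.pi * τ.im := by positivity
      linarith
    have e := heq p hp1
    rw [s15psi_tau hτ0, Prod.ext_iff] at e
    refine ⟨interior_subset (s15_arg (a' := 3 * a / 4) (b' := 5 * b / 4) (ρ := 1 / 4) (v := u p)
      ?_ ?_ (by norm_num) ?_ ?_ (s15_xi_large hτ0 hA hB hwL hw2 hpU) hR₀ ?_).1, ?_, ?_⟩
    · nlinarith
    · linarith
    · exact ((s15lev_lt (by positivity) hp1.1).1 hp1.2.1).le
    · exact ((s15lt_lev (by positivity) hp1.1).1 hp1.2.2.1).le
    · linarith [hur p hpU]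
    · simpa [s15G] using e.2
    · simpa [s15G] using e.1
  · intro p hp
    obtain ⟨-, l1, -, l2, l3⟩ := s15_low hτ0 hA hB hwL (s1 hp)
    have e := (hue p (s1 hp)).1
    exact ⟨l3, l1, by linarith, (norm_fst_le _).trans e, (norm_snd_le _).trans e⟩

/-- Core lemma. -/
theorem s15_core {τ : ℂ} (hτ : 0 < τ.im) {N : ℕ} (hN : 4 ≤ N) {a b : ℝ} (ha : 0 < a) (hab : a < b)
    {R₀ M : ℝ} (hR₀ : 0 < R₀) (hM : 0 < M)
    {Δ₁ Δ₂ : ℂ × ℂ → ℂ}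
    (hΔ₁d : DifferentiableOn ℂ Δ₁ (interior (omegaDom τ a b R₀)))
    (hΔ₂d : DifferentiableOn ℂ Δ₂ (interior (omegaDom τ a b R₀)))
    (hΔ₁b : ∀ p ∈ omegaDom τ a b R₀, ‖Δ₁ p‖ ≤ M / ‖p.2‖ ^ N)
    (hΔ₂b : ∀ p ∈ omegaDom τ a b R₀, ‖Δ₂ p‖ ≤ M / ‖p.2‖ ^ N) :
    ∃ W K : ℝ, 1 ≤ W ∧ 0 < K ∧ ∀ δ : ℝ, 0 < δ → W ≤ -s15lev (2 * δ) →
      ∃ h g, pairSolProp τ a b R₀ δ Δ₁ Δ₂ h g ∧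
      (∀ h' g' : ℂ × ℂ → ℂ, pairSolProp τ a b R₀ δ Δ₁ Δ₂ h' g' →
            ∀ p ∈ sectDom' τ a b δ, h' p = h p ∧ g' p = g p) ∧
      (∀ p ∈ sectDom' τ a b δ, 1 ≤ s15w τ p ∧ (τ * p.2).im ≤ 2 * s15w τ p ∧ 0 < ‖p.2‖ ∧
        ‖h p‖ ≤ K / s15w τ p ^ (N - 2) ∧ ‖g p‖ ≤ K / s15w τ p ^ (N - 2)) ∧
      nprime (sectDom' τ a b δ) h + nprime (sectDom' τ a b δ) g ≤
        4 * (K / (-s15lev (2 * δ))) := by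
  have hτ0 : τ ≠ 0 := by rintro rfl; simp at hτ
  have hb : 0 < b := ha.trans hab
  have ha' : 0 < 3 * a / 4 := by positivity
  have hb' : 0 < 5 * b / 4 := by positivity
  have hq : ‖Complex.exp (2 * (Real.pi : ℂ) * Complex.I * τ)‖ < 1 := by
    rw [s15_q]
    apply Real.exp_lt_one_iff.2
    have := Real.pi_pos
    have : 0 < 2 * Real.pi * τ.im := by positivity
    linarith
  have hq0 := norm_nonneg (Complex.exp (2 * (Real.pi : ℂ) * Complex.I * τ))
  have m1 := s15lev_mono ha' (show 3 * a / 4 < a by linarith)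
  have m2 := s15lev_mono ha hab
  have m3 := s15lev_mono hb (show b < 5 * b / 4 by linarith)
  obtain ⟨L, hL⟩ : ∃ L, L = |s15lev (3 * a / 4)| + |s15lev (5 * b / 4)| + τ.im := ⟨_, rfl⟩
  have hL0 : 0 ≤ L := by rw [hL]; positivity
  have n1 := neg_abs_le (s15lev (3 * a / 4))
  have n2 := le_abs_self (s15lev (5 * b / 4))
  have n3 := abs_nonneg (s15lev (3 * a / 4))
  have n4 := abs_nonneg (s15lev (5 * b / 4))
  have hA : -L ≤ s15lev (3 * a / 4) - τ.im := by linarith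
  have hB : s15lev (5 * b / 4) ≤ L := by linarith
  have hA1 : -L ≤ s15lev (3 * a / 4) := by linarith
  have hA2 : -L ≤ s15lev a := by linarith
  have hB2 : s15lev b ≤ L := by linarith
  obtain ⟨C₁, hC₁, P₁⟩ := s15_pack (F := ℂ × ℂ) hτ (m1.trans (m2.trans m3)) hA1 hB hN
  obtain ⟨C₂, hC₂, P₂⟩ := s15_pack (F := ℂ × ℂ) hτ m2 hA2 hB2 hN
  obtain ⟨Λ₁, hΛ₁⟩ : ∃ Λ, Λ = 2 * 2 ^ N * M * (1 + 2 / (1 / 8 : ℝ)) := ⟨_, rfl⟩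
  obtain ⟨η, hη, hη1, hη2⟩ : ∃ η : ℝ, 0 < η ∧ η ≤ 1 / 4 ∧
      η ≤ (1 - ‖Complex.exp (2 * (Real.pi : ℂ) * Complex.I * τ)‖) / 4 :=
    ⟨min (1 / 4) ((1 - ‖Complex.exp (2 * (Real.pi : ℂ) * Complex.I * τ)‖) / 4),
      lt_min (by norm_num) (by linarith), min_le_left _ _, min_le_right _ _⟩
  obtain ⟨Λ₂, hΛ₂⟩ : ∃ Λ, Λ = 2 * 2 ^ N * M * (1 + 2 / η) := ⟨_, rfl⟩
  have hΛ₁0 : 0 < Λ₁ := by rw [hΛ₁]; positivity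
  have hΛ₂0 : 0 < Λ₂ := by rw [hΛ₂]; positivity
  have hK : 0 < C₁ * Λ₁ := by positivity
  have hK2 : 0 < C₂ * Λ₂ := by positivity
  have ht : 0 < ‖τ‖ := norm_pos_iff.2 hτ0
  have ht2 : 0 < 2 * ‖τ‖ * (R₀ + 2) := by positivity
  refine ⟨1 + (2 * L + 2 + 2 * ‖τ‖) + 2 * ‖τ‖ * (R₀ + 2) + 8 * (C₁ * Λ₁) + 2 * (C₂ * Λ₂),
    C₁ * Λ₁, by linarith, hK, fun δ hδ hW => ?_⟩
  have e3 := s15lev_mono hδ (show δ < 2 * δ by linarith)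
  have hNL1 := s15_NL (r := 1 / 8) (η := 1 / 8) (L := L) (w := -s15lev (2 * δ)) hτ hM hR₀ hΔ₁d hΔ₂d
    hΔ₁b hΔ₂b ha' hb' (by norm_num) (by norm_num) (by nlinarith) (by linarith) hA1 hB
    (by linarith) (by linarith)
  have hNL2 := s15_NL (r := 1 / 2) (η := η) (L := L) (w := -s15lev δ) hτ hM hR₀ hΔ₁d hΔ₂d
    hΔ₁b hΔ₂b ha hb hη (by linarith) (by nlinarith) (by nlinarith) hA2 hB2
    (by linarith) (by linarith)
  rw [← hΛ₁] at hNL1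
  rw [← hΛ₂] at hNL2
  obtain ⟨h, g, H, H1, H2⟩ := s15_sol_exist hτ hN ha hb hR₀ hδ hA hB (by linarith) (by linarith)
    (P₁ _ (by linarith)) hNL1 hC₁ hΛ₁0.le (by linarith)
    (by rw [div_le_iff₀ (by linarith)]; linarith)
  refine ⟨h, g, H, fun h' g' H' => ?_, H1, H2⟩
  exact s15_sol_unique hτ hN ha hb hab hδ (P₂ _ (by linarith)) hNL2 hC₂ hΛ₂0.le (by linarith)
    (by rw [div_le_iff₀ (by linarith)]; linarith) H H'

theorem s15_lev_exp {δ X : ℝ} (hδ : 0 < δ) (h : δ ≤ Real.exp (-(2 * Real.pi * X)) / 2) :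
    X ≤ -s15lev (2 * δ) := by
  have hpi := Real.pi_pos
  have h1 : 2 * δ ≤ Real.exp (-(2 * Real.pi * X)) := by linarith
  have h2 := Real.log_le_log (by positivity) h1
  rw [Real.log_exp] at h2
  rw [s15lev, ← neg_div, le_div_iff₀ (by positivity)]
  linarith

end PartThirteen

/-- solution of the nonlinear conjugacy (functional) equations by the fixed
point method: existence and uniqueness of a pair `(h, g̃)` with `N'(h) + N'(g̃) ≤ 1/2`
solving the system, smallness as `δ → 0`, and sectorial decay `D_θ/|ξ|^{m−2}`. -/
theorem statement15 (τ : ℂ) (hτ : 0 < τ.im) (N m : ℕ) (hN : 4 ≤ N) (hm : 3 ≤ m)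
    (hmN : m < N) (a b : ℝ) (ha : 0 < a) (hab : a < b)
    (haqb : a < ‖Complex.exp (2 * (Real.pi : ℂ) * Complex.I * τ)‖ * b)
    (R₀ M : ℝ) (hR₀ : 0 < R₀) (hM : 0 < M)
    (Δ₁ Δ₂ : ℂ × ℂ → ℂ)
    (hΔ₁c : ContinuousOn Δ₁ (omegaDom τ a b R₀))
    (hΔ₁d : DifferentiableOn ℂ Δ₁ (interior (omegaDom τ a b R₀)))
    (hΔ₂c : ContinuousOn Δ₂ (omegaDom τ a b R₀))
    (hΔ₂d : DifferentiableOn ℂ Δ₂ (interior (omegaDom τ a b R₀)))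
    (hΔ₁b : ∀ p ∈ omegaDom τ a b R₀, ‖Δ₁ p‖ ≤ M / ‖p.2‖ ^ N)
    (hΔ₂b : ∀ p ∈ omegaDom τ a b R₀, ‖Δ₂ p‖ ≤ M / ‖p.2‖ ^ N) :
    ∃ δ₀ : ℝ, 0 < δ₀ ∧ ∃ Dfun : ℝ → ℝ,
      (∀ θ : ℝ, 0 < θ → θ ≤ Real.pi / 2 → 0 < Dfun θ) ∧
      (∀ δ : ℝ, 0 < δ → δ ≤ δ₀ →
        ∃ h g : ℂ × ℂ → ℂ,
          pairSolProp τ a b R₀ δ Δ₁ Δ₂ h g ∧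
          (∀ h' g' : ℂ × ℂ → ℂ, pairSolProp τ a b R₀ δ Δ₁ Δ₂ h' g' →
            ∀ p ∈ sectDom' τ a b δ, h' p = h p ∧ g' p = g p) ∧
          (∀ θ : ℝ, 0 < θ → θ ≤ Real.pi / 2 →
            ∀ p ∈ sectDom' τ a b δ,
              θ - Complex.arg τ ≤ Complex.arg p.2 →
              Complex.arg p.2 ≤ Real.pi - θ - Complex.arg τ →
              ‖h p‖ ≤ Dfun θ / ‖p.2‖ ^ (m - 2) ∧
              ‖g p‖ ≤ Dfun θ / ‖p.2‖ ^ (m - 2))) ∧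
      (∀ ε : ℝ, 0 < ε → ∃ δ₁ : ℝ, 0 < δ₁ ∧
        ∀ δ : ℝ, 0 < δ → δ ≤ δ₀ → δ ≤ δ₁ →
          ∀ h g : ℂ × ℂ → ℂ, pairSolProp τ a b R₀ δ Δ₁ Δ₂ h g →
            nprime (sectDom' τ a b δ) h + nprime (sectDom' τ a b δ) g < ε) := by
  have hτ0 : τ ≠ 0 := by rintro rfl; simp at hτ
  obtain ⟨W, K, hW, hK, core⟩ := s15_core hτ hN ha hab hR₀ hM hΔ₁d hΔ₂d hΔ₁b hΔ₂b
  have ht : 0 < ‖τ‖ := norm_pos_iff.2 hτ0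
  refine ⟨Real.exp (-(2 * Real.pi * W)) / 2, by positivity,
    fun θ => K * (2 / (‖τ‖ * Real.sin θ)) ^ (m - 2), ?_, ?_, ?_⟩
  · intro θ h0 h1
    have hs : 0 < Real.sin θ := Real.sin_pos_of_pos_of_lt_pi h0 (by linarith [Real.pi_pos])
    positivity
  · intro δ hδ hδ0
    obtain ⟨h, g, H, HU, HE, -⟩ := core δ hδ (s15_lev_exp hδ hδ0)
    refine ⟨h, g, H, HU, ?_⟩
    intro θ h0 h1 p hp p1 p2
    obtain ⟨e1, e2, e3, e4, e5⟩ := HE p hp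
    exact ⟨s15_sector hτ0 hmN hK.le h0 h1 e4 e1 e2 e3 p1 p2,
      s15_sector hτ0 hmN hK.le h0 h1 e5 e1 e2 e3 p1 p2⟩
  · intro ε hε
    refine ⟨Real.exp (-(2 * Real.pi * (4 * K / ε + 1))) / 2, by positivity, ?_⟩
    intro δ hδ hδ0 hδ1 h' g' H'
    obtain ⟨h, g, H, HU, -, HN⟩ := core δ hδ (s15_lev_exp hδ hδ0)
    have hX := s15_lev_exp hδ hδ1
    have hw0 : 1 ≤ -s15lev (2 * δ) := hW.trans (s15_lev_exp hδ hδ0)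
    rw [s15_nprime_congr (fun p hp => (HU h' g' H' p hp).1),
      s15_nprime_congr (fun p hp => (HU h' g' H' p hp).2)]
    refine HN.trans_lt ?_
    rw [← mul_div_assoc, div_lt_iff₀ (by linarith)]
    have : 4 * K / ε < -s15lev (2 * δ) := by linarith
    rw [div_lt_iff₀ hε] at this
    linarith
end

section
/- Define φ(X,Y) := (X·(1+XY), Y·(1+X²Y)) on a neighborhood of (0,0) in ℂ². Given α, β ∈ ℂ and holomorphic germs f₁, f₄ : {w ∈ ℂ : |w| < ρ₀} → ℂ, define on a punctured bidisc the functions P₁(X,Y) := α/X, Q₁(X,Y) := β/Y + f₁(Y), P₄(X,Y) := α/X + f₄(X), Q₄(X,Y) := β/Y, and the pullback components P̃₁ := P₁(φ(X,Y))·(1+2XY) + Q₁(φ(X,Y))·(2XY²) and Q̃₁ := P₁(φ(X,Y))·X² + Q₁(φ(X,Y))·(1+2X²Y) (these are the coefficients of φ*(P₁dX + Q₁dY) via the Jacobian of φ). If there exists ρ > 0 such that P₄(X,Y)·Q̃₁(X,Y) − Q₄(X,Y)·P̃₁(X,Y) = 0 for all (X,Y) with 0 < |X| < ρ and 0 < |Y|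 < ρ, then α = 0 and β = 0. (Consequently, for the neighborhood glued by the cocycle with φ_{1,4} = φ, every formal foliation of the pencil diverges.) -/
open Complex

lemma limit_zero_aux (g : ℂ → ℂ) (hg : ContinuousAt g 0) (r : ℝ) (hr : 0 < r)
    (h : ∀ y : ℂ, 0 < ‖y‖ → ‖y‖ < r → g y = 0) : g 0 = 0 := by
  have h1 : Filter.Tendsto g (nhdsWithin 0 {0}ᶜ) (nhds (g 0)) :=
    hg.tendsto.mono_left nhdsWithin_le_nhds
  have h2 : g =ᶠ[nhdsWithin 0 {0}ᶜ] fun _ => (0 : ℂ) := by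
    have hb : Metric.ball (0 : ℂ) r ∈ nhdsWithin (0 : ℂ) {0}ᶜ :=
      nhdsWithin_le_nhds (Metric.ball_mem_nhds _ hr)
    filter_upwards [hb, self_mem_nhdsWithin] with y hy hy0
    exact h y (norm_pos_iff.mpr hy0) (by simpa using hy)
  exact tendsto_nhds_unique (h1.congr' h2) tendsto_const_nhds |>.symm ▸ rfl

/-- for the gluing map `φ(X,Y) = (X(1+XY), Y(1+X²Y))`, if the wedge of the
logarithmic form `θ₄ = (α/X + f₄(X))dX + (β/Y)dY` with the pullback `φ*θ₁` of
`θ₁ = (α/X)dX + (β/Y + f₁(Y))dY` vanishes identically on a punctured bidisc, then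
`α = 0` and `β = 0` (so every foliation of the formal pencil diverges). -/
theorem statement16 (α β : ℂ) (ρ₀ : ℝ) (hρ₀ : 0 < ρ₀) (f₁ f₄ : ℂ → ℂ)
    (hf₁ : DifferentiableOn ℂ f₁ {w : ℂ | ‖w‖ < ρ₀})
    (hf₄ : DifferentiableOn ℂ f₄ {w : ℂ | ‖w‖ < ρ₀})
    (hvanish : ∃ ρ : ℝ, 0 < ρ ∧ ρ ≤ ρ₀ ∧ ρ ≤ 1 ∧
      ∀ X Y : ℂ, 0 < ‖X‖ → ‖X‖ < ρ →
        0 < ‖Y‖ → ‖Y‖ < ρ →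
        (α / X + f₄ X) *
            ((α / (X * (1 + X * Y))) * X ^ 2 +
              (β / (Y * (1 + X ^ 2 * Y)) + f₁ (Y * (1 + X ^ 2 * Y))) *
                (1 + 2 * X ^ 2 * Y)) -
          (β / Y) *
            ((α / (X * (1 + X * Y))) * (1 + 2 * X * Y) +
              (β / (Y * (1 + X ^ 2 * Y)) + f₁ (Y * (1 + X ^ 2 * Y))) *
                (2 * X * Y ^ 2)) = 0) :
    α = 0 ∧ β = 0 := by
  obtain ⟨ρ, hρ, hρρ, hρ1, hv⟩ := hvanish
  have hc₁ : ∀ w : ℂ, ‖w‖ < ρ → ContinuousAt f₁ w := fun w hw =>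
    (hf₁.differentiableAt ((isOpen_lt continuous_norm continuous_const).mem_nhds
      (show ‖w‖ < ρ₀ by linarith))).continuousAt
  have hc₄ : ContinuousAt f₄ 0 :=
    (hf₄.differentiableAt ((isOpen_lt continuous_norm continuous_const).mem_nhds
      (show ‖(0 : ℂ)‖ < ρ₀ by simpa using hρ₀))).continuousAt
  have hne : ∀ z : ℂ, ‖z‖ < 1 → 1 + z ≠ 0 := by
    intro z hz h
    have : z = -1 := by linear_combination h
    rw [this] at hz
    simp at hz
  have hXY : ∀ X Y : ℂ, ‖X‖ < ρ → ‖Y‖ < ρ → ‖X * Y‖ < 1 := by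
    intro X Y hX hY
    rw [norm_mul]
    nlinarith [norm_nonneg X, norm_nonneg Y]
  have hXXY : ∀ X Y : ℂ, ‖X‖ < ρ → ‖Y‖ < ρ → ‖X ^ 2 * Y‖ < 1 := by
    intro X Y hX hY
    have h1 := hXY X Y hX hY
    have : X ^ 2 * Y = X * (X * Y) := by ring
    rw [this, norm_mul]
    nlinarith [norm_nonneg X, norm_nonneg (X * Y)]
  have hE : ∀ X Y : ℂ, 0 < ‖X‖ → ‖X‖ < ρ → 0 < ‖Y‖ → ‖Y‖ < ρ →
      (α + X * f₄ X) * (α * X * Y * (1 + X ^ 2 * Y) +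
        (β + Y * (1 + X ^ 2 * Y) * f₁ (Y * (1 + X ^ 2 * Y))) *
          ((1 + 2 * X ^ 2 * Y) * (1 + X * Y))) -
      β * (α * (1 + 2 * X * Y) * (1 + X ^ 2 * Y) +
        2 * (β + Y * (1 + X ^ 2 * Y) * f₁ (Y * (1 + X ^ 2 * Y))) *
          (X ^ 2 * Y * (1 + X * Y))) = 0 := by
    intro X Y hX0 hX hY0 hY
    have h := hv X Y hX0 hX hY0 hY
    have hX' : X ≠ 0 := norm_pos_iff.mp hX0
    have hY' : Y ≠ 0 := norm_pos_iff.mp hY0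
    have h1 := hne _ (hXY X Y hX hY)
    have h2 := hne _ (hXXY X Y hX hY)
    generalize f₁ (Y * (1 + X ^ 2 * Y)) = b at h ⊢
    generalize f₄ X = a at h ⊢
    have h3 := congrArg (fun t => X * Y * (1 + X * Y) * (1 + X ^ 2 * Y) * t) h
    simp only [mul_zero] at h3
    rw [← h3]
    field_simp
  -- continuity of `f₁` along the curves
  have hcY : ∀ X : ℂ, ContinuousAt (fun Y : ℂ => f₁ (Y * (1 + X ^ 2 * Y))) 0 := by
    intro X
    have h0 : ContinuousAt f₁ ((fun Y : ℂ => Y * (1 + X ^ 2 * Y)) 0) := by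
      apply hc₁
      simpa using hρ
    exact ContinuousAt.comp (f := fun Y : ℂ => Y * (1 + X ^ 2 * Y)) h0 (by fun_prop)
  have hcX : ∀ Y : ℂ, ‖Y‖ < ρ → ContinuousAt (fun X : ℂ => f₁ (Y * (1 + X ^ 2 * Y))) 0 := by
    intro Y hY
    have h0 : ContinuousAt f₁ ((fun X : ℂ => Y * (1 + X ^ 2 * Y)) 0) := by
      apply hc₁
      simpa using hY
    exact ContinuousAt.comp (f := fun X : ℂ => Y * (1 + X ^ 2 * Y)) h0 (by fun_prop)
  have hA : ∀ X : ℂ, 0 < ‖X‖ → ‖X‖ < ρ → (α + X * f₄ X) * β - β * α = 0 := by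
    intro X hX0 hX
    have hc := hcY X
    have := limit_zero_aux _ (by fun_prop (disch := simpa using hρ)) ρ hρ (fun Y h0 h1 => hE X Y hX0 hX h0 h1)
    simpa using this
  have hB : ∀ Y : ℂ, 0 < ‖Y‖ → ‖Y‖ < ρ → α * (β + Y * f₁ Y) - β * α = 0 := by
    intro Y hY0 hY
    have hc := hcX Y hY
    have := limit_zero_aux _ (by fun_prop (disch := simpa using hY)) ρ hρ (fun X h0 h1 => hE X Y h0 h1 hY0 hY)
    simpa using this
  have hW : ∀ X Y : ℂ, ‖X‖ < ρ → 0 < ‖Y‖ → ‖Y‖ < ρ / 2 → 0 < ‖Y * (1 + X ^ 2 * Y)‖ ∧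
      ‖Y * (1 + X ^ 2 * Y)‖ < ρ := by
    intro X Y hX hY0 hY
    have h1 := hXXY X Y hX (by linarith)
    refine ⟨norm_pos_iff.mpr (mul_ne_zero (norm_pos_iff.mp hY0) (hne _ h1)), ?_⟩
    rw [norm_mul]
    have h2 : ‖1 + X ^ 2 * Y‖ ≤ 1 + ‖X ^ 2 * Y‖ := by
      have h3 := norm_add_le (1 : ℂ) (X ^ 2 * Y)
      rwa [norm_one] at h3
    nlinarith
  have hAlim : (∀ X : ℂ, 0 < ‖X‖ → ‖X‖ < ρ → α + X * f₄ X = 0) → α = 0 := by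
    intro h
    have := limit_zero_aux (fun X => α + X * f₄ X) (by fun_prop) ρ hρ h
    simpa using this
  obtain ⟨X₀, hX₀0, hX₀⟩ : ∃ X : ℂ, 0 < ‖X‖ ∧ ‖X‖ < ρ / 4 := by
    refine ⟨((ρ / 8 : ℝ) : ℂ), ?_, ?_⟩ <;>
      rw [Complex.norm_real, Real.norm_of_nonneg (by linarith)] <;> linarith
  by_cases hα : α = 0
  · refine ⟨hα, ?_⟩
    by_contra hβ
    have h := limit_zero_aux (fun Y => β + Y * (1 + X₀ ^ 2 * Y) * f₁ (Y * (1 + X₀ ^ 2 * Y)))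
      (by have hc := hcY X₀; fun_prop (disch := simpa using hρ)) ρ hρ (by
        intro Y hY0 hY
        have hX₀' : ‖X₀‖ < ρ := by linarith
        have hA0 : α + X₀ * f₄ X₀ = 0 := by
          have := hA X₀ hX₀0 hX₀'
          apply mul_right_cancel₀ hβ
          rw [hα] at this ⊢
          linear_combination this
        have h := hE X₀ Y hX₀0 hX₀' hY0 hY
        rw [hA0, hα] at h
        have h1 := hne _ (hXY X₀ Y hX₀' hY)
        have hx : X₀ ≠ 0 := norm_pos_iff.mp hX₀0
        have hy : Y ≠ 0 := norm_pos_iff.mp hY0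
        have hn : -2 * β * (X₀ ^ 2 * Y * (1 + X₀ * Y)) ≠ 0 := by
          simp [hβ, hx, hy, h1]
        apply mul_left_cancel₀ hn
        linear_combination h)
    exact hβ (by simpa using h)
  · exfalso
    have hBW : ∀ X Y : ℂ, ‖X‖ < ρ → 0 < ‖Y‖ → ‖Y‖ < ρ / 2 →
        β + Y * (1 + X ^ 2 * Y) * f₁ (Y * (1 + X ^ 2 * Y)) = β := by
      intro X Y hX hY0 hY
      obtain ⟨h1, h2⟩ := hW X Y hX hY0 hY
      have := hB _ h1 h2
      apply mul_left_cancel₀ hα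
      linear_combination this
    by_cases hβ : β = 0
    · apply hα
      apply hAlim
      intro X hX0 hX
      have hx4 : ‖X₀‖ < ρ / 2 := by linarith
      have h := hE X X₀ hX0 hX hX₀0 (by linarith)
      rw [hBW X X₀ hX hX₀0 hx4, hβ] at h
      have h1 := hne _ (hXXY X X₀ hX (by linarith))
      have hx : X ≠ 0 := norm_pos_iff.mp hX0
      have hy : X₀ ≠ 0 := norm_pos_iff.mp hX₀0
      have hn : α * X * X₀ * (1 + X ^ 2 * X₀) ≠ 0 := by simp [hα, hx, hy, h1]
      apply mul_right_cancel₀ hn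
      linear_combination h
    · have hG : ∀ X : ℂ, 0 < ‖X‖ → ‖X‖ < ρ →
          α ^ 2 + α * β * (X - 1) - 2 * β ^ 2 * X = 0 := by
        intro X hX0 hX
        have hA' : α + X * f₄ X = α := by
          apply mul_right_cancel₀ hβ
          linear_combination hA X hX0 hX
        have h := limit_zero_aux (fun Y => α ^ 2 * (1 + X ^ 2 * Y) + α * β * (X - 1)
          - 2 * β ^ 2 * X * (1 + X * Y)) (by fun_prop) (ρ / 2) (by linarith) (by
            intro Y hY0 hY
            have h := hE X Y hX0 hX hY0 (by linarith)
            rw [hBW X Y hX hY0 hY, hA'] at h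
            have hx : X ≠ 0 := norm_pos_iff.mp hX0
            have hy : Y ≠ 0 := norm_pos_iff.mp hY0
            apply mul_left_cancel₀ (mul_ne_zero hx hy)
            linear_combination h)
        simpa using h
      have h1 := hG X₀ hX₀0 (by linarith)
      have h2 := hG (2 * X₀) (by rw [norm_mul]; simpa using hX₀0)
        (by rw [norm_mul]; simp only [Complex.norm_ofNat]; linarith)
      have hx : X₀ ≠ 0 := norm_pos_iff.mp hX₀0
      have h3 : α - β = 0 := by
        apply mul_left_cancel₀ hα
        linear_combination 2 * h1 - h2
      have h4 : α - 2 * β = 0 := by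
        apply mul_left_cancel₀ (mul_ne_zero hβ hx)
        linear_combination h2 - h1
      apply hβ
      linear_combination h3 - h4
end

section
/- Fix τ ∈ ℂ with Im τ > 0 and u₀, v₀ ∈ ℂ not both zero; set α₀ := τ·(v₀ − u₀) and β₀ := u₀. Define φ(X,Y) := (X·(1+XYe^Y)^{−β₀}, Y·(1+XYe^Y)^{α₀}) on a neighborhood of (0,0) in ℂ², where w ↦ (1+w)^{s} := exp(s·Log(1+w)) uses the principal logarithm. Given α, β ∈ ℂ and holomorphic germs f₁, f₄ : {w ∈ ℂ : |w| < ρ₀} → ℂ, define P₁(X,Y) := α/X, Q₁(X,Y) := β/Y + f₁(Y), P₄(X,Y) := α/X + f₄(X), Q₄(X,Y) := β/Y, and let P̃₁ := P₁(φ)·∂_Xφ₁ + Q₁(φ)·∂_Xφ₂ and Q̃₁ := P₁(φ)·∂_Yφ₁ + Q₁(φ)·∂_Yφ₂ be the components of the pullback of P₁dX + Q₁dY by φ. If there exists ρ > 0 such that P₄·Q̃₁ − Q₄·P̃₁ = 0 identically on {(X,Y) : 0 < |X| < ρ, 0 < |Y| < ρ}, then α₀·β = α·β₀. (Consequently, for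 the neighborhood glued by the cocycle with φ_{1,4} = φ and all other gluings the identity, the foliation F_{t₀} with t₀ = [u₀ : v₀] is the unique convergent foliation of the pencil.) -/
open Complex

/-- First component `φ₁(X,Y) = X·(1+XYe^Y)^{−β₀}` (principal branch). -/
noncomputable def phiOne (β₀ X Y : ℂ) : ℂ :=
  X * Complex.exp (-β₀ * Complex.log (1 + X * Y * Complex.exp Y))

/-- Second component `φ₂(X,Y) = Y·(1+XYe^Y)^{α₀}` (principal branch). -/
noncomputable def phiTwo (α₀ X Y : ℂ) : ℂ :=
  Y * Complex.exp (α₀ * Complex.log (1 + X * Y * Complex.exp Y))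

lemma aux_slit {X Y : ℂ} (hX : ‖X‖ < 1 / 2) (hY : ‖Y‖ < 1 / 2) :
    1 + X * Y * Complex.exp Y ∈ Complex.slitPlane := by
  apply Complex.mem_slitPlane_of_norm_lt_one
  have h1 : ‖Complex.exp Y‖ ≤ 3 := by
    refine (Complex.norm_exp_le_exp_norm Y).trans ?_
    have : Real.exp ‖Y‖ ≤ Real.exp 1 := Real.exp_le_exp.2 (by linarith)
    have := Real.exp_one_lt_d9
    linarith
  rw [norm_mul, norm_mul]
  have h2 : ‖X‖ * ‖Y‖ ≤ 1 / 2 * (1 / 2) := by gcongr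
  have h3 : ‖X‖ * ‖Y‖ * ‖Complex.exp Y‖ ≤ 1 / 2 * (1 / 2) * 3 := by gcongr
  linarith

lemma aux_key {X Y a b α β F G : ℂ} (hX0 : X ≠ 0) (hY0 : Y ≠ 0)
    (hX : ‖X‖ < 1 / 2) (hY : ‖Y‖ < 1 / 2)
    (h : (α / X + F) *
            ((α / phiOne b X Y) * deriv (fun t : ℂ => phiOne b X t) Y +
              (β / phiTwo a X Y + G) * deriv (fun t : ℂ => phiTwo a X t) Y) -
          (β / Y) *
            ((α / phiOne b X Y) * deriv (fun t : ℂ => phiOne b t Y) X +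
              (β / phiTwo a X Y + G) * deriv (fun t : ℂ => phiTwo a t Y) X) = 0) :
    (α + X * F) * (β + phiTwo a X Y * G + (a * (β + phiTwo a X Y * G) - α * b) *
      (X * Y * Complex.exp Y / (1 + X * Y * Complex.exp Y)) * (1 + Y)) -
      β * (α + (a * (β + phiTwo a X Y * G) - α * b) *
      (X * Y * Complex.exp Y / (1 + X * Y * Complex.exp Y))) = 0 := by
  have hs := aux_slit hX hY
  have hne : 1 + X * Y * Complex.exp Y ≠ 0 := Complex.slitPlane_ne_zero hs
  have dX : HasDerivAt (fun t : ℂ => Complex.log (1 + t * Y * Complex.exp Y))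
      (Y * Complex.exp Y / (1 + X * Y * Complex.exp Y)) X := by
    refine HasDerivAt.clog ?_ hs
    simpa using (((hasDerivAt_id X).mul_const Y).mul_const (Complex.exp Y)).const_add 1
  have dY : HasDerivAt (fun t : ℂ => Complex.log (1 + X * t * Complex.exp t))
      ((X * Complex.exp Y + X * Y * Complex.exp Y) / (1 + X * Y * Complex.exp Y)) Y := by
    refine HasDerivAt.clog ?_ hs
    simpa using (((hasDerivAt_id Y).const_mul X).mul (Complex.hasDerivAt_exp Y)).const_add 1
  have d1X : deriv (fun t : ℂ => phiOne b t Y) X = _ :=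
    ((hasDerivAt_id X).mul ((dX.const_mul (-b)).cexp)).deriv
  have d1Y : deriv (fun t : ℂ => phiOne b X t) Y = _ :=
    (((dY.const_mul (-b)).cexp).const_mul X).deriv
  have d2X : deriv (fun t : ℂ => phiTwo a t Y) X = _ :=
    (((dX.const_mul a).cexp).const_mul Y).deriv
  have d2Y : deriv (fun t : ℂ => phiTwo a X t) Y = _ :=
    ((hasDerivAt_id Y).mul ((dY.const_mul a).cexp)).deriv
  rw [d1X, d1Y, d2X, d2Y] at h
  clear d1X d1Y d2X d2Y dX dY
  simp only [phiOne, phiTwo, id] at h ⊢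
  have e1 := Complex.exp_ne_zero (-b * Complex.log (1 + X * Y * Complex.exp Y))
  have e2 := Complex.exp_ne_zero (a * Complex.log (1 + X * Y * Complex.exp Y))
  generalize Complex.exp (-b * Complex.log (1 + X * Y * Complex.exp Y)) = A at *
  generalize Complex.exp (a * Complex.log (1 + X * Y * Complex.exp Y)) = B at *
  generalize Complex.exp Y = E at *
  have h' := congrArg (fun z => X * Y * z) h
  simp only [mul_zero] at h'
  rw [← h']
  field_simp
  ring

lemma aux_contX {a X Y : ℂ} (hX : ‖X‖ < 1 / 2) (hY : ‖Y‖ < 1 / 2) :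
    ContinuousAt (fun t : ℂ => phiTwo a t Y) X := by
  unfold phiTwo
  have : ContinuousAt (fun t : ℂ => Complex.log (1 + t * Y * Complex.exp Y)) X :=
    ContinuousAt.clog (by fun_prop) (aux_slit hX hY)
  fun_prop

lemma aux_contY {a X Y : ℂ} (hX : ‖X‖ < 1 / 2) (hY : ‖Y‖ < 1 / 2) :
    ContinuousAt (fun t : ℂ => phiTwo a X t) Y := by
  unfold phiTwo
  have : ContinuousAt (fun t : ℂ => Complex.log (1 + X * t * Complex.exp t)) Y :=
    ContinuousAt.clog (by fun_prop) (aux_slit hX hY)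
  fun_prop

lemma aux_zero {H : ℂ → ℂ} (hc : ContinuousAt H 0) (hz : ∀ᶠ t in nhdsWithin (0 : ℂ) {0}ᶜ, H t = 0) :
    H 0 = 0 := by
  have h1 : Filter.Tendsto H (nhdsWithin (0 : ℂ) {0}ᶜ) (nhds (H 0)) :=
    hc.tendsto.mono_left nhdsWithin_le_nhds
  exact tendsto_nhds_unique (h1.congr' hz) tendsto_const_nhds

lemma aux_ev {ρ : ℝ} (hρ : 0 < ρ) :
    ∀ᶠ t in nhdsWithin (0 : ℂ) {0}ᶜ, t ≠ 0 ∧ ‖t‖ < ρ := by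
  refine (eventually_mem_nhdsWithin).and (Filter.Eventually.filter_mono nhdsWithin_le_nhds ?_)
  filter_upwards [Metric.ball_mem_nhds (0 : ℂ) hρ] with t ht
  simpa using ht

/-- for the gluing map `φ = (φ₁, φ₂)` above (with `α₀ = τ(v₀−u₀)`,
`β₀ = u₀`), if the wedge of `θ₄ = (α/X + f₄(X))dX + (β/Y)dY` with the pullback by `φ` of
`θ₁ = (α/X)dX + (β/Y + f₁(Y))dY` vanishes identically on a punctured bidisc, then
`α₀·β = α·β₀` (so `F_{t₀}`, `t₀ = [u₀ : v₀]`, is the unique convergent foliation). -/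
theorem statement17 (τ : ℂ) (hτ : 0 < τ.im) (u₀ v₀ : ℂ) (huv : ¬(u₀ = 0 ∧ v₀ = 0))
    (α β : ℂ) (ρ₀ : ℝ) (hρ₀ : 0 < ρ₀) (f₁ f₄ : ℂ → ℂ)
    (hf₁ : DifferentiableOn ℂ f₁ {w : ℂ | ‖w‖ < ρ₀})
    (hf₄ : DifferentiableOn ℂ f₄ {w : ℂ | ‖w‖ < ρ₀})
    (hvanish : ∃ ρ : ℝ, 0 < ρ ∧ ρ ≤ ρ₀ ∧ ρ ≤ 1 / 2 ∧
      ∀ X Y : ℂ, 0 < ‖X‖ → ‖X‖ < ρ →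
        0 < ‖Y‖ → ‖Y‖ < ρ →
        (α / X + f₄ X) *
            ((α / phiOne u₀ X Y) * deriv (fun t : ℂ => phiOne u₀ X t) Y +
              (β / phiTwo (τ * (v₀ - u₀)) X Y + f₁ (phiTwo (τ * (v₀ - u₀)) X Y)) *
                deriv (fun t : ℂ => phiTwo (τ * (v₀ - u₀)) X t) Y) -
          (β / Y) *
            ((α / phiOne u₀ X Y) * deriv (fun t : ℂ => phiOne u₀ t Y) X +
              (β / phiTwo (τ * (v₀ - u₀)) X Y + f₁ (phiTwo (τ * (v₀ - u₀)) X Y)) *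
                deriv (fun t : ℂ => phiTwo (τ * (v₀ - u₀)) t Y) X) = 0) :
    (τ * (v₀ - u₀)) * β = α * u₀ := by
  obtain ⟨ρ, hρ, hρ1, hρ2, hv⟩ := hvanish
  generalize τ * (v₀ - u₀) = a at *
  have key : ∀ X Y : ℂ, X ≠ 0 → ‖X‖ < ρ → Y ≠ 0 → ‖Y‖ < ρ → _ := fun X Y hX0 hX hY0 hY =>
    aux_key hX0 hY0 (hX.trans_le hρ2) (hY.trans_le hρ2)
      (hv X Y (norm_pos_iff.2 hX0) hX (norm_pos_iff.2 hY0) hY)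
  clear hv
  have hopen : IsOpen {w : ℂ | ‖w‖ < ρ₀} := isOpen_lt continuous_norm continuous_const
  have c1 : ∀ w : ℂ, ‖w‖ < ρ₀ → ContinuousAt f₁ w := fun w hw =>
    (hf₁.differentiableAt (hopen.mem_nhds hw)).continuousAt
  have c4 : ∀ w : ℂ, ‖w‖ < ρ₀ → ContinuousAt f₄ w := fun w hw =>
    (hf₄.differentiableAt (hopen.mem_nhds hw)).continuousAt
  have n0 : ‖(0 : ℂ)‖ < 1 / 2 := by simp
  have cm : ∀ X Y : ℂ, ‖X‖ < 1 / 2 → ‖Y‖ < 1 / 2 → 1 + X * Y * Complex.exp Y ≠ 0 :=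
    fun X Y hX hY => Complex.slitPlane_ne_zero (aux_slit hX hY)
  have h4 : ∀ X : ℂ, X ≠ 0 → ‖X‖ < ρ → β * f₄ X = 0 := by
    intro X hX0 hX
    have hz := (aux_ev hρ).mono fun t ht => key X t hX0 hX ht.1 ht.2
    have := aux_zero (H := fun Y => (α + X * f₄ X) * (β + phiTwo a X Y * f₁ (phiTwo a X Y) + (a * (β + phiTwo a X Y * f₁ (phiTwo a X Y)) - α * u₀) *
    (X * Y * Complex.exp Y / (1 + X * Y * Complex.exp Y)) * (1 + Y)) -
    β * (α + (a * (β + phiTwo a X Y * f₁ (phiTwo a X Y)) - α * u₀) *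
    (X * Y * Complex.exp Y / (1 + X * Y * Complex.exp Y)))) ?_ hz
    · have h2 : (α + X * f₄ X) * β - β * α = 0 := by simpa [phiTwo] using this
      have h3 : X * (β * f₄ X) = 0 := by linear_combination h2
      exact (mul_eq_zero.1 h3).resolve_left hX0
    · have hc := aux_contY (a := a) (hX.trans_le hρ2) n0
      have hg : ‖phiTwo a X 0‖ < ρ₀ := by simpa [phiTwo] using hρ₀
      have := cm X 0 (hX.trans_le hρ2) n0
      fun_prop (disch := assumption)
  by_cases hα : α = 0
  · subst hα
    by_cases hβ : β = 0
    · simp [hβ]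
    have hX0 : ((ρ / 2 : ℝ) : ℂ) ≠ 0 := by
      exact_mod_cast (half_pos hρ).ne'
    have hX : ‖((ρ / 2 : ℝ) : ℂ)‖ < ρ := by
      rw [Complex.norm_real, Real.norm_of_nonneg (by linarith)]; linarith
    generalize ((ρ / 2 : ℝ) : ℂ) = X at hX0 hX
    have hz : ∀ᶠ t in nhdsWithin (0 : ℂ) {0}ᶜ, a * (β + phiTwo a X t * f₁ (phiTwo a X t)) = 0 := by
      refine (aux_ev hρ).mono fun t ht => ?_
      have hk := key X t hX0 hX ht.1 ht.2
      rw [(mul_eq_zero.1 (h4 X hX0 hX)).resolve_left hβ] at hk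
      have := cm X t (hX.trans_le hρ2) (ht.2.trans_le hρ2)
      simpa [hβ, hX0, ht.1, this] using hk
    have := aux_zero (H := fun t => a * (β + phiTwo a X t * f₁ (phiTwo a X t))) ?_ hz
    · simpa [phiTwo] using this
    · have hc := aux_contY (a := a) (hX.trans_le hρ2) n0
      have hg : ‖phiTwo a X 0‖ < ρ₀ := by simpa [phiTwo] using hρ₀
      fun_prop (disch := assumption)
  · have c40 : ContinuousAt f₄ 0 := c4 0 (by simpa using hρ₀)
    have h1 : ∀ Y : ℂ, Y ≠ 0 → ‖Y‖ < ρ → f₁ Y = 0 := by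
      intro Y hY0 hY
      have hz := (aux_ev hρ).mono fun t ht => key t Y ht.1 ht.2 hY0 hY
      have := aux_zero (H := fun X => (α + X * f₄ X) * (β + phiTwo a X Y * f₁ (phiTwo a X Y) + (a * (β + phiTwo a X Y * f₁ (phiTwo a X Y)) - α * u₀) *
      (X * Y * Complex.exp Y / (1 + X * Y * Complex.exp Y)) * (1 + Y)) -
      β * (α + (a * (β + phiTwo a X Y * f₁ (phiTwo a X Y)) - α * u₀) *
      (X * Y * Complex.exp Y / (1 + X * Y * Complex.exp Y)))) ?_ hz
      · have h2 : α * (β + Y * f₁ Y) - β * α = 0 := by simpa [phiTwo] using this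
        have h3 : α * (Y * f₁ Y) = 0 := by linear_combination h2
        simpa [hα, hY0] using h3
      · have hc := aux_contX (a := a) n0 (hY.trans_le hρ2)
        have hg : ‖phiTwo a 0 Y‖ < ρ₀ := by simpa [phiTwo] using hY.trans_le hρ1
        have := cm 0 Y n0 (hY.trans_le hρ2)
        fun_prop (disch := assumption)
    obtain ⟨Y, hY0, hY, hYne⟩ : ∃ Y : ℂ, Y ≠ 0 ∧ ‖Y‖ < ρ ∧ α * (1 + Y) - β ≠ 0 := by
      have hX0 : ((ρ / 2 : ℝ) : ℂ) ≠ 0 := by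
        exact_mod_cast (half_pos hρ).ne'
      have hX : ‖((ρ / 2 : ℝ) : ℂ)‖ < ρ := by
        rw [Complex.norm_real, Real.norm_of_nonneg (by linarith)]; linarith
      generalize ((ρ / 2 : ℝ) : ℂ) = X at hX0 hX
      by_cases hc : α * (1 + X) - β = 0
      · refine ⟨-X, neg_ne_zero.2 hX0, by simpa using hX, fun hc' => ?_⟩
        have : α * X = 0 := by linear_combination (hc - hc') / 2
        simp [hα, hX0] at this
      · exact ⟨X, hX0, hX, hc⟩
    have hc := aux_contX (a := a) n0 (hY.trans_le hρ2)
    have e1 : ∀ᶠ t in nhdsWithin (0 : ℂ) {0}ᶜ, ‖phiTwo a t Y‖ < ρ := by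
      refine Filter.Eventually.filter_mono nhdsWithin_le_nhds ?_
      refine hc.norm.eventually_lt continuousAt_const ?_
      simpa [phiTwo] using hY
    have e2 : ∀ᶠ t in nhdsWithin (0 : ℂ) {0}ᶜ, (α + t * f₄ t) * (1 + Y) - β ≠ 0 := by
      refine Filter.Eventually.filter_mono nhdsWithin_le_nhds ?_
      have : ContinuousAt (fun t => (α + t * f₄ t) * (1 + Y) - β) 0 := by fun_prop
      refine this.eventually_ne ?_
      simpa using hYne
    have e3 : ∀ᶠ t in nhdsWithin (0 : ℂ) {0}ᶜ, (a * β - α * u₀) *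
        (t * Y * Complex.exp Y / (1 + t * Y * Complex.exp Y)) * ((α + t * f₄ t) * (1 + Y) - β) = 0 := by
      filter_upwards [aux_ev hρ, e1] with t ht ht1
      have hk := key t Y ht.1 ht.2 hY0 hY
      rw [h1 (phiTwo a t Y) (by simp [phiTwo, hY0]) ht1] at hk
      linear_combination hk - t * h4 t ht.1 ht.2
    obtain ⟨t, ht, ht2, ht3⟩ := ((aux_ev hρ).and (e2.and e3)).exists
    have := cm t Y (ht.2.trans_le hρ2) (hY.trans_le hρ2)
    have hm : t * Y * Complex.exp Y / (1 + t * Y * Complex.exp Y) ≠ 0 :=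
      div_ne_zero (mul_ne_zero (mul_ne_zero ht.1 hY0) (Complex.exp_ne_zero Y)) this
    exact sub_eq_zero.1 ((mul_eq_zero.1 ((mul_eq_zero.1 ht3).resolve_right ht2)).resolve_right hm)
end

section
/- Let r > 0 and let g₁, g₂ be holomorphic on the polydisc P_r := {(X,Y) ∈ ℂ² : |X| < r, |Y| < r} with g₁(0,0) = g₂(0,0) = 0. Let D := {(z,ξ) ∈ ℂ* × ℂ : Π(z,ξ) ∈ P_r}, and define Φ(z,ξ) := (z·(1 + g₁(Π(z,ξ))), ξ + g₂(Π(z,ξ))) on D, and φ(X,Y) := (X·exp(2πi·g₂(X,Y)), Y·(1 + g₁(X,Y))·exp(2πiτ·g₂(X,Y))) on P_r. Then: (i) Π(Φ(z,ξ)) = φ(Π(z,ξ)) for every (z,ξ) ∈ D; (ii) φ is holomorphic on P_r with φ(0,0) = (0,0) and derivative at (0,0) equal to the identity; (iii) D is invariant under F₁₀₀, and Φ(q·z, ξ−1) = F₁₀₀(Φ(z,ξ)) for every (z,ξ) ∈ D, i.e. Φ commutes with F₁₀₀. -/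
open Complex

/-- The Serre map `Π(z,ξ) = (exp(2πiξ), z·exp(2πiτξ))`. -/
noncomputable def PiMap (τ : ℂ) (p : ℂ × ℂ) : ℂ × ℂ :=
  (Complex.exp (2 * (Real.pi : ℂ) * Complex.I * p.2),
   p.1 * Complex.exp (2 * (Real.pi : ℂ) * Complex.I * τ * p.2))

/-- The map `F₁₀₀(z,ξ) = (q·z, ξ−1)` with `q = exp(2πiτ)`. -/
noncomputable def F100 (τ : ℂ) (p : ℂ × ℂ) : ℂ × ℂ :=
  (Complex.exp (2 * (Real.pi : ℂ) * Complex.I * τ) * p.1, p.2 - 1)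

/-- The sectorial transformation `Φ(z,ξ) = (z·(1+g₁(Π(z,ξ))), ξ + g₂(Π(z,ξ)))`. -/
noncomputable def PhiLift (τ : ℂ) (g₁ g₂ : ℂ × ℂ → ℂ) (p : ℂ × ℂ) : ℂ × ℂ :=
  (p.1 * (1 + g₁ (PiMap τ p)), p.2 + g₂ (PiMap τ p))

/-- The induced map `φ(X,Y) = (X·e^{2πi g₂}, Y·(1+g₁)·e^{2πiτ g₂})` downstairs. -/
noncomputable def phiDown (τ : ℂ) (g₁ g₂ : ℂ × ℂ → ℂ) (w : ℂ × ℂ) : ℂ × ℂ :=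
  (w.1 * Complex.exp (2 * (Real.pi : ℂ) * Complex.I * g₂ w),
   w.2 * (1 + g₁ w) * Complex.exp (2 * (Real.pi : ℂ) * Complex.I * τ * g₂ w))

/-- (i) `Π ∘ Φ = φ ∘ Π` on `D = Π⁻¹(P_r) ∩ (ℂ* × ℂ)`; (ii) `φ` is
holomorphic on the polydisc `P_r`, fixes the origin and has derivative the identity there;
(iii) `D` is `F₁₀₀`-invariant and `Φ` commutes with `F₁₀₀` on `D`. -/
theorem statement18 (τ : ℂ) (hτ : 0 < τ.im) (r : ℝ) (hr : 0 < r)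
    (g₁ g₂ : ℂ × ℂ → ℂ)
    (hg₁ : DifferentiableOn ℂ g₁ {w : ℂ × ℂ | ‖w.1‖ < r ∧ ‖w.2‖ < r})
    (hg₂ : DifferentiableOn ℂ g₂ {w : ℂ × ℂ | ‖w.1‖ < r ∧ ‖w.2‖ < r})
    (hg₁0 : g₁ (0, 0) = 0) (hg₂0 : g₂ (0, 0) = 0) :
    -- (i)
    (∀ p : ℂ × ℂ, p.1 ≠ 0 →
      PiMap τ p ∈ {w : ℂ × ℂ | ‖w.1‖ < r ∧ ‖w.2‖ < r} →
      PiMap τ (PhiLift τ g₁ g₂ p) = phiDown τ g₁ g₂ (PiMap τ p)) ∧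
    -- (ii)
    (DifferentiableOn ℂ (phiDown τ g₁ g₂)
        {w : ℂ × ℂ | ‖w.1‖ < r ∧ ‖w.2‖ < r} ∧
      phiDown τ g₁ g₂ (0, 0) = (0, 0) ∧
      HasFDerivAt (phiDown τ g₁ g₂) (ContinuousLinearMap.id ℂ (ℂ × ℂ)) (0, 0)) ∧
    -- (iii)
    ((∀ p : ℂ × ℂ, p.1 ≠ 0 →
        PiMap τ p ∈ {w : ℂ × ℂ | ‖w.1‖ < r ∧ ‖w.2‖ < r} →
        (F100 τ p).1 ≠ 0 ∧
          PiMap τ (F100 τ p) ∈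
            {w : ℂ × ℂ | ‖w.1‖ < r ∧ ‖w.2‖ < r}) ∧
      ∀ p : ℂ × ℂ, p.1 ≠ 0 →
        PiMap τ p ∈ {w : ℂ × ℂ | ‖w.1‖ < r ∧ ‖w.2‖ < r} →
        PhiLift τ g₁ g₂ (F100 τ p) = F100 τ (PhiLift τ g₁ g₂ p)) := by
  have hF : ∀ p : ℂ × ℂ, PiMap τ (F100 τ p) = PiMap τ p := by
    intro p
    unfold PiMap F100
    refine Prod.ext ?_ ?_
    · simp only [mul_sub, mul_one, Complex.exp_sub, Complex.exp_two_pi_mul_I, div_one]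
    · simp only [mul_sub, mul_one, Complex.exp_sub]
      have := Complex.exp_ne_zero (2 * (Real.pi : ℂ) * Complex.I * τ)
      field_simp
  have hdiff : DifferentiableOn ℂ (phiDown τ g₁ g₂)
      {w : ℂ × ℂ | ‖w.1‖ < r ∧ ‖w.2‖ < r} := by
    unfold phiDown
    fun_prop
  have hopen : IsOpen {w : ℂ × ℂ | ‖w.1‖ < r ∧ ‖w.2‖ < r} := by
    have k1 : IsOpen {w : ℂ × ℂ | ‖w.1‖ < r} := isOpen_lt (by fun_prop) (by fun_prop)
    have k2 : IsOpen {w : ℂ × ℂ | ‖w.2‖ < r} := isOpen_lt (by fun_prop) (by fun_prop)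
    exact k1.inter k2
  have hmem : {w : ℂ × ℂ | ‖w.1‖ < r ∧ ‖w.2‖ < r} ∈ nhds ((0, 0) : ℂ × ℂ) :=
    hopen.mem_nhds (by simp [hr])
  refine ⟨?_, ⟨hdiff, ?_, ?_⟩, ?_, ?_⟩
  · intro p _ _
    simp only [PiMap, PhiLift, phiDown, mul_add, Complex.exp_add]
    refine Prod.ext ?_ ?_
    · simp
    · simp only
      ring
  · simp [phiDown]
  · have h1 := (hg₁.differentiableAt hmem).hasFDerivAt
    have h2 := (hg₂.differentiableAt hmem).hasFDerivAt
    have a1 : HasFDerivAt (fun w : ℂ × ℂ => w.1) (ContinuousLinearMap.fst ℂ ℂ ℂ) (0, 0) :=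
      hasFDerivAt_fst
    have a2 : HasFDerivAt (fun w : ℂ × ℂ => w.2) (ContinuousLinearMap.snd ℂ ℂ ℂ) (0, 0) :=
      hasFDerivAt_snd
    have b1 := a1.mul (h2.const_mul (2 * (Real.pi : ℂ) * Complex.I)).cexp
    have b2 := (a2.mul (h1.const_add 1)).mul
      (h2.const_mul (2 * (Real.pi : ℂ) * Complex.I * τ)).cexp
    refine (b1.prodMk b2).congr_fderiv ?_
    ext <;> simp [hg₁0, hg₂0]
  · intro p hp h
    refine ⟨?_, ?_⟩
    · exact mul_ne_zero (Complex.exp_ne_zero _) hp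
    · rw [hF]
      exact h
  · intro p _ _
    simp only [PhiLift, hF]
    simp only [F100]
    refine Prod.ext ?_ ?_
    · simp only
      ring
    · simp only
      ring
end

section
/- Let λ ∈ ℂ with λ₁ := Re λ > 0, let n₀ ≥ 2 be an integer, and let w ∈ ℂ satisfy |Re w| ≤ (n₀/2)·λ₁. Then the series ∑_{n ≥ n₀} 1/(|w − n·λ|·|w + n·λ|) converges and is bounded above by (2/λ₁)². -/
open Complex

/-- the key summation estimate: if `λ₁ = Re λ > 0`, `n₀ ≥ 2` and
`|Re w| ≤ (n₀/2)·λ₁`, then `∑_{n ≥ n₀} 1/(|w − nλ|·|w + nλ|)` converges and is at most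
`(2/λ₁)²`. -/
theorem statement19 (lam : ℂ) (hlam : 0 < lam.re) (n₀ : ℕ) (hn₀ : 2 ≤ n₀)
    (w : ℂ) (hw : |w.re| ≤ ((n₀ : ℝ) / 2) * lam.re) :
    Summable (fun n : ℕ =>
      1 / (‖w - ((n + n₀ : ℕ) : ℂ) * lam‖ *
        ‖w + ((n + n₀ : ℕ) : ℂ) * lam‖)) ∧
    (∑' n : ℕ,
      1 / (‖w - ((n + n₀ : ℕ) : ℂ) * lam‖ *
        ‖w + ((n + n₀ : ℕ) : ℂ) * lam‖)) ≤ (2 / lam.re) ^ 2 := by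
  have hn : (2 : ℝ) ≤ (n₀ : ℝ) := by exact_mod_cast hn₀
  obtain ⟨hw1, hw2⟩ := abs_le.mp hw
  set f : ℕ → ℝ := fun n : ℕ =>
      1 / (‖w - ((n + n₀ : ℕ) : ℂ) * lam‖ *
        ‖w + ((n + n₀ : ℕ) : ℂ) * lam‖) with hf
  have hf0 : ∀ n, 0 ≤ f n := fun n => by simp only [hf]; positivity
  have hterm : ∀ n : ℕ, f n ≤
      (2 / lam.re) ^ 2 * (1 / ((n : ℝ) + n₀ - 1) - 1 / ((n : ℝ) + n₀)) := by
    intro n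
    have hn0 : (0 : ℝ) ≤ n := Nat.cast_nonneg n
    have hnl : 0 ≤ (n : ℝ) * lam.re := by positivity
    have hre : (((n + n₀ : ℕ) : ℂ) * lam).re = ((n : ℝ) + n₀) * lam.re := by
      rw [← Complex.ofReal_natCast, Complex.re_ofReal_mul]; push_cast; ring
    have h1 : ((n : ℝ) + n₀) * lam.re / 2 ≤ ‖w - ((n + n₀ : ℕ) : ℂ) * lam‖ := by
      have := (neg_le_abs _).trans (Complex.abs_re_le_norm (w - ((n + n₀ : ℕ) : ℂ) * lam))
      rw [Complex.sub_re, hre] at this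
      linarith
    have h2 : ((n : ℝ) + n₀) * lam.re / 2 ≤ ‖w + ((n + n₀ : ℕ) : ℂ) * lam‖ := by
      have := (le_abs_self _).trans (Complex.abs_re_le_norm (w + ((n + n₀ : ℕ) : ℂ) * lam))
      rw [Complex.add_re, hre] at this
      linarith
    have hm : (0 : ℝ) < (n : ℝ) + n₀ := by linarith
    have hm1 : (0 : ℝ) < (n : ℝ) + n₀ - 1 := by linarith
    have hp : 0 < ((n : ℝ) + n₀) * lam.re / 2 := by positivity
    calc f n ≤ 1 / ((((n : ℝ) + n₀) * lam.re / 2) * (((n : ℝ) + n₀) * lam.re / 2)) := by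
          simp only [hf]
          gcongr
      _ = (2 / lam.re) ^ 2 * (1 / (((n : ℝ) + n₀) * ((n : ℝ) + n₀))) := by
          field_simp
      _ ≤ (2 / lam.re) ^ 2 * (1 / (((n : ℝ) + n₀ - 1) * ((n : ℝ) + n₀))) := by
          gcongr
          linarith
      _ = _ := by
          congr 1
          field_simp
          ring
  have hsum : ∀ k : ℕ, ∑ i ∈ Finset.range k, f i ≤
      (2 / lam.re) ^ 2 * (1 - 1 / ((k : ℝ) + n₀ - 1)) := by
    intro k
    induction k with
    | zero =>
      have : 1 / ((n₀ : ℝ) - 1) ≤ 1 := by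
        rw [div_le_one (by linarith)]; linarith
      have h2 : 0 ≤ 1 - 1 / ((n₀ : ℝ) - 1) := by linarith
      simp only [Finset.range_zero, Finset.sum_empty, Nat.cast_zero, zero_add]
      positivity
    | succ k ih =>
      rw [Finset.sum_range_succ]
      have h := add_le_add ih (hterm k)
      refine h.trans (le_of_eq ?_)
      have e : ((k + 1 : ℕ) : ℝ) + n₀ - 1 = (k : ℝ) + n₀ := by push_cast; ring
      rw [e]
      ring
  have hbd : ∀ k : ℕ, ∑ i ∈ Finset.range k, f i ≤ (2 / lam.re) ^ 2 := by
    intro k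
    refine (hsum k).trans (mul_le_of_le_one_right (by positivity) ?_)
    have hk : (0 : ℝ) ≤ k := Nat.cast_nonneg k
    have : 0 ≤ 1 / ((k : ℝ) + n₀ - 1) := one_div_nonneg.mpr (by linarith)
    linarith
  exact ⟨summable_of_sum_range_le hf0 hbd, Real.tsum_le_of_sum_range_le hf0 hbd⟩
end
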